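/- Let C(x,y) = y₁·F₁(x) + Σ_{j=1}^{m} x_j q_j(y) + R(y) (i.e. F_i = 0 for 2 ≤ i ≤ h), where F₁ is a nonsingular indefinite integral quadratic form of rank r ≥ 5. Assume C has h-invariant h(C) ≥ 6, C is irreducible over ℚ, and for every prime p the equation C = 0 has a nonsingular p-adic zero. Then there exist c > 0, K > 0 and Y₀ such that for every Y ≥ Y₀ there is a finite set 𝒞_h(Y) ⊆ ℤ^h with ‖y‖_∞ ≤ K·Y for all y ∈ 𝒞_h(Y) and Σ_{y ∈ 𝒞_h(Y)} 𝔖(F_y) ≥ c·Y^h/ log Y. -/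

import Mathlib

open Matrix MvPolynomial

/-- The complete exponential sum `S_q(F) = Σ*_{a mod q} Σ_{b mod q} e(a·F(b)/q)` attached to
an integer-valued function `F` on `ℤ^m`. -/
noncomputable def expSum (m : ℕ) (F : (Fin m → ℤ) → ℤ) (q : ℕ) : ℂ :=
  ∑ a ∈ (Finset.range q).filter fun a => Nat.gcd a q = 1,
    ∑ b : Fin m → Fin q,
      Complex.exp (2 * (Real.pi : ℂ) * Complex.I * (a : ℂ) *
        ((F fun j => ((b j : ℕ) : ℤ)) : ℂ) / (q : ℂ))

/-- The singular series `𝔖(F) = Σ_{q ≥ 1} q^{-m} S_q(F)`. -/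
noncomputable def singSeries (m : ℕ) (F : (Fin m → ℤ) → ℤ) : ℂ :=
  ∑' q : ℕ, (q : ℂ) ^ (-(m : ℤ)) * expSum m F q

/-!
The fibres `F_y` are quadratic polynomials with leading part `y₁ F₁`. We take `y₁ = a ℓ` with `a`
fixed and `ℓ` prime. As `F₁` has rank at least 5, the singular series of `F_y` is the convergent
product of its `p`-adic densities, and the primes that do not divide `y₁` and exceed a constant
contribute a factor `≫ 1`. At the small primes `y` is confined to a residue class for which `F_y`
has a nonsingular `p`-adic zero, so only the density at `ℓ` is left.

* If some `q_j` does not vanish on `y₁ = 0`, then for a positive proportion of `y` modulo `ℓ` the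
  fibre reduces to a nonzero linear polynomial modulo `ℓ`, and its density at `ℓ` is `1`.
* Otherwise `C = y₁ G + R(0, y₂, …, y_h)`, so the restriction of `R` has `h`-invariant at least 5.
  If `R(y) ≡ 0` modulo `ℓ`, then `F_y` is divisible by `ℓ` and its density at `ℓ` is `≫ ℓ`. There
  are `≫ ℓ^(h-2)` such `y` modulo `ℓ`, by Weyl differencing over `𝔽_ℓ`: since the `h`-invariant is
  large, the Hessian has large rank on a suitable line, by Davenport's argument over `ℚ` and hence
  modulo all large primes, and this bounds the number of points over `𝔽_ℓ` where its rank is small.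

In both cases the fibres with `y₁ = a ℓ` contribute `≫ ℓ^(h-1)`, and Chebyshev's bound for the
primes `ℓ ≤ Y` gives the factor `Y / log Y`.
-/

namespace CubicFibre

/-! ### Character sums -/

section CharacterSums

variable {k : Type*} [CommRing k] [Fintype k] [DecidableEq k]

lemma sum_addChar_dotProduct {ι : Type*} [Fintype ι] [DecidableEq ι] {ψ : AddChar k ℂ}
    (hψ : ψ.IsPrimitive) (c : ι → k) :
    ∑ b : ι → k, ψ (b ⬝ᵥ c) = if c = 0 then (Fintype.card k : ℂ) ^ Fintype.card ι else 0 := by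
  have hprod (b : ι → k) : ψ (b ⬝ᵥ c) = ∏ j, ψ (b j * c j) :=
    map_prod ψ.toMonoidHom (fun j => Multiplicative.ofAdd (b j * c j)) Finset.univ
  simp_rw [hprod, ← Fintype.prod_sum (fun j x => ψ (x * c j)), AddChar.sum_mulShift _ hψ]
  split_ifs with hc
  · simp [hc]
  · obtain ⟨j, hj⟩ := Function.ne_iff.1 hc
    exact Finset.prod_eq_zero (Finset.mem_univ j) (by simpa using hj)

lemma norm_sum_addChar_sq_le {A G : Type*} [AddCommGroup A] [Finite A] [AddCommGroup G]
    [Fintype G] (ψ : AddChar A ℂ) (F : G → A) :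
    ‖∑ b, ψ (F b)‖ ^ 2 ≤ ∑ u, ‖∑ b, ψ (F (b + u) - F b)‖ := by
  have hsq : (∑ b, ψ (F b)) * starRingEnd ℂ (∑ b, ψ (F b)) =
      ∑ u, ∑ b, ψ (F (b + u) - F b) := by
    rw [map_sum, mul_comm, Finset.sum_mul_sum]
    refine (Finset.sum_congr rfl fun b _ => ?_).trans Finset.sum_comm
    rw [← Equiv.sum_comp (Equiv.addLeft b)]
    refine Finset.sum_congr rfl fun u _ => ?_
    rw [sub_eq_add_neg, AddChar.map_add_eq_mul, AddChar.map_neg_eq_conj, mul_comm,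
      Equiv.coe_addLeft]
  calc ‖∑ b, ψ (F b)‖ ^ 2 = ‖∑ u, ∑ b, ψ (F (b + u) - F b)‖ := by
        rw [← hsq, norm_mul, RCLike.norm_conj, sq]
    _ ≤ _ := norm_sum_le _ _

lemma norm_sum_addChar_sq_le_card_ker {ι : Type*} [Fintype ι] [DecidableEq ι] {ψ : AddChar k ℂ}
    (hψ : ψ.IsPrimitive) {F : (ι → k) → k} {H : (ι → k) → ι → k} {c : (ι → k) → k}
    (hF : ∀ b u, F (b + u) - F b = b ⬝ᵥ H u + c u) :
    ‖∑ b, ψ (F b)‖ ^ 2 ≤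
      (Fintype.card k : ℝ) ^ Fintype.card ι * (Finset.univ.filter fun u => H u = 0).card := by
  have hinner (u : ι → k) : ‖∑ b, ψ (F (b + u) - F b)‖ =
      if H u = 0 then (Fintype.card k : ℝ) ^ Fintype.card ι else 0 := by
    simp_rw [hF, AddChar.map_add_eq_mul]
    rw [← Finset.sum_mul, sum_addChar_dotProduct hψ, norm_mul, AddChar.norm_apply]
    split_ifs <;> simp
  calc ‖∑ b, ψ (F b)‖ ^ 2 ≤ ∑ u, ‖∑ b, ψ (F (b + u) - F b)‖ := norm_sum_addChar_sq_le ψ F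
    _ = _ := by
      simp_rw [hinner]
      rw [← Finset.sum_filter, Finset.sum_const, nsmul_eq_mul, mul_comm]

end CharacterSums

/-! ### Zeros modulo `q` and the terms of the singular series -/

section ZeroCount

variable {σ : Type*} (P : MvPolynomial σ ℤ)

lemma map_aeval_int {k k' : Type*} [CommRing k] [CommRing k'] (φ : k →+* k') (x : σ → k) :
    φ (aeval x P) = aeval (φ ∘ x) P := by
  rw [map_aeval, aeval_def, coe_eval₂Hom]
  congr 1
  exact RingHom.ext_int _ _

lemma aeval_intCast (k : Type*) [CommRing k] (x : σ → ℤ) :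
    aeval (fun j => (x j : k)) P = (eval x P : k) :=
  (map_aeval_int P (Int.castRingHom k) x).symm

/-- The number of zeros of the integral polynomial `P` modulo `q`. -/
noncomputable def zeroCount (q : ℕ) : ℕ := Nat.card {b : σ → ZMod q // aeval b P = 0}

lemma zeroCount_one : zeroCount P 1 = 1 := by
  have : Subsingleton (ZMod 1) := inferInstanceAs (Subsingleton (Fin 1))
  rw [zeroCount, Nat.card_eq_one_iff_unique]
  exact ⟨⟨fun x y => Subtype.ext (Subsingleton.elim _ _)⟩, ⟨0, Subsingleton.elim _ _⟩⟩

lemma zeroCount_mul {a b : ℕ} (hab : a.Coprime b) :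
    zeroCount P (a * b) = zeroCount P a * zeroCount P b := by
  let e := ZMod.chineseRemainder hab
  have he (x : σ → ZMod (a * b)) : e (aeval x P) =
      (aeval (fun j => (e (x j)).1) P, aeval (fun j => (e (x j)).2) P) :=
    Prod.ext (map_aeval_int P ((RingHom.fst _ _).comp e.toRingHom) x)
      (map_aeval_int P ((RingHom.snd _ _).comp e.toRingHom) x)
  let E : (σ → ZMod (a * b)) ≃ (σ → ZMod a) × (σ → ZMod b) :=
    (Equiv.arrowCongr (Equiv.refl σ) e.toEquiv).trans (Equiv.arrowProdEquivProdArrow _ _ _)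
  rw [zeroCount, zeroCount, zeroCount, ← Nat.card_prod]
  refine Nat.card_congr ((E.subtypeEquiv fun x => ?_).trans
    (Equiv.subtypeProdEquivProd (p := fun y => aeval y P = 0) (q := fun y => aeval y P = 0)))
  rw [← e.map_eq_zero_iff, he, Prod.mk_eq_zero]
  rfl

end ZeroCount

section SingularTerm

open ArithmeticFunction
open scoped ArithmeticFunction.zeta ArithmeticFunction.Moebius

variable {m : ℕ} (P : MvPolynomial (Fin m) ℤ)

/-- The normalised zero count `q ↦ q N(q) / q^m`, which tends to the `p`-adic density of zeros
along powers of a prime `p`. -/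
noncomputable def density : ArithmeticFunction ℝ :=
  ⟨fun q => q * zeroCount P q / (q : ℝ) ^ m, by simp⟩

lemma density_apply (q : ℕ) : density P q = q * zeroCount P q / (q : ℝ) ^ m := rfl

lemma isMultiplicative_density : (density P).IsMultiplicative := by
  refine ⟨by simp [density_apply, zeroCount_one], fun {a b} hab => ?_⟩
  simp only [density_apply, zeroCount_mul P hab, Nat.cast_mul, mul_pow]
  rw [div_mul_div_comm]
  ring

/-- The `q`-th term `q^{-m} S_q` of the singular series of `P`, defined by Möbius inversion so that
its being real and multiplicative is immediate; `expSum_eq_singTerm` is the comparison. -/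
noncomputable def singTerm : ArithmeticFunction ℝ :=
  density P * ((μ : ArithmeticFunction ℤ) : ArithmeticFunction ℝ)

lemma isMultiplicative_singTerm : (singTerm P).IsMultiplicative :=
  (isMultiplicative_density P).mul isMultiplicative_moebius.intCast

lemma sum_divisors_singTerm (q : ℕ) : ∑ d ∈ q.divisors, singTerm P d = density P q := by
  rw [← coe_mul_zeta_apply, singTerm, mul_assoc, coe_moebius_mul_coe_zeta, mul_one]

lemma sum_singTerm_prime_pow {p : ℕ} (hp : p.Prime) (k : ℕ) :
    ∑ e ∈ Finset.range (k + 1), singTerm P (p ^ e) = density P (p ^ k) := by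
  rw [← sum_divisors_singTerm, Nat.sum_divisors_prime_pow hp]

lemma density_prime_pow (hm : 0 < m) {p : ℕ} (hp : p.Prime) (k : ℕ) :
    density P (p ^ k) = zeroCount P (p ^ k) / (p : ℝ) ^ (k * (m - 1)) := by
  obtain ⟨m, rfl⟩ := Nat.exists_eq_succ_of_ne_zero hm.ne'
  have hp0 : (p : ℝ) ≠ 0 := mod_cast hp.ne_zero
  rw [density_apply, Nat.succ_sub_one]
  push_cast
  rw [pow_succ, ← pow_mul]
  field_simp

/-- The inner sum `Σ_b e(a P(b) / q)` of the complete exponential sum. -/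
noncomputable def twistedSum (q : ℕ) [NeZero q] (a : ZMod q) : ℂ :=
  ∑ b : Fin m → ZMod q, ZMod.stdAddChar (a * aeval b P)

lemma expSum_eq_sum_twistedSum (q : ℕ) [NeZero q] : expSum m (fun x => eval x P) q =
    ∑ a ∈ (Finset.range q).filter fun a => Nat.gcd a q = 1, twistedSum P q (a : ZMod q) := by
  refine Finset.sum_congr rfl fun a _ => ?_
  have hbij : Function.Bijective fun b : Fin q => ((b : ℕ) : ZMod q) := by
    rw [Fintype.bijective_iff_injective_and_card]
    refine ⟨fun b b' h => Fin.ext ?_, by simp⟩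
    rwa [ZMod.natCast_eq_natCast_iff', Nat.mod_eq_of_lt b.2, Nat.mod_eq_of_lt b'.2] at h
  refine Fintype.sum_bijective _ (hbij.comp_left (α := Fin m)) _ _ fun b => ?_
  have hb : (fun b : Fin q => ((b : ℕ) : ZMod q)) ∘ b = fun j => (((b j : ℕ) : ℤ) : ZMod q) := by
    ext; simp
  have hcast : (a : ZMod q) * (eval (fun j => ((b j : ℕ) : ℤ)) P : ℤ) =
      (((a : ℤ) * eval (fun j => ((b j : ℕ) : ℤ)) P : ℤ) : ZMod q) := by push_cast; rfl
  rw [hb, aeval_intCast, hcast, ZMod.stdAddChar_coe]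
  push_cast
  ring_nf

lemma card_mul_sum_comp_surjective {G H R : Type*} [AddCommGroup G] [AddCommGroup H] [Fintype G]
    [Fintype H] [CommRing R] (π : G →+ H) (hπ : Function.Surjective π) (F : H → R) :
    (Fintype.card H : R) * ∑ g, F (π g) = Fintype.card G * ∑ h, F h := by
  classical
  set N := (Finset.univ.filter fun g => π g = 0).card
  have hfibre (h : H) : (Finset.univ.filter fun g => π g = h).card = N :=
    AddMonoidHom.card_fiber_eq_of_mem_range π (hπ h) (hπ 0)
  have hsum (F : H → R) : ∑ g, F (π g) = N * ∑ h, F h := by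
    rw [← Finset.sum_fiberwise (s := Finset.univ) (g := π), Finset.mul_sum]
    refine Finset.sum_congr rfl fun h _ => ?_
    rw [← hfibre h, ← nsmul_eq_mul, ← Finset.sum_const]
    exact Finset.sum_congr rfl fun g hg => by rw [(Finset.mem_filter.1 hg).2]
  have hcard : (Fintype.card G : R) = N * Fintype.card H := by simpa using hsum fun _ => 1
  rw [hsum, hcard]
  ring

lemma stdAddChar_mul_scale (d k : ℕ) [NeZero d] [NeZero k] (a n : ℤ) :
    ZMod.stdAddChar ((a * k * n : ℤ) : ZMod (d * k)) = ZMod.stdAddChar ((a * n : ℤ) : ZMod d) := by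
  have hk : (k : ℂ) ≠ 0 := NeZero.ne _
  rw [ZMod.stdAddChar_coe, ZMod.stdAddChar_coe]
  push_cast
  field_simp

lemma twistedSum_scale (d k a : ℕ) [NeZero d] [NeZero k] :
    twistedSum P (d * k) ((a * k : ℕ) : ZMod (d * k)) =
      (k : ℂ) ^ m * twistedSum P d (a : ZMod d) := by
  let π : ZMod (d * k) →+* ZMod d := ZMod.castHom (Dvd.intro k rfl) (ZMod d)
  have hπ : Function.Surjective (π.toAddMonoidHom.compLeft (Fin m)) :=
    (ZMod.castHom_surjective (Dvd.intro k rfl)).comp_left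
  have hterm (b : Fin m → ZMod (d * k)) :
      ZMod.stdAddChar ((a : ZMod d) * aeval (π.toAddMonoidHom.compLeft (Fin m) b) P) =
      ZMod.stdAddChar (((a * k : ℕ) : ZMod (d * k)) * aeval b P) := by
    obtain ⟨n, hn⟩ := ZMod.intCast_surjective (aeval b P)
    have hπb : aeval (π.toAddMonoidHom.compLeft (Fin m) b) P = (n : ZMod d) := by
      rw [← map_intCast π, hn]
      exact (map_aeval_int P π b).symm
    rw [hπb, ← hn]
    simpa using (stdAddChar_mul_scale d k a n).symm
  have h := card_mul_sum_comp_surjective _ hπ fun b => ZMod.stdAddChar ((a : ZMod d) * aeval b P)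
  simp_rw [hterm] at h
  refine mul_left_cancel₀ (pow_ne_zero m (Nat.cast_ne_zero.2 (NeZero.ne d)) : (d : ℂ) ^ m ≠ 0) ?_
  rw [twistedSum, twistedSum, ← mul_assoc, ← mul_pow]
  simpa using h

lemma sum_twistedSum (q : ℕ) [NeZero q] :
    ∑ a ∈ Finset.range q, twistedSum P q (a : ZMod q) = q * zeroCount P q := by
  have hrange : ∑ a ∈ Finset.range q, twistedSum P q (a : ZMod q) = ∑ a, twistedSum P q a :=
    Finset.sum_nbij' (fun a => (a : ZMod q)) ZMod.val (by simp) (by simp [ZMod.val_lt])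
      (fun a ha => ZMod.val_cast_of_lt (Finset.mem_range.1 ha)) (by simp) (by simp)
  classical
  simp_rw [hrange, twistedSum]
  rw [Finset.sum_comm]
  simp_rw [AddChar.sum_mulShift _ (ZMod.isPrimitive_stdAddChar q)]
  rw [zeroCount, Nat.card_eq_fintype_card, Fintype.card_subtype, ZMod.card]
  simp only [Nat.cast_ite, Nat.cast_zero]
  rw [← Finset.sum_filter, Finset.sum_const, nsmul_eq_mul, mul_comm]

lemma sum_range_eq_sum_divisors_coprime {A : Type*} [AddCommMonoid A] {q : ℕ} (hq : q ≠ 0)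
    (f : ℕ → A) :
    ∑ x ∈ Finset.range q, f x =
      ∑ d ∈ q.divisors, ∑ a ∈ (Finset.range d).filter fun a => Nat.gcd a d = 1,
        f (a * (q / d)) := by
  rw [Finset.sum_sigma', eq_comm]
  refine Finset.sum_nbij' (fun y => y.2 * (q / y.1))
    (fun x => ⟨q / Nat.gcd x q, x / Nat.gcd x q⟩) ?_ ?_ ?_ ?_ (fun _ _ => rfl)
  · rintro ⟨d, a⟩ h
    simp only [Finset.mem_sigma, Nat.mem_divisors, Finset.mem_filter, Finset.mem_range] at h ⊢
    obtain ⟨⟨hd, -⟩, had, -⟩ := h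
    calc a * (q / d) < d * (q / d) :=
          Nat.mul_lt_mul_of_pos_right had (Nat.div_pos (Nat.le_of_dvd (by omega) hd) (by omega))
      _ = q := Nat.mul_div_cancel' hd
  · intro x hx
    have hg : 0 < Nat.gcd x q := Nat.gcd_pos_of_pos_right _ (by omega)
    simp only [Finset.mem_sigma, Nat.mem_divisors, Finset.mem_filter]
    exact ⟨⟨Nat.div_dvd_of_dvd (Nat.gcd_dvd_right x q), hq⟩,
      Finset.mem_range.2 (Nat.div_lt_div_of_lt_of_dvd (Nat.gcd_dvd_right x q)
        (Finset.mem_range.1 hx)), Nat.coprime_div_gcd_div_gcd hg⟩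
  · rintro ⟨d, a⟩ h
    simp only [Finset.mem_sigma, Nat.mem_divisors, Finset.mem_filter, Finset.mem_range] at h
    obtain ⟨⟨⟨k, rfl⟩, -⟩, had, hcop⟩ := h
    have hd : 0 < d := by omega
    have hk : 0 < k := Nat.pos_of_ne_zero (right_ne_zero_of_mul hq)
    simp [Nat.mul_div_cancel_left k hd, Nat.gcd_mul_right, hcop, hk]
  · intro x _
    have hgq := Nat.gcd_dvd_right x q
    simp only [Nat.div_div_self hgq hq]
    exact Nat.div_mul_cancel (Nat.gcd_dvd_left x q)

lemma sum_divisors_expSum {q : ℕ} (hq : q ≠ 0) :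
    ∑ d ∈ q.divisors, (d : ℂ) ^ (-(m : ℤ)) * expSum m (fun x => eval x P) d = density P q := by
  have : NeZero q := ⟨hq⟩
  have hq0 : (q : ℂ) ≠ 0 := Nat.cast_ne_zero.2 hq
  have hterm : ∀ d ∈ q.divisors, (d : ℂ) ^ (-(m : ℤ)) * expSum m (fun x => eval x P) d * q ^ m =
      ∑ a ∈ (Finset.range d).filter (fun a => Nat.gcd a d = 1),
        twistedSum P q ((a * (q / d) : ℕ) : ZMod q) := by
    intro d hd
    obtain ⟨k, rfl⟩ := (Nat.mem_divisors.1 hd).1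
    have hd0 : d ≠ 0 := left_ne_zero_of_mul hq
    have : NeZero d := ⟨hd0⟩
    have : NeZero k := ⟨right_ne_zero_of_mul hq⟩
    rw [Nat.mul_div_cancel_left _ (Nat.pos_of_ne_zero hd0)]
    simp_rw [twistedSum_scale]
    have : (d : ℂ) ≠ 0 := Nat.cast_ne_zero.2 hd0
    rw [← Finset.mul_sum, ← expSum_eq_sum_twistedSum, _root_.zpow_neg, zpow_natCast]
    push_cast
    rw [mul_pow]
    field_simp
  rw [density_apply]
  push_cast
  rw [eq_div_iff (pow_ne_zero _ hq0), Finset.sum_mul, Finset.sum_congr rfl hterm,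
    ← sum_range_eq_sum_divisors_coprime hq fun x => twistedSum P q (x : ZMod q), sum_twistedSum]

lemma expSum_eq_singTerm (q : ℕ) :
    (q : ℂ) ^ (-(m : ℤ)) * expSum m (fun x => eval x P) q = (singTerm P q : ℂ) := by
  rcases Nat.eq_zero_or_pos q with rfl | hq
  · simp [expSum]
  · have hexp := sum_eq_iff_sum_mul_moebius_eq.1
      (fun n hn => sum_divisors_expSum P (Nat.pos_iff_ne_zero.1 hn)) q hq
    have hsing := sum_eq_iff_sum_mul_moebius_eq.1
      (fun n _ => (congrArg Complex.ofReal (sum_divisors_singTerm P n)).symm ▸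
        (Complex.ofReal_sum _ _).symm) q hq
    exact hexp.symm.trans hsing

lemma singSeries_eq_tsum_singTerm :
    singSeries m (fun x => eval x P) = ((∑' q, singTerm P q : ℝ) : ℂ) := by
  rw [singSeries, Complex.ofReal_tsum]
  exact tsum_congr (expSum_eq_singTerm P)

end SingularTerm

/-! ### Rank certificates and kernels over finite rings -/

section RankCertificate

variable {k ι ι' : Type*} [CommRing k] [Fintype ι] [Fintype ι'] {r : ℕ} {d : k} {A : Matrix ι ι' k}

/-- `RankCertificate A r d` says that `d` times the `r × r` identity factors through `A`. If `d` is
a nonzero element of a domain, this is the inequality `r ≤ rank A` over the field of fractions;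
unlike the latter it is preserved by every ring homomorphism. -/
def RankCertificate (A : Matrix ι ι' k) (r : ℕ) (d : k) : Prop :=
  ∃ (W : Matrix (Fin r) ι k) (V : Matrix ι' (Fin r) k), W * A * V = d • (1 : Matrix _ _ k)

lemma RankCertificate.map {k' : Type*} [CommRing k'] (h : RankCertificate A r d) (φ : k →+* k') :
    RankCertificate (A.map φ) r (φ d) := by
  obtain ⟨W, V, hWV⟩ := h
  refine ⟨W.map φ, V.map φ, ?_⟩
  rw [← Matrix.map_mul, ← Matrix.map_mul, hWV, Matrix.map_smul' _ _ _ φ.map_mul,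
    Matrix.map_one _ φ.map_zero φ.map_one]

lemma RankCertificate.smul (h : RankCertificate A r d) (c : k) :
    RankCertificate (c • A) r (c * d) := by
  obtain ⟨W, V, hWV⟩ := h
  exact ⟨W, V, by rw [Matrix.mul_smul, Matrix.smul_mul, hWV, smul_smul]⟩

lemma RankCertificate.card_ker_le [Fintype k] [DecidableEq k] [DecidableEq ι']
    (h : RankCertificate A r d) :
    Fintype.card k ^ r * (Finset.univ.filter fun u => A *ᵥ u = 0).card ≤
      (Finset.univ.filter fun t => d * t = 0).card ^ r * Fintype.card k ^ Fintype.card ι' := by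
  classical
  obtain ⟨W, V, hWV⟩ := h
  let f := A.mulVecLin.toAddMonoidHom
  let g := (A * V).mulVecLin.toAddMonoidHom
  have hker : Nat.card g.ker ≤ (Finset.univ.filter fun t => d * t = 0).card ^ r := by
    rw [← Fintype.card_piFinset_const, Nat.card_eq_fintype_card, ← Fintype.card_coe]
    refine Fintype.card_le_of_injective (fun x => ⟨x.1, Fintype.mem_piFinset.2 fun i => ?_⟩)
      fun x y hxy => Subtype.ext (by simpa using hxy)
    have hx : (A * V) *ᵥ x.1 = 0 := x.2
    have hWx := congrArg (W *ᵥ ·) hx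
    simp only [Matrix.mulVec_zero, Matrix.mulVec_mulVec, ← Matrix.mul_assoc, hWV,
      Matrix.smul_mulVec, Matrix.one_mulVec] at hWx
    simpa using congrFun hWx i
  have hrange : Nat.card g.range ≤ Nat.card f.range := by
    refine Nat.card_mono (Set.toFinite _) ?_
    rintro _ ⟨x, rfl⟩
    exact ⟨V *ᵥ x, Matrix.mulVec_mulVec x A V⟩
  have hg : Nat.card g.ker * Nat.card g.range = Fintype.card k ^ r := by
    rw [← AddSubgroup.index_ker, AddSubgroup.card_mul_index, Nat.card_eq_fintype_card]
    simp
  have hf : Nat.card f.ker * Nat.card f.range = Fintype.card k ^ Fintype.card ι' := by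
    rw [← AddSubgroup.index_ker, AddSubgroup.card_mul_index, Nat.card_eq_fintype_card]
    simp
  have hfker : (Finset.univ.filter fun u => A *ᵥ u = 0).card = Nat.card f.ker := by
    rw [← Fintype.card_subtype, ← Nat.card_eq_fintype_card]
    rfl
  rw [hfker, ← hg, ← hf]
  calc Nat.card g.ker * Nat.card g.range * Nat.card f.ker
      ≤ (Finset.univ.filter fun t => d * t = 0).card ^ r * Nat.card f.range * Nat.card f.ker := by
        gcongr
    _ = _ := by ring

end RankCertificate

section RankField

variable {K ι ι' : Type*} [Field K] [Fintype ι] [Fintype ι'] {r : ℕ} {A : Matrix ι ι' K}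

lemma RankCertificate.of_le_rank (h : r ≤ A.rank) : RankCertificate A r 1 := by
  classical
  obtain ⟨f, hf⟩ : ∃ f : Fin r → LinearMap.range A.mulVecLin, LinearIndependent K f :=
    exists_linearIndependent_of_le_finrank h
  choose v hv using fun i => (f i).2
  let V : Matrix ι' (Fin r) K := Matrix.of fun b i => v i b
  have hcol : (A * V).col = fun i => (f i : ι → K) := funext fun i => hv i
  have hinj : Function.Injective (A * V).mulVec := by
    rw [mulVec_injective_iff, hcol]
    exact hf.map' (Submodule.subtype _) (Submodule.ker_subtype _)
  obtain ⟨g, hg⟩ := LinearMap.exists_leftInverse_of_injective (A * V).mulVecLin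
    (LinearMap.ker_eq_bot.2 hinj)
  refine ⟨LinearMap.toMatrix' g, V, toLin'.injective ?_⟩
  rw [Matrix.mul_assoc, toLin'_mul, toLin'_toMatrix', one_smul, toLin'_one]
  exact hg

lemma RankCertificate.le_rank {d : K} (h : RankCertificate A r d) (hd : d ≠ 0) : r ≤ A.rank := by
  obtain ⟨W, V, hWV⟩ := h
  calc r = (W * A * V).rank := by
        rw [hWV, rank_smul_of_mem_nonZeroDivisors _ (mem_nonZeroDivisors_of_ne_zero hd), rank_one,
          Fintype.card_fin]
    _ ≤ _ := (rank_mul_le_left _ _).trans (rank_mul_le_right _ _)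

end RankField

section FractionRing

variable {R K ι ι' : Type*} [CommRing R] [IsDomain R] [Field K] [Algebra R K] [IsFractionRing R K]

lemma exists_smul_eq_algebraMap_comp [Finite ι] (u : ι → K) :
    ∃ d : R, d ≠ 0 ∧ ∃ z : ι → R, algebraMap R K ∘ z = algebraMap R K d • u := by
  obtain ⟨d, hd⟩ := IsLocalization.exist_integer_multiples_of_finite (nonZeroDivisors R) u
  choose z hz using hd
  exact ⟨d, nonZeroDivisors.coe_ne_zero d, z, funext fun i => (hz i).trans (Algebra.smul_def _ _)⟩

lemma exists_rankCertificate_of_le_rank_map [Fintype ι] [Fintype ι'] {A : Matrix ι ι' R} {r : ℕ}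
    (h : r ≤ (A.map (algebraMap R K)).rank) : ∃ D : R, D ≠ 0 ∧ RankCertificate A r D := by
  obtain ⟨W, V, hWV⟩ := RankCertificate.of_le_rank h
  obtain ⟨d, hd, w, hw⟩ := exists_smul_eq_algebraMap_comp (R := R) fun ij : _ × _ => W ij.1 ij.2
  obtain ⟨e, he, v, hv⟩ := exists_smul_eq_algebraMap_comp (R := R) fun ij : _ × _ => V ij.1 ij.2
  obtain ⟨W', hW⟩ : ∃ W' : Matrix _ _ R, W'.map (algebraMap R K) = algebraMap R K d • W :=
    ⟨of fun i j => w (i, j), Matrix.ext fun i j => congrFun hw (i, j)⟩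
  obtain ⟨V', hV⟩ : ∃ V' : Matrix _ _ R, V'.map (algebraMap R K) = algebraMap R K e • V :=
    ⟨of fun i j => v (i, j), Matrix.ext fun i j => congrFun hv (i, j)⟩
  refine ⟨d * e, mul_ne_zero hd he, W', V', Matrix.map_injective (IsFractionRing.injective R K) ?_⟩
  beta_reduce
  rw [Matrix.map_mul, Matrix.map_mul, hW, hV, Matrix.smul_mul, Matrix.smul_mul, Matrix.mul_smul,
    hWV, smul_smul, one_smul, Matrix.map_smul' _ _ _ (map_mul _), Matrix.map_one _ (map_zero _)
    (map_one _), map_mul]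

end FractionRing

lemma card_filter_intCast_mul_eq_zero (q : ℕ) [NeZero q] (D : ℤ) :
    (Finset.univ.filter fun t : ZMod q => (D : ZMod q) * t = 0).card = q.gcd D.natAbs := by
  have hker := IsAddCyclic.card_nsmulAddMonoidHom_ker (ZMod q) D.natAbs
  rw [Nat.card_zmod] at hker
  rw [← hker, ← Fintype.card_subtype, ← Nat.card_eq_fintype_card]
  refine Nat.card_congr (Equiv.subtypeEquivRight fun t => ?_)
  rw [AddMonoidHom.mem_ker, nsmulAddMonoidHom_apply, nsmul_eq_mul]
  rcases Int.natAbs_eq D with h | h <;> rw [h] <;> simp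

/-! ### Quadratic polynomials -/

section QuadPoly

variable {m : ℕ} (M : Matrix (Fin m) (Fin m) ℤ) (l : Fin m → ℤ) (c : ℤ)

/-- The quadratic polynomial `xᵀ M x + l · x + c`; the matrix `M` need not be symmetric. -/
noncomputable def quadPoly : MvPolynomial (Fin m) ℤ :=
  ∑ a, ∑ b, C (M a b) * X a * X b + ∑ j, C (l j) * X j + C c

variable {k : Type*} [CommRing k]

lemma aeval_quadPoly (x : Fin m → k) : aeval x (quadPoly M l c) =
    x ⬝ᵥ M.map (Int.castRingHom k) *ᵥ x + (fun j => (l j : k)) ⬝ᵥ x + c := by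
  simp only [quadPoly, map_add, map_sum, map_mul, aeval_C, aeval_X, algebraMap_int_eq,
    Int.coe_castRingHom, dotProduct, mulVec, Matrix.map_apply, Finset.mul_sum]
  congr 2
  exact Finset.sum_congr rfl fun a _ => Finset.sum_congr rfl fun b _ => by ring

lemma aeval_quadPoly_add_sub (b u : Fin m → k) :
    aeval (b + u) (quadPoly M l c) - aeval b (quadPoly M l c) =
      b ⬝ᵥ (M + Mᵀ).map (Int.castRingHom k) *ᵥ u + (aeval u (quadPoly M l c) - c) := by
  have hT : b ⬝ᵥ (Mᵀ).map (Int.castRingHom k) *ᵥ u =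
      u ⬝ᵥ M.map (Int.castRingHom k) *ᵥ b := by
    rw [Matrix.transpose_map, Matrix.mulVec_transpose, dotProduct_comm,
      ← Matrix.dotProduct_mulVec]
  rw [Matrix.map_add _ (map_add _)]
  simp only [aeval_quadPoly, add_mulVec, mulVec_add, dotProduct_add, add_dotProduct, hT]
  ring

lemma eval_pderiv_quadPoly (x : Fin m → ℤ) (i : Fin m) :
    eval x (pderiv i (quadPoly M l c)) = ((M + Mᵀ) *ᵥ x) i + l i := by
  have hterm (a b : Fin m) : eval x (pderiv i (C (M a b) * X a * X b)) =
      (if b = i then M a b * x a else 0) + if a = i then M a b * x b else 0 := by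
    simp only [Derivation.leibniz, pderiv_C, pderiv_X, Pi.single_apply, smul_eq_mul]
    split_ifs <;> simp [mul_comm]
  have hlin (j : Fin m) : eval x (pderiv i (C (l j) * X j)) = if j = i then l j else 0 := by
    simp only [Derivation.leibniz, pderiv_C, pderiv_X, Pi.single_apply, smul_eq_mul]
    split_ifs <;> simp
  simp only [quadPoly, map_add, map_sum, hterm, hlin, pderiv_C, add_zero,
    Finset.sum_add_distrib, Finset.sum_ite_eq', Finset.mem_univ, if_true, mulVec, dotProduct]
  rw [Finset.sum_comm (f := fun a b => if a = i then M a b * x b else 0)]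
  simp [add_comm, add_mul, Finset.sum_add_distrib]

variable {M}

lemma norm_twistedSum_quadPoly_sq_le (q : ℕ) [NeZero q] (a : ℕ) (ha : a.Coprime q) :
    ‖twistedSum (quadPoly M l c) q a‖ ^ 2 ≤ (q : ℝ) ^ m *
      (Finset.univ.filter fun u => (M + Mᵀ).map (Int.castRingHom (ZMod q)) *ᵥ u = 0).card := by
  have hu : IsUnit (a : ZMod q) := (ZMod.isUnit_iff_coprime a q).2 ha
  refine (norm_sum_addChar_sq_le_card_ker (ZMod.isPrimitive_stdAddChar q)
    (H := fun u => (a : ZMod q) • (M + Mᵀ).map (Int.castRingHom (ZMod q)) *ᵥ u)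
    (c := fun u => (a : ZMod q) * (aeval u (quadPoly M l c) - c)) fun b u => ?_).trans_eq ?_
  · rw [← mul_sub, aeval_quadPoly_add_sub, mul_add, dotProduct_smul, smul_eq_mul]
  · simp only [ZMod.card, Fintype.card_fin, hu.smul_eq_zero]

lemma singTerm_quadPoly_sq_mul_le {r : ℕ} {D : ℤ} (hD : RankCertificate (M + Mᵀ) r D) {q : ℕ}
    (hq : q ≠ 0) : singTerm (quadPoly M l c) q ^ 2 * (q : ℝ) ^ r ≤
      (q.gcd D.natAbs : ℝ) ^ r * (q : ℝ) ^ 2 := by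
  have : NeZero q := ⟨hq⟩
  have : (0 : ℝ) < q := by positivity
  set κ := (Finset.univ.filter fun u =>
    (M + Mᵀ).map (Int.castRingHom (ZMod q)) *ᵥ u = 0).card with hκ
  have hexp : ‖expSum m (fun x => eval x (quadPoly M l c)) q‖ ≤ q * √((q : ℝ) ^ m * κ) := by
    rw [expSum_eq_sum_twistedSum]
    refine (norm_sum_le_of_le _ fun a ha => Real.le_sqrt_of_sq_le
      (norm_twistedSum_quadPoly_sq_le l c q a (Finset.mem_filter.1 ha).2)).trans ?_
    rw [Finset.sum_const, nsmul_eq_mul]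
    gcongr
    exact (Finset.card_filter_le _ _).trans_eq (Finset.card_range q)
  have hker : (q : ℝ) ^ r * κ ≤ (q.gcd D.natAbs : ℝ) ^ r * (q : ℝ) ^ m := by
    have h := (hD.map (Int.castRingHom (ZMod q))).card_ker_le
    simp only [eq_intCast, card_filter_intCast_mul_eq_zero, ZMod.card, Fintype.card_fin] at h
    exact_mod_cast h
  have hterm : |singTerm (quadPoly M l c) q| * (q : ℝ) ^ m ≤ q * √((q : ℝ) ^ m * κ) := by
    rw [← Real.norm_eq_abs, ← Complex.norm_real, ← expSum_eq_singTerm, norm_mul, norm_zpow,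
      Complex.norm_natCast, _root_.zpow_neg, zpow_natCast, mul_right_comm,
      inv_mul_cancel₀ (by positivity), one_mul]
    exact hexp
  have hsq : singTerm (quadPoly M l c) q ^ 2 * (q : ℝ) ^ m ≤ (q : ℝ) ^ 2 * κ := by
    have h := pow_le_pow_left₀ (by positivity) hterm 2
    rw [mul_pow, mul_pow, sq_abs, Real.sq_sqrt (by positivity)] at h
    refine le_of_mul_le_mul_right ?_ (show (0 : ℝ) < (q : ℝ) ^ m by positivity)
    linarith
  refine le_of_mul_le_mul_right ?_ (show (0 : ℝ) < (q : ℝ) ^ m by positivity)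
  calc _ = singTerm (quadPoly M l c) q ^ 2 * (q : ℝ) ^ m * (q : ℝ) ^ r := by ring
    _ ≤ (q : ℝ) ^ 2 * κ * (q : ℝ) ^ r := by gcongr
    _ = (q : ℝ) ^ 2 * ((q : ℝ) ^ r * κ) := by ring
    _ ≤ (q : ℝ) ^ 2 * ((q.gcd D.natAbs : ℝ) ^ r * (q : ℝ) ^ m) := by gcongr
    _ = _ := by ring

lemma abs_singTerm_quadPoly_le {r : ℕ} {D : ℤ} (hD : RankCertificate (M + Mᵀ) r D) {q : ℕ}
    (hq : q ≠ 0) : |singTerm (quadPoly M l c) q| ≤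
      (q.gcd D.natAbs : ℝ) ^ (r / 2 : ℝ) * (q : ℝ) ^ (1 - r / 2 : ℝ) := by
  have hq0 : (0 : ℝ) < q := by positivity
  refine abs_le_of_sq_le_sq ?_ (by positivity)
  rw [mul_pow, ← Real.rpow_mul_natCast (by positivity), ← Real.rpow_mul_natCast hq0.le,
    Nat.cast_two, div_mul_cancel₀ _ two_ne_zero, sub_mul, div_mul_cancel₀ _ two_ne_zero, one_mul,
    Real.rpow_sub hq0, Real.rpow_natCast, Real.rpow_natCast, Real.rpow_two, ← mul_div_assoc,
    le_div_iff₀ (by positivity)]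
  exact singTerm_quadPoly_sq_mul_le l c hD hq

end QuadPoly

/-! ### Lower bounds for Euler products -/

lemma one_sub_sum_le_prod_one_sub {ι : Type*} (s : Finset ι) {x : ι → ℝ} (h0 : ∀ i ∈ s, 0 ≤ x i)
    (h1 : ∀ i ∈ s, x i ≤ 1) : 1 - ∑ i ∈ s, x i ≤ ∏ i ∈ s, (1 - x i) := by
  classical
  induction s using Finset.induction_on with
  | empty => simp
  | insert a s ha ih =>
    rw [Finset.forall_mem_insert] at h0 h1
    rw [Finset.sum_insert ha, Finset.prod_insert ha]
    have hsum : 0 ≤ ∑ i ∈ s, x i := Finset.sum_nonneg h0.2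
    nlinarith [mul_le_mul_of_nonneg_left (ih h0.2 h1.2) (sub_nonneg.2 h1.1),
      mul_nonneg h0.1 hsum]

lemma prod_mul_half_le_of_hasProd {ι : Type*} {E b x : ι → ℝ} {S : ℝ} (hE : HasProd E S)
    (s : Finset ι) (hb0 : ∀ i ∈ s, 0 ≤ b i) (hb : ∀ i ∈ s, b i ≤ E i) (hx0 : ∀ i, 0 ≤ x i)
    (hxE : ∀ i ∉ s, 1 - x i ≤ E i) (hx : ∀ t : Finset ι, Disjoint t s → ∑ i ∈ t, x i ≤ 1 / 2) :
    (∏ i ∈ s, b i) * (1 / 2) ≤ S := by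
  classical
  refine ge_of_tendsto hE ?_
  filter_upwards [Filter.eventually_ge_atTop s] with t ht
  have hdisj : Disjoint (t \ s) s := Finset.sdiff_disjoint
  have hx1 : ∀ i ∈ t \ s, x i ≤ 1 := fun i hi =>
    (Finset.single_le_sum (fun j _ => hx0 j) hi).trans ((hx _ hdisj).trans (by norm_num))
  rw [← Finset.prod_sdiff ht, mul_comm (∏ i ∈ t \ s, E i)]
  have htail : 1 / 2 ≤ ∏ i ∈ t \ s, E i :=
    calc (1 / 2 : ℝ) ≤ 1 - ∑ i ∈ t \ s, x i := by linarith [hx _ hdisj]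
      _ ≤ ∏ i ∈ t \ s, (1 - x i) := one_sub_sum_le_prod_one_sub _ (fun i _ => hx0 i) hx1
      _ ≤ ∏ i ∈ t \ s, E i := Finset.prod_le_prod (fun i hi => sub_nonneg.2 (hx1 i hi))
          fun i hi => hxE i (Finset.mem_sdiff.1 hi).2
  exact mul_le_mul (Finset.prod_le_prod hb0 hb) htail (by norm_num)
    (Finset.prod_nonneg fun i hi => (hb0 i hi).trans (hb i hi))

lemma prod_mul_half_le_tsum {f : ArithmeticFunction ℝ} (hf : f.IsMultiplicative)
    (hsum : Summable f) (s : Finset ℕ) {b x : ℕ → ℝ} (hb0 : ∀ p ∈ s, 0 ≤ b p)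
    (hb1 : ∀ p ∈ s, ¬ p.Prime → b p ≤ 1) (hb : ∀ p ∈ s, p.Prime → b p ≤ ∑' e, f (p ^ e))
    (hx0 : ∀ p, 0 ≤ x p) (hxf : ∀ p ∉ s, p.Prime → 1 - x p ≤ ∑' e, f (p ^ e))
    (hx : ∀ t : Finset ℕ, (∀ p ∈ t, p.Prime ∧ p ∉ s) → ∑ p ∈ t, x p ≤ 1 / 2) :
    (∏ p ∈ s, b p) * (1 / 2) ≤ ∑' n, f n := by
  classical
  have hindicator {p : ℕ} {a : ℝ}
      (h1 : ¬ p.Prime → a ≤ 1) (h : p.Prime → a ≤ ∑' e, f (p ^ e)) :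
      a ≤ Set.mulIndicator {p | Nat.Prime p} (fun p : ℕ => ∑' e, f (p ^ e)) p := by
    by_cases hp : p.Prime
    · rw [Set.mulIndicator_of_mem (show p ∈ {p | Nat.Prime p} from hp)]
      exact h hp
    · rw [Set.mulIndicator_of_notMem (show p ∉ {p | Nat.Prime p} from hp)]
      exact h1 hp
  refine prod_mul_half_le_of_hasProd (x := fun p => if p.Prime then x p else 0)
    (EulerProduct.eulerProduct_hasProd_mulIndicator hf.map_one hf.map_mul_of_coprime hsum.norm
      f.map_zero) s hb0 (fun p hp => hindicator (hb1 p hp) (hb p hp)) (fun p => ?_)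
    (fun p hp => hindicator (fun h => by simp [h]) fun h => by simpa [h] using hxf p hp h)
    fun t ht => ?_
  · split_ifs
    exacts [hx0 p, le_rfl]
  · rw [← Finset.sum_filter]
    refine hx _ fun p hp => ⟨(Finset.mem_filter.1 hp).2, ?_⟩
    exact Finset.disjoint_left.1 ht (Finset.mem_filter.1 hp).1

lemma one_sub_two_mul_le_sum_range {f : ℕ → ℝ} {ρ : ℝ} (hρ0 : 0 ≤ ρ) (hρ : ρ ≤ 1 / 2)
    (hf0 : f 0 = 1) (hf : ∀ e, |f (e + 1)| ≤ ρ ^ (e + 1)) (k : ℕ) :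
    1 - 2 * ρ ≤ ∑ e ∈ Finset.range (k + 1), f e := by
  have hgeom : ∑ e ∈ Finset.range k, ρ ^ e ≤ 2 := by
    refine (Summable.sum_le_tsum _ (fun e _ => by positivity)
      (summable_geometric_of_lt_one hρ0 (by linarith))).trans ?_
    rw [tsum_geometric_of_lt_one hρ0 (by linarith), inv_le_comm₀ (by linarith) two_pos]
    linarith
  have hsum : |∑ e ∈ Finset.range k, f (e + 1)| ≤ 2 * ρ :=
    calc _ ≤ ∑ e ∈ Finset.range k, |f (e + 1)| := Finset.abs_sum_le_sum_abs _ _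
      _ ≤ ∑ e ∈ Finset.range k, ρ ^ (e + 1) := Finset.sum_le_sum fun e _ => hf e
      _ = (∑ e ∈ Finset.range k, ρ ^ e) * ρ := by simp_rw [pow_succ, Finset.sum_mul]
      _ ≤ 2 * ρ := by gcongr
  rw [Finset.sum_range_succ', hf0]
  linarith [(abs_le.1 hsum).1]

lemma le_tsum_of_le_sum_range {f : ℕ → ℝ} (hf : Summable f) {b : ℝ} (k₀ : ℕ)
    (h : ∀ k ≥ k₀, b ≤ ∑ e ∈ Finset.range (k + 1), f e) : b ≤ ∑' e, f e := by
  refine ge_of_tendsto (hf.hasSum.tendsto_sum_nat.comp (Filter.tendsto_add_atTop_nat 1)) ?_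
  filter_upwards [Filter.eventually_ge_atTop k₀] with k hk using h k hk

lemma exists_sum_two_mul_rpow_le (B : ℕ) : ∃ P₀ ≥ B, ∀ t : Finset ℕ, (∀ p ∈ t, P₀ < p) →
    ∑ p ∈ t, 2 * (p : ℝ) ^ (-(3 / 2) : ℝ) ≤ 1 / 2 := by
  obtain ⟨s, hs⟩ := summable_iff_vanishing_norm.1
    ((Real.summable_nat_rpow.2 (by norm_num : (-(3 / 2) : ℝ) < -1)).mul_left 2) (1 / 2)
    (by norm_num)
  refine ⟨B + s.sup id, by lia, fun t ht => (le_abs_self _).trans (hs t ?_).le⟩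
  refine Finset.disjoint_left.2 fun p hp hps => ?_
  have hsup : p ≤ s.sup id := Finset.le_sup (f := id) hps
  have := ht p hp
  lia

lemma rpow_neg_three_halves_le {n p : ℕ} (hn : 0 < n) (hp : n ≤ p) :
    (p : ℝ) ^ (-(3 / 2) : ℝ) ≤ 1 / n :=
  calc (p : ℝ) ^ (-(3 / 2) : ℝ) ≤ (p : ℝ) ^ (-1 : ℝ) :=
        Real.rpow_le_rpow_of_exponent_le (by exact_mod_cast hn.trans_le hp) (by norm_num)
    _ ≤ 1 / n := by
        rw [Real.rpow_neg_one, one_div]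
        gcongr

lemma le_sum_singTerm_prime_pow_iff {m : ℕ} (P : MvPolynomial (Fin m) ℤ) (hm : 0 < m) {p : ℕ}
    (hp : p.Prime) {k : ℕ} {b : ℝ} : b ≤ ∑ e ∈ Finset.range (k + 1), singTerm P (p ^ e) ↔
      b * (p : ℝ) ^ (k * (m - 1)) ≤ zeroCount P (p ^ k) := by
  have hp0 : (0 : ℝ) < p := by exact_mod_cast hp.pos
  rw [sum_singTerm_prime_pow P hp, density_prime_pow P hm hp, le_div_iff₀ (by positivity)]

lemma le_tsum_singTerm_prime_pow {m : ℕ} {P : MvPolynomial (Fin m) ℤ} (hm : 0 < m)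
    (hsum : Summable (singTerm P)) {p : ℕ} (hp : p.Prime) {b : ℝ} (k₀ : ℕ)
    (h : ∀ k ≥ k₀, b * (p : ℝ) ^ (k * (m - 1)) ≤ zeroCount P (p ^ k)) :
    b ≤ ∑' e, singTerm P (p ^ e) :=
  le_tsum_of_le_sum_range (hsum.comp_injective (Nat.pow_right_injective hp.two_le)) k₀
    fun k hk => (le_sum_singTerm_prime_pow_iff P hm hp).2 (h k hk)

lemma inv_pow_le_tsum_singTerm_prime_pow {m : ℕ} {P : MvPolynomial (Fin m) ℤ} (hm : 0 < m)
    (hsum : Summable (singTerm P)) {p : ℕ} (hp : p.Prime) (J : ℕ)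
    (h : ∀ k ≥ J, p ^ ((k - J) * (m - 1)) ≤ zeroCount P (p ^ k)) :
    ((p : ℝ) ^ (J * (m - 1)))⁻¹ ≤ ∑' e, singTerm P (p ^ e) := by
  refine le_tsum_singTerm_prime_pow hm hsum hp J fun k hk => ?_
  have hp0 : (0 : ℝ) < p := by exact_mod_cast hp.pos
  rw [inv_mul_le_iff₀ (by positivity)]
  calc (p : ℝ) ^ (k * (m - 1)) = (p : ℝ) ^ (J * (m - 1)) * (p : ℝ) ^ ((k - J) * (m - 1)) := by
        rw [← pow_add, ← add_mul, Nat.add_sub_cancel' hk]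
    _ ≤ (p : ℝ) ^ (J * (m - 1)) * zeroCount P (p ^ k) := by
        gcongr
        exact_mod_cast h k hk

section SingularSeriesBound

variable {m : ℕ} {M : Matrix (Fin m) (Fin m) ℤ} (l : Fin m → ℤ) (c : ℤ) {D : ℤ}

lemma summable_singTerm_quadPoly (hM : RankCertificate (M + Mᵀ) 5 D) (hD : D ≠ 0) :
    Summable (singTerm (quadPoly M l c)) := by
  refine Summable.of_norm_bounded (g := fun q : ℕ => (D.natAbs : ℝ) ^ (5 / 2 : ℝ) *
    (q : ℝ) ^ (-(3 / 2) : ℝ)) ((Real.summable_nat_rpow.2 (by norm_num)).mul_left _) fun q => ?_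
  rcases eq_or_ne q 0 with rfl | hq
  · simp
  · have h := abs_singTerm_quadPoly_le l c hM hq
    rw [show (1 - (5 : ℕ) / 2 : ℝ) = -(3 / 2) by norm_num] at h
    refine h.trans ?_
    rw [Nat.cast_ofNat]
    gcongr
    exact Nat.gcd_le_right _ (Int.natAbs_pos.2 hD)

lemma one_sub_le_sum_singTerm_quadPoly (hM : RankCertificate (M + Mᵀ) 5 D) {p : ℕ}
    (hp : p.Prime) (hpD : ¬ (p : ℤ) ∣ D) (k : ℕ) : 1 - 2 * (p : ℝ) ^ (-(3 / 2) : ℝ) ≤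
      ∑ e ∈ Finset.range (k + 1), singTerm (quadPoly M l c) (p ^ e) := by
  refine one_sub_two_mul_le_sum_range (by positivity)
    (by exact_mod_cast rpow_neg_three_halves_le two_pos hp.two_le)
    (by simp [(isMultiplicative_singTerm _).map_one]) (fun e => ?_) k
  have hgcd : (p ^ (e + 1)).gcd D.natAbs = 1 :=
    (hp.coprime_iff_not_dvd.2 (by rwa [← Int.natCast_dvd])).pow_left _
  have h := abs_singTerm_quadPoly_le l c hM (pow_ne_zero (e + 1) hp.ne_zero)
  rw [hgcd, Nat.cast_one, Real.one_rpow, one_mul] at h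
  refine h.trans_eq ?_
  rw [← Real.rpow_mul_natCast (by positivity), mul_comm, Nat.cast_pow,
    ← Real.rpow_natCast_mul (by positivity)]
  norm_num

lemma le_zeroCount_quadPoly (hm : 0 < m) (hM : RankCertificate (M + Mᵀ) 5 D) {p : ℕ}
    (hp : p.Prime) (hpD : ¬ (p : ℤ) ∣ D) (k : ℕ) :
    (1 - 2 * (p : ℝ) ^ (-(3 / 2) : ℝ)) * (p : ℝ) ^ (k * (m - 1)) ≤
      zeroCount (quadPoly M l c) (p ^ k) :=
  (le_sum_singTerm_prime_pow_iff _ hm hp).1 (one_sub_le_sum_singTerm_quadPoly l c hM hp hpD k)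

lemma le_re_singSeries_quadPoly (hm : 0 < m) (hM : RankCertificate (M + Mᵀ) 5 D) (hD : D ≠ 0)
    {P₀ : ℕ} (hP₀ : ∀ t : Finset ℕ, (∀ p ∈ t, P₀ < p) →
      ∑ p ∈ t, 2 * (p : ℝ) ^ (-(3 / 2) : ℝ) ≤ 1 / 2)
    {ℓ : ℕ} (hℓ : ℓ.Prime) (hℓP : P₀ < ℓ)
    (hprimes : ∀ p : ℕ, p.Prime → (p : ℤ) ∣ D → p ≤ P₀ ∨ p = ℓ) {J : ℕ}
    (hsmall : ∀ p : ℕ, p.Prime → p ≤ P₀ → ∀ k ≥ J,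
      p ^ ((k - J) * (m - 1)) ≤ zeroCount (quadPoly M l c) (p ^ k))
    {ω : ℝ} (hω : 0 ≤ ω)
    (hlarge : ∀ k ≥ 1, ω * (ℓ : ℝ) ^ (k * (m - 1)) ≤ zeroCount (quadPoly M l c) (ℓ ^ k)) :
    ω * ((P₀.factorial : ℝ) ^ (J * (m - 1)))⁻¹ / 2 ≤
      (singSeries m fun x => eval x (quadPoly M l c)).re := by
  have hsum := summable_singTerm_quadPoly l c hM hD
  let b : ℕ → ℝ := fun p => if p = ℓ then ω else ((p : ℝ) ^ (J * (m - 1)))⁻¹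
  have hmem (p : ℕ) : p ∈ insert ℓ (Finset.Ico 1 (P₀ + 1)) ↔ p = ℓ ∨ 0 < p ∧ p ≤ P₀ := by
    rw [Finset.mem_insert, Finset.mem_Ico, Nat.lt_succ_iff, Nat.succ_le_iff]
  have hbprod : ∏ p ∈ insert ℓ (Finset.Ico 1 (P₀ + 1)), b p =
      ω * ((P₀.factorial : ℝ) ^ (J * (m - 1)))⁻¹ := by
    rw [Finset.prod_insert (by simp; lia), ← Finset.prod_Ico_id_eq_factorial, Nat.cast_prod,
      ← Finset.prod_pow, ← Finset.prod_inv_distrib]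
    exact congrArg₂ _ (if_pos rfl)
      (Finset.prod_congr rfl fun p hp => if_neg (by have := Finset.mem_Ico.1 hp; lia))
  rw [singSeries_eq_tsum_singTerm, Complex.ofReal_re, div_eq_mul_one_div, ← hbprod]
  refine prod_mul_half_le_tsum (isMultiplicative_singTerm _) hsum _ (fun p _ => ?_)
    (fun p hp hp' => ?_) (fun p hp hp' => ?_) (x := fun p => 2 * (p : ℝ) ^ (-(3 / 2) : ℝ))
    (fun p => by positivity) (fun p hp hp' => ?_) fun t ht => hP₀ t fun p hp => ?_
  · simp only [b]
    split_ifs <;> positivity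
  · obtain rfl | hp := (hmem p).1 hp
    · exact absurd hℓ hp'
    · simp only [b, if_neg (show p ≠ ℓ by lia)]
      exact inv_le_one_of_one_le₀ (one_le_pow₀ (by exact_mod_cast hp.1))
  · simp only [b]
    split_ifs with hpℓ
    · exact hpℓ ▸ le_tsum_singTerm_prime_pow hm hsum hℓ 1 hlarge
    · have hpP := (((hmem p).1 hp).resolve_left hpℓ).2
      exact inv_pow_le_tsum_singTerm_prime_pow hm hsum hp' J (hsmall p hp' hpP)
  · rw [hmem] at hp
    refine le_tsum_of_le_sum_range (hsum.comp_injective (Nat.pow_right_injective hp'.two_le)) 0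
      fun k _ => one_sub_le_sum_singTerm_quadPoly l c hM hp' (fun h => ?_) k
    have := hprimes p hp' h
    have := hp'.pos
    lia
  · have := (ht p hp).1.pos
    have := (hmem p).not.1 (ht p hp).2
    lia

end SingularSeriesBound

/-! ### Lifting zeros and counting them -/

section Congruence

variable {σ : Type*} (P : MvPolynomial σ ℤ)

lemma dvd_eval_sub_eval {n : ℤ} {x y : σ → ℤ} (h : ∀ i, n ∣ x i - y i) :
    n ∣ eval x P - eval y P := by
  let π := Ideal.Quotient.mk (Ideal.span {n})
  have hπ (z : ℤ) : n ∣ z ↔ π z = 0 := by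
    rw [Ideal.Quotient.eq_zero_iff_mem, Ideal.mem_span_singleton]
  have hxy : π ∘ x = π ∘ y := funext fun i => by
    rw [Function.comp_apply, Function.comp_apply, ← sub_eq_zero, ← map_sub, ← hπ]
    exact h i
  have hx := map_aeval_int P π x
  rw [hxy, ← map_aeval_int P π y] at hx
  rw [hπ, map_sub, sub_eq_zero]
  exact hx

lemma dvd_eval_iff_of_dvd_sub {n : ℤ} {x y : σ → ℤ} (h : ∀ i, n ∣ x i - y i) :
    n ∣ eval x P ↔ n ∣ eval y P :=
  (dvd_iff_dvd_of_dvd_sub (dvd_eval_sub_eval P h))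

lemma natCast_dvd_eval_iff (q : ℕ) (x : σ → ℤ) :
    (q : ℤ) ∣ eval x P ↔ aeval (fun i => (x i : ZMod q)) P = 0 := by
  rw [aeval_intCast, ZMod.intCast_zmod_eq_zero_iff_dvd]

lemma zeroCount_le_zeroCount_C_mul [Finite σ] (a : ℤ) (q : ℕ) [NeZero q] :
    zeroCount P q ≤ zeroCount (C a * P) q :=
  Nat.card_le_card_of_injective
    (fun b => (⟨b.1, by rw [map_mul, b.2, mul_zero]⟩ : {b : σ → ZMod q // aeval b (C a * P) = 0}))
    fun _ _ h => Subtype.ext (congrArg (fun b => b.1) h)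

lemma zeroCount_C_natCast_mul [Fintype σ] (d n : ℕ) [NeZero d] [NeZero n] :
    zeroCount (C (d : ℤ) * P) (d * n) = d ^ Fintype.card σ * zeroCount P n := by
  classical
  let π : (σ → ZMod (d * n)) →+ (σ → ZMod n) :=
    ((ZMod.castHom (dvd_mul_left n d) (ZMod n)).toAddMonoidHom).compLeft σ
  have hπ : Function.Surjective π := (ZMod.castHom_surjective (dvd_mul_left n d)).comp_left
  have hzero (b : σ → ZMod (d * n)) : aeval b (C (d : ℤ) * P) = 0 ↔ aeval (π b) P = 0 := by
    obtain ⟨x, rfl⟩ : ∃ x : σ → ℤ, (fun i => (x i : ZMod (d * n))) = b :=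
      ZMod.intCast_surjective.comp_left b
    have hx : π (fun i => (x i : ZMod (d * n))) = fun i => (x i : ZMod n) := by
      funext i
      exact map_intCast (ZMod.castHom (dvd_mul_left n d) (ZMod n)) (x i)
    rw [hx, ← natCast_dvd_eval_iff, ← natCast_dvd_eval_iff, eval_mul, eval_C, Nat.cast_mul,
      mul_dvd_mul_iff_left (by exact_mod_cast NeZero.ne d)]
  have h := card_mul_sum_comp_surjective π hπ fun b => if aeval b P = 0 then (1 : ℤ) else 0
  have hcard (q : ℕ) [NeZero q] : Fintype.card (σ → ZMod q) = q ^ Fintype.card σ := by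
    rw [Fintype.card_fun, ZMod.card]
  simp only [← hzero, Finset.sum_boole, hcard] at h
  rw [zeroCount, zeroCount, Nat.card_eq_fintype_card, Nat.card_eq_fintype_card,
    Fintype.card_subtype, Fintype.card_subtype]
  have hn : n ^ Fintype.card σ ≠ 0 := pow_ne_zero _ (NeZero.ne n)
  refine Nat.eq_of_mul_eq_mul_left (Nat.pos_of_ne_zero hn) ?_
  rw [← mul_assoc, ← mul_pow, mul_comm n d]
  exact_mod_cast h

end Congruence

section Hensel

variable {m : ℕ} {P : MvPolynomial (Fin m) ℤ} {i : Fin m} {p : ℕ}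

lemma derivative_aeval_update {R σ : Type*} [CommRing R] [DecidableEq σ] (P : MvPolynomial σ R)
    (x : σ → R) (i : σ) :
    Polynomial.derivative (aeval (Function.update (Polynomial.C ∘ x) i Polynomial.X) P) =
      aeval (Function.update (Polynomial.C ∘ x) i Polynomial.X) (pderiv i P) := by
  induction P using MvPolynomial.induction_on with
  | C a => simp
  | add p q hp hq => simp only [map_add, hp, hq]
  | mul_X p j hp =>
    rcases eq_or_ne j i with rfl | hj
    · simp [hp, mul_comm]
    · simp [hp, hj, mul_comm]

lemma eval_aeval_update {R σ : Type*} [CommRing R] [DecidableEq σ] (P : MvPolynomial σ R)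
    (x : σ → R) (i : σ) (t : R) :
    (aeval (Function.update (Polynomial.C ∘ x) i Polynomial.X) P).eval t =
      eval (Function.update x i t) P := by
  induction P using MvPolynomial.induction_on with
  | C a => simp
  | add p q hp hq => simp only [map_add, Polynomial.eval_add, hp, hq]
  | mul_X p j hp =>
    rcases eq_or_ne j i with rfl | hj <;> simp_all

lemma exists_pow_dvd_eval_update (hp : p.Prime) {x : Fin m → ℤ} {v : ℕ}
    (h0 : (p : ℤ) ^ (2 * v + 1) ∣ eval x P) (h1 : ¬ (p : ℤ) ^ (v + 1) ∣ eval x (pderiv i P))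
    (k : ℕ) : ∃ t : ℤ, (p : ℤ) ^ k ∣ eval (Function.update x i t) P := by
  have : Fact p.Prime := ⟨hp⟩
  set F : Polynomial ℤ := aeval (Function.update (Polynomial.C ∘ x) i Polynomial.X) P
  have hF (t : ℤ) : F.eval t = eval (Function.update x i t) P := eval_aeval_update P x i t
  have hF' : F.derivative.eval (x i) = eval x (pderiv i P) := by
    rw [derivative_aeval_update, eval_aeval_update, Function.update_eq_self]
  have hcast (G : Polynomial ℤ) (t : ℤ) : Polynomial.aeval (t : ℤ_[p]) G =
      ((G.eval t : ℤ) : ℤ_[p]) :=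
    Polynomial.aeval_algebraMap_apply_eq_algebraMap_eval (A := ℤ_[p]) t G
  obtain ⟨z, hz, -⟩ := hensels_lemma (p := p) (F := F) (a := (x i : ℤ_[p])) (by
    rw [hcast, hcast, hF, hF', Function.update_eq_self]
    have hp1 : (1 : ℝ) < p := by exact_mod_cast hp.one_lt
    have hle : ‖(eval x P : ℤ_[p])‖ ≤ (p : ℝ) ^ (-(2 * v + 1 : ℕ) : ℤ) :=
      PadicInt.norm_int_le_pow_iff_dvd.2 (by exact_mod_cast h0)
    have hlt : (p : ℝ) ^ (-v : ℤ) ≤ ‖(eval x (pderiv i P) : ℤ_[p])‖ := by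
      by_contra! hlt
      rw [show -(v : ℤ) = -(v + 1 : ℕ) + 1 by push_cast; ring,
        ← PadicInt.norm_le_pow_iff_norm_lt_pow_add_one, PadicInt.norm_int_le_pow_iff_dvd] at hlt
      exact h1 (by exact_mod_cast hlt)
    calc _ ≤ (p : ℝ) ^ (-(2 * v + 1 : ℕ) : ℤ) := hle
      _ < (p : ℝ) ^ (-v * 2 : ℤ) := zpow_lt_zpow_right₀ hp1 (by push_cast; lia)
      _ ≤ _ := by rw [_root_.zpow_mul]; exact pow_le_pow_left₀ (by positivity) hlt 2)
  refine ⟨z.appr k, ?_⟩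
  rw [← hF, ← PadicInt.pow_p_dvd_int_iff, ← hcast, Int.cast_natCast, ← dvd_neg, ← zero_sub, ← hz]
  exact (Ideal.mem_span_singleton.1 (PadicInt.appr_spec k z)).trans
    (by simpa only [Polynomial.eval_map_algebraMap] using
      Polynomial.sub_dvd_eval_sub z (z.appr k) (F.map (algebraMap ℤ ℤ_[p])))

lemma card_le_zeroCount_of_hensel (hp : p.Prime) {T : Type*} [Fintype T] (x : T → Fin m → ℤ)
    {v k : ℕ} (h0 : ∀ t, (p : ℤ) ^ (2 * v + 1) ∣ eval (x t) P)
    (h1 : ∀ t, ¬ (p : ℤ) ^ (v + 1) ∣ eval (x t) (pderiv i P))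
    (hinj : ∀ t t', (∀ j ≠ i, (p : ℤ) ^ k ∣ x t j - x t' j) → t = t') :
    Fintype.card T ≤ zeroCount P (p ^ k) := by
  have : NeZero (p ^ k) := ⟨pow_ne_zero _ hp.ne_zero⟩
  choose s hs using fun t => exists_pow_dvd_eval_update hp (h0 t) (h1 t) k
  rw [← Nat.card_eq_fintype_card]
  refine Nat.card_le_card_of_injective (fun t =>
    (⟨fun j => (Function.update (x t) i (s t) j : ZMod (p ^ k)), ?_⟩ :
      {b : Fin m → ZMod (p ^ k) // aeval b P = 0})) fun t t' htt' => hinj t t' fun j hj => ?_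
  · rw [← natCast_dvd_eval_iff, Nat.cast_pow]
    exact hs t
  · have h := congrFun (congrArg Subtype.val htt') j
    simp only [Function.update_of_ne hj] at h
    rwa [← sub_eq_zero, ← Int.cast_sub, ZMod.intCast_zmod_eq_zero_iff_dvd, Nat.cast_pow] at h

lemma card_ne_coord_fun_fin (i : Fin m) (q : ℕ) :
    Fintype.card ({j // j ≠ i} → Fin q) = q ^ (m - 1) := by
  simp [Fintype.card_subtype_compl]

lemma fin_eq_of_dvd_sub {q : ℕ} {a b : Fin q} (h : (q : ℤ) ∣ (a : ℕ) - (b : ℕ)) : a = b :=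
  Fin.ext (Nat.ModEq.eq_of_lt_of_lt
    (Int.natCast_modEq_iff.1 (Int.modEq_iff_dvd.2 h).symm) a.isLt b.isLt)

lemma pow_le_zeroCount_of_hensel (hp : p.Prime) {x : Fin m → ℤ} {v J : ℕ} (hJ : 2 * v < J)
    (h0 : (p : ℤ) ^ J ∣ eval x P) (h1 : ¬ (p : ℤ) ^ (v + 1) ∣ eval x (pderiv i P)) {k : ℕ}
    (hk : J ≤ k) : p ^ ((k - J) * (m - 1)) ≤ zeroCount P (p ^ k) := by
  obtain ⟨n, rfl⟩ := Nat.exists_eq_add_of_le hk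
  rw [Nat.add_sub_cancel_left, pow_mul, ← card_ne_coord_fun_fin i]
  let y (t : {j // j ≠ i} → Fin (p ^ n)) (j : Fin m) : ℤ :=
    x j + p ^ J * if hj : j ≠ i then ((t ⟨j, hj⟩ : ℕ) : ℤ) else 0
  have hy (t j) : (p : ℤ) ^ J ∣ y t j - x j := ⟨_, add_sub_cancel_left _ _⟩
  refine card_le_zeroCount_of_hensel hp y (v := v) (i := i) (fun t => ?_) (fun t h => h1 ?_)
    fun t t' h => funext fun j => fin_eq_of_dvd_sub ?_
  · exact (pow_dvd_pow _ hJ).trans ((dvd_eval_iff_of_dvd_sub P (hy t)).2 h0)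
  · exact (dvd_eval_iff_of_dvd_sub _ fun j => (pow_dvd_pow _ (by lia)).trans (hy t j)).1 h
  · have hj := h j j.2
    simp only [y, dif_pos j.2, add_sub_add_left_eq_sub, ← mul_sub] at hj
    rw [pow_add, mul_dvd_mul_iff_left (pow_ne_zero _ (by exact_mod_cast hp.ne_zero))] at hj
    exact_mod_cast hj

lemma pow_le_zeroCount_of_dvd_sub_mul (hp : p.Prime) {x : Fin m → ℤ} {e D : ℤ} {v : ℕ}
    (h0 : (p : ℤ) ^ (2 * v) ∣ eval x P) (h1 : (p : ℤ) ^ v ∣ eval x (pderiv i P) - e * D)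
    (he : ¬ (p : ℤ) ∣ e) (hD : D ≠ 0) (hv : D.natAbs < 2 ^ v) {k : ℕ} (hk : 2 * v ≤ k) :
    p ^ ((k - 2 * v) * (m - 1)) ≤ zeroCount P (p ^ k) := by
  obtain ⟨u, rfl⟩ : ∃ u, v = u + 1 := Nat.exists_eq_add_one.2 <| Nat.pos_of_ne_zero fun h => by
    simp [h, hD] at hv
  refine pow_le_zeroCount_of_hensel (i := i) (v := u) hp (by lia) h0 (fun h => ?_) hk
  have hcop : IsCoprime ((p : ℤ) ^ (u + 1)) e :=
    ((Nat.prime_iff_prime_int.1 hp).coprime_iff_not_dvd.2 he).pow_left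
  have hdvd : (p : ℤ) ^ (u + 1) ∣ D := hcop.dvd_of_dvd_mul_left ((dvd_iff_dvd_of_dvd_sub h1).1 h)
  have hle : p ^ (u + 1) ≤ D.natAbs :=
    Nat.le_of_dvd (Int.natAbs_pos.2 hD) (by
      simpa [Int.natAbs_pow] using Int.natAbs_dvd_natAbs.2 hdvd)
  exact (hle.trans_lt hv).not_ge (Nat.pow_le_pow_left hp.two_le _)

lemma pow_le_zeroCount_quadPoly (hp : p.Prime) {M : Matrix (Fin m) (Fin m) ℤ} {l : Fin m → ℤ}
    {c : ℤ} (hM : ∀ a b, (p : ℤ) ∣ M a b) (hl : ¬ (p : ℤ) ∣ l i) (k : ℕ) :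
    p ^ (k * (m - 1)) ≤ zeroCount (quadPoly M l c) (p ^ k) := by
  have : Fact p.Prime := ⟨hp⟩
  have hli : (l i : ZMod p) ≠ 0 := by rwa [Ne, ZMod.intCast_zmod_eq_zero_iff_dvd]
  have hM0 : M.map (Int.castRingHom (ZMod p)) = 0 := by
    ext a b
    exact (ZMod.intCast_zmod_eq_zero_iff_dvd _ _).2 (hM a b)
  have hMT (x : Fin m → ℤ) : (p : ℤ) ∣ ((M + Mᵀ) *ᵥ x) i := by
    rw [mulVec, dotProduct]
    exact Finset.dvd_sum fun b _ => Dvd.dvd.mul_right (dvd_add (hM i b) (hM b i)) (x b)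
  let y (t : {j // j ≠ i} → Fin (p ^ k)) (j : Fin m) : ℤ :=
    if hj : j ≠ i then ((t ⟨j, hj⟩ : ℕ) : ℤ) else 0
  let ψ (x : Fin m → ℤ) : ZMod p := (fun j => (l j : ZMod p)) ⬝ᵥ (fun j => (x j : ZMod p)) + c
  choose s hs using fun t => ZMod.intCast_surjective (-ψ (y t) / (l i : ZMod p))
  rw [pow_mul, ← card_ne_coord_fun_fin i]
  refine card_le_zeroCount_of_hensel (v := 0) (i := i) hp
    (fun t => y t + Pi.single i (s t)) (fun t => ?_) (fun t => ?_)
    fun t t' h => funext fun j => fin_eq_of_dvd_sub ?_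
  · rw [mul_zero, zero_add, pow_one, natCast_dvd_eval_iff, aeval_quadPoly, hM0, zero_mulVec,
      dotProduct_zero, zero_add]
    have hsingle : (fun j => ((Pi.single i (s t) : Fin m → ℤ) j : ZMod p)) =
        Pi.single i (s t : ZMod p) :=
      funext (Pi.apply_single (fun _ => Int.cast) (fun _ => Int.cast_zero) i (s t))
    simp only [Pi.add_apply, Int.cast_add]
    rw [← Pi.add_def, hsingle, dotProduct_add, dotProduct_single, hs, mul_div_cancel₀ _ hli]
    ring
  · rwa [zero_add, pow_one, eval_pderiv_quadPoly, (Int.dvd_add_right (hMT _))]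
  · have hj := h j j.2
    simp only [Pi.add_apply, Pi.single_eq_of_ne j.2, add_zero, y, dif_pos j.2] at hj
    exact_mod_cast hj

end Hensel

/-! ### Summing over prime first coordinates -/

section Primes

open Filter Chebyshev
open scoped Topology

lemma eventually_le_theta_sub_theta_div_four :
    ∀ᶠ x : ℝ in atTop, x / 8 ≤ theta x - theta (x / 4) := by
  have hlog := (isLittleO_log_rpow_atTop (r := 1 / 2) (by norm_num)).def
    (show (0 : ℝ) < 1 / 200 by norm_num)
  filter_upwards [hlog, eventually_ge_atTop 10000] with x hlogx hx
  rw [Real.norm_of_nonneg (Real.log_nonneg (by linarith)), ← Real.sqrt_eq_rpow,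
    Real.norm_of_nonneg (Real.sqrt_nonneg x)] at hlogx
  have hsqrt : √x * √x = x := Real.mul_self_sqrt (by linarith)
  have hlower := theta_ge' (x := x) (by linarith)
  have hupper : theta (x / 4) ≤ 2 * Real.log 2 * (x / 4) := by
    have hlog4 : Real.log 4 = 2 * Real.log 2 := by
      rw [show (4 : ℝ) = 2 ^ 2 by norm_num, Real.log_pow, Nat.cast_ofNat]
    exact hlog4 ▸ theta_le_log4_mul_x (by linarith)
  have hlogadd : Real.log (x + 2) ≤ 2 * Real.log x := by
    rw [← Nat.cast_two, ← Real.log_pow]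
    exact Real.log_le_log (by linarith) (by push_cast; nlinarith)
  have hsqrtlog : √x * Real.log x ≤ x / 200 := by
    calc √x * Real.log x ≤ √x * (1 / 200 * √x) := by gcongr
      _ = x / 200 := by linear_combination (1 / 200) * hsqrt
  have hsqrtle : √x ≤ x / 100 := by
    have : (100 : ℝ) ≤ √x := Real.le_sqrt_of_sq_le (by linarith)
    nlinarith
  nlinarith [Real.log_two_gt_d9, Real.log_two_lt_d9]

lemma theta_sub_theta {x y : ℝ} (hxy : x ≤ y) :
    theta y - theta x = ∑ p ∈ Finset.Ioc ⌊x⌋₊ ⌊y⌋₊ with p.Prime, Real.log p := by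
  have hle : ⌊x⌋₊ ≤ ⌊y⌋₊ := Nat.floor_le_floor hxy
  rw [sub_eq_iff_eq_add, theta, theta, ← Finset.sum_union, ← Finset.filter_union,
    Finset.union_comm, Finset.Ioc_union_Ioc_eq_Ioc (Nat.zero_le _) hle]
  exact Finset.disjoint_filter_filter (Finset.Ioc_disjoint_Ioc_of_le le_rfl).symm

lemma eventually_le_card_primes_Ioc : ∀ᶠ x : ℝ in atTop,
    x / 8 / Real.log x ≤ (Finset.filter Nat.Prime (Finset.Ioc ⌊x / 4⌋₊ ⌊x⌋₊)).card := by
  filter_upwards [eventually_le_theta_sub_theta_div_four, eventually_gt_atTop 1] with x hx hx1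
  rw [div_le_iff₀ (Real.log_pos hx1), ← nsmul_eq_mul]
  refine hx.trans ?_
  rw [theta_sub_theta (by linarith)]
  refine Finset.sum_le_card_nsmul _ _ _ fun p hp => ?_
  rw [Finset.mem_filter, Finset.mem_Ioc, Nat.le_floor_iff (by linarith)] at hp
  exact Real.log_le_log (Nat.cast_pos.2 hp.2.pos) hp.1.2

/-- For all large primes `ℓ`, a set of points of height `≪ ℓ` on the hyperplane `y₀ = a ℓ` over
which `S` sums to `≫ ℓ ^ s`; the hyperplanes for distinct `ℓ` are disjoint. -/
def HasLargePrimeSections {s : ℕ} (S : (Fin (s + 1) → ℤ) → ℝ) : Prop :=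
  ∃ a : ℤ, a ≠ 0 ∧ ∃ c > (0 : ℝ), ∃ K > (0 : ℝ), ∀ᶠ ℓ : ℕ in atTop, ℓ.Prime →
    ∃ 𝒞 : Finset (Fin (s + 1) → ℤ), (∀ y ∈ 𝒞, y 0 = a * ℓ ∧ ∀ i, (|y i| : ℝ) ≤ K * ℓ) ∧
      c * (ℓ : ℝ) ^ s ≤ ∑ y ∈ 𝒞, S y

lemma HasLargePrimeSections.exists_le_sum {s : ℕ} {S : (Fin (s + 1) → ℤ) → ℝ}
    (hS : HasLargePrimeSections S) :
    ∃ c > (0 : ℝ), ∃ K > (0 : ℝ), ∃ Y₀ : ℝ, ∀ Y : ℝ, Y₀ ≤ Y → ∃ 𝒞 : Finset (Fin (s + 1) → ℤ),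
      (∀ y ∈ 𝒞, ∀ i, (|y i| : ℝ) ≤ K * Y) ∧
        c * Y ^ (s + 1) / Real.log Y ≤ ∑ y ∈ 𝒞, S y := by
  classical
  obtain ⟨a, ha, c, hc, K, hK, hev⟩ := hS
  obtain ⟨ℓ₀, hℓ₀⟩ := eventually_atTop.1 hev
  obtain ⟨X₀, hX₀⟩ := eventually_atTop.1 eventually_le_card_primes_Ioc
  choose! 𝒞 h𝒞 hsum using hℓ₀
  refine ⟨c * (1 / 4) ^ s / 8, by positivity, K, hK, max X₀ (4 * ℓ₀ + 1), fun Y hY => ?_⟩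
  rw [max_le_iff] at hY
  have hY0 : 0 ≤ Y := le_trans (by positivity) hY.2
  set P := Finset.filter Nat.Prime (Finset.Ioc ⌊Y / 4⌋₊ ⌊Y⌋₊)
  have hP {p : ℕ} (hp : p ∈ P) : p.Prime ∧ Y / 4 ≤ p ∧ (p : ℝ) ≤ Y ∧ ℓ₀ ≤ p := by
    rw [Finset.mem_filter, Finset.mem_Ioc, Nat.floor_lt (by positivity), Nat.le_floor_iff hY0] at hp
    refine ⟨hp.2, hp.1.1.le, hp.1.2, ?_⟩
    have : (ℓ₀ : ℝ) ≤ p := by linarith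
    exact_mod_cast this
  have hdisj : (P : Set ℕ).PairwiseDisjoint 𝒞 := by
    refine fun p hp p' hp' hne => Finset.disjoint_left.2 fun y hy hy' => hne ?_
    obtain ⟨hp, -, -, hpℓ⟩ := hP hp
    obtain ⟨hp', -, -, hpℓ'⟩ := hP hp'
    have h : a * (p : ℤ) = a * p' :=
      (h𝒞 p hpℓ hp y hy).1.symm.trans (h𝒞 p' hpℓ' hp' y hy').1
    exact_mod_cast mul_left_cancel₀ ha h
  refine ⟨P.biUnion 𝒞, fun y hy i => ?_, ?_⟩
  · obtain ⟨p, hp, hyp⟩ := Finset.mem_biUnion.1 hy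
    obtain ⟨hp, -, hpY, hpℓ⟩ := hP hp
    exact ((h𝒞 p hpℓ hp y hyp).2 i).trans (by gcongr)
  · rw [Finset.sum_biUnion hdisj]
    calc c * (1 / 4) ^ s / 8 * Y ^ (s + 1) / Real.log Y
        = Y / 8 / Real.log Y * (c * (Y / 4) ^ s) := by rw [div_eq_mul_one_div Y 4, mul_pow]; ring
      _ ≤ P.card * (c * (Y / 4) ^ s) := by gcongr; exact hX₀ Y hY.1
      _ ≤ ∑ p ∈ P, ∑ y ∈ 𝒞 p, S y := by
        rw [← nsmul_eq_mul]
        refine Finset.card_nsmul_le_sum _ _ _ fun p hp => ?_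
        obtain ⟨hp, hYp, -, hpℓ⟩ := hP hp
        exact le_trans (by gcongr) (hsum p hpℓ hp)

end Primes

/-! ### Restriction to a coordinate hyperplane -/

section Homogeneous

variable {σ k : Type*} [CommRing k] {P : MvPolynomial σ k} {d : ℕ}

lemma eval_const_mul_of_isHomogeneous (hP : P.IsHomogeneous d) (r : k) (x : σ → k) :
    eval (fun i => r * x i) P = r ^ d * eval x P := by
  rw [eval_eq, eval_eq, Finset.mul_sum]
  refine Finset.sum_congr rfl fun e he => ?_
  simp only [mul_pow, Finset.prod_mul_distrib]
  rw [Finset.prod_pow_eq_pow_sum, hP.degree_eq_sum_deg_support he]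
  ring

lemma pow_dvd_eval_of_isHomogeneous (hP : P.IsHomogeneous d) {n : k} {x : σ → k}
    (hx : ∀ i, n ∣ x i) : n ^ d ∣ eval x P := by
  choose z hz using hx
  rw [funext hz, eval_const_mul_of_isHomogeneous hP]
  exact dvd_mul_right _ _

lemma isHomogeneous_of_X_mul {i : σ} (h : (X i * P).IsHomogeneous (d + 1)) :
    P.IsHomogeneous d := by
  intro e he
  have := h (d := Finsupp.single i 1 + e) (by rwa [coeff_X_mul])
  rw [map_add, Finsupp.weight_single, Pi.one_apply, one_smul] at this
  lia

end Homogeneous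

section RestrictZero

variable {s : ℕ} {k : Type*} [CommRing k]

/-- The restriction of a polynomial to the hyperplane where the first variable vanishes. -/
noncomputable def restrictZero (P : MvPolynomial (Fin (s + 1)) k) : MvPolynomial (Fin s) k :=
  aeval (Fin.cons 0 X : Fin (s + 1) → MvPolynomial (Fin s) k) P

lemma eval_restrictZero (P : MvPolynomial (Fin (s + 1)) k) (t : Fin s → k) :
    eval t (restrictZero P) = eval (Fin.cons 0 t) P := by
  rw [restrictZero, aeval_def, algebraMap_eq, eval_eval₂, eval]
  refine congrArg₂ (fun f g => eval₂ f g P) (RingHom.ext fun _ => eval_C _) (funext fun i => ?_)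
  cases i using Fin.cases <;> simp

lemma restrictZero_isHomogeneous {P : MvPolynomial (Fin (s + 1)) k} {d : ℕ}
    (hP : P.IsHomogeneous d) : (restrictZero P).IsHomogeneous d := by
  rw [← one_mul d]
  refine hP.aeval _ fun i => ?_
  cases i using Fin.cases with
  | zero => exact isHomogeneous_zero _ _ _
  | succ i => exact isHomogeneous_X _ _

lemma X_zero_dvd_sub_rename_restrictZero (P : MvPolynomial (Fin (s + 1)) k) :
    X 0 ∣ P - rename Fin.succ (restrictZero P) := by
  induction P using MvPolynomial.induction_on with
  | C a => simp [restrictZero]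
  | add p q hp hq =>
    rw [restrictZero, map_add, map_add, add_sub_add_comm]
    exact dvd_add hp hq
  | mul_X p i hp =>
    rw [restrictZero, map_mul, map_mul, aeval_X]
    cases i using Fin.cases with
    | zero => simp
    | succ i =>
      rw [Fin.cons_succ, rename_X, ← sub_mul]
      exact hp.mul_right _

lemma exists_eq_X_zero_mul_add_rename {P : MvPolynomial (Fin (s + 1)) k} {d : ℕ}
    (hP : P.IsHomogeneous (d + 1)) :
    ∃ P', P'.IsHomogeneous d ∧ P = X 0 * P' + rename Fin.succ (restrictZero P) := by
  obtain ⟨P', hP'⟩ := X_zero_dvd_sub_rename_restrictZero P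
  refine ⟨P', isHomogeneous_of_X_mul (i := 0) ?_, by rw [← hP', sub_add_cancel]⟩
  rw [← hP']
  exact hP.sub (restrictZero_isHomogeneous hP).rename_isHomogeneous

lemma eval_eq_mul_add_eval_restrictZero {P P' : MvPolynomial (Fin (s + 1)) k}
    (h : P = X 0 * P' + rename Fin.succ (restrictZero P)) (y : Fin (s + 1) → k) :
    eval y P = y 0 * eval y P' + eval (Fin.tail y) (restrictZero P) := by
  conv_lhs => rw [h]
  rw [map_add, map_mul, eval_X, eval_rename]
  rfl

end RestrictZero

lemma pow_le_two_mul_card_aeval_ne_zero {s ℓ : ℕ} [Fact ℓ.Prime] {P : MvPolynomial (Fin s) ℤ}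
    {v : Fin s → ℤ} (hv : ¬ (ℓ : ℤ) ∣ eval v P) (hd : 2 * P.totalDegree ≤ ℓ) :
    ℓ ^ s ≤ 2 * (Finset.univ.filter fun t : Fin s → ZMod ℓ => aeval t P ≠ 0).card := by
  let P' := MvPolynomial.map (Int.castRingHom (ZMod ℓ)) P
  have hP' (t : Fin s → ZMod ℓ) : eval t P' = aeval t P := eval_map _ _ _
  have h0 : P' ≠ 0 := fun h => hv <| by
    rw [natCast_dvd_eval_iff, ← hP', h, map_zero]
  have hdeg : P'.totalDegree ≤ P.totalDegree := Finset.sup_mono (support_map_subset _ _)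
  have hℓ : 0 < (ℓ : ℚ≥0) := by exact_mod_cast (Fact.out : ℓ.Prime).pos
  have hzero : ((Finset.univ.filter fun t : Fin s → ZMod ℓ => aeval t P = 0).card : ℚ≥0) / ℓ ^ s ≤
      1 / 2 := by
    have hSZ := schwartz_zippel_totalDegree h0 (Finset.univ : Finset (ZMod ℓ))
    simp only [Fintype.piFinset_univ, Finset.card_univ, ZMod.card, hP'] at hSZ
    refine hSZ.trans ?_
    rw [div_le_div_iff₀ hℓ two_pos, one_mul]
    exact_mod_cast show P'.totalDegree * 2 ≤ ℓ by lia
  rw [div_le_div_iff₀ (by positivity) two_pos, one_mul] at hzero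
  norm_cast at hzero
  have hsplit := Finset.card_filter_add_card_filter_not (s := Finset.univ)
    fun t : Fin s → ZMod ℓ => aeval t P = 0
  rw [Finset.card_univ, Fintype.card_fun, ZMod.card, Fintype.card_fin] at hsplit
  simp only [ne_eq]
  lia

/-! ### Fibres over prime first coordinates -/

section QuadPolyEval

variable {m : ℕ} {M : Matrix (Fin m) (Fin m) ℤ} {l : Fin m → ℤ} {c : ℤ}

lemma eval_quadPoly (x : Fin m → ℤ) :
    eval x (quadPoly M l c) = x ⬝ᵥ M *ᵥ x + l ⬝ᵥ x + c :=
  aeval_quadPoly M l c x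

lemma C_mul_quadPoly (a : ℤ) : C a * quadPoly M l c = quadPoly (a • M) (a • l) (a * c) :=
  MvPolynomial.funext fun x => by
    simp only [map_mul, eval_C, eval_quadPoly, smul_mulVec, dotProduct_smul, smul_dotProduct,
      smul_eq_mul]
    ring

lemma exists_dotProduct_mulVec_ne_zero {A : Matrix (Fin m) (Fin m) ℤ} (hA : A + Aᵀ ≠ 0) :
    ∃ x, x ⬝ᵥ A *ᵥ x ≠ 0 ∧ (A + Aᵀ) *ᵥ x ≠ 0 := by
  have hpolar (x y : Fin m → ℤ) :
      (x + y) ⬝ᵥ A *ᵥ (x + y) - x ⬝ᵥ A *ᵥ x - y ⬝ᵥ A *ᵥ y = x ⬝ᵥ (A + Aᵀ) *ᵥ y := by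
    rw [add_mulVec, mulVec_transpose, dotProduct_add x (A *ᵥ y), dotProduct_comm x (y ᵥ* A),
      ← dotProduct_mulVec]
    simp only [mulVec_add, add_dotProduct, dotProduct_add]
    ring
  obtain ⟨x, hx⟩ : ∃ x, x ⬝ᵥ A *ᵥ x ≠ 0 := by
    by_contra! h
    refine hA (Matrix.ext fun i j => ?_)
    have := hpolar (Pi.single i 1) (Pi.single j 1)
    rw [h, h, h] at this
    simpa using this.symm
  refine ⟨x, hx, fun h => hx ?_⟩
  have := hpolar x x
  rw [h, dotProduct_zero] at this
  simp only [mulVec_add, add_dotProduct, dotProduct_add] at this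
  lia

end QuadPolyEval

section Divisibility

lemma le_natAbs_of_natCast_dvd {p : ℕ} {D : ℤ} (hD : D ≠ 0) (h : (p : ℤ) ∣ D) : p ≤ D.natAbs :=
  Nat.le_of_dvd (Int.natAbs_pos.2 hD) (Int.natCast_dvd.1 h)

lemma natCast_dvd_factorial_pow {p n : ℕ} (hp : p.Prime) (h : p ≤ n) (k : ℕ) :
    (p : ℤ) ^ k ∣ (n.factorial : ℤ) ^ k :=
  pow_dvd_pow_of_dvd (Int.natCast_dvd_natCast.2 (hp.dvd_factorial.2 h)) k

lemma le_of_natCast_dvd_factorial_pow {p n k : ℕ} (hp : p.Prime)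
    (h : (p : ℤ) ∣ (n.factorial : ℤ) ^ k) : p ≤ n :=
  hp.dvd_factorial.1 (hp.dvd_of_dvd_pow (n := k) (by exact_mod_cast h))

lemma not_natCast_dvd_natCast_of_lt {p ℓ : ℕ} (hp : p.Prime) (hℓ : ℓ.Prime) (h : p < ℓ) :
    ¬ (p : ℤ) ∣ ℓ := fun hd =>
  h.ne ((Nat.prime_dvd_prime_iff_eq hp hℓ).1 (Int.natCast_dvd_natCast.1 hd))

end Divisibility

section Fibre

variable {m s : ℕ} (A : Matrix (Fin m) (Fin m) ℤ) (q : Fin m → MvPolynomial (Fin (s + 1)) ℤ)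
  (R : MvPolynomial (Fin (s + 1)) ℤ)

/-- The fibre over `y` of the cubic form `y₁ · xᵀ A x + ∑ x_j q_j(y) + R(y)`, as a quadratic
polynomial in `x`. -/
noncomputable def fibre (y : Fin (s + 1) → ℤ) : MvPolynomial (Fin m) ℤ :=
  quadPoly (y 0 • A) (fun j => eval y (q j)) (eval y R)

/-- The real part of the singular series of the fibre over `y`. -/
noncomputable def fibreSingSeries (y : Fin (s + 1) → ℤ) : ℝ :=
  (singSeries m fun x => eval x (fibre A q R y)).re

/-- The point `(a ℓ, ℓ w + L t)`, with `t` represented by integers in `[0, ℓ)`. It is determined by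
`t` modulo `ℓ` and by `w` modulo divisors of `L`. -/
def familyPoint (a L : ℤ) (w : Fin s → ℤ) {ℓ : ℕ} (t : Fin s → ZMod ℓ) : Fin (s + 1) → ℤ :=
  Fin.cons (a * ℓ) fun i => ℓ * w i + L * (t i).val

variable {a L : ℤ} {w : Fin s → ℤ}

lemma familyPoint_injective (hL : L ≠ 0) (ℓ : ℕ) [NeZero ℓ] :
    Function.Injective (familyPoint a L w : (Fin s → ZMod ℓ) → _) := fun t t' h =>
  funext fun i => ZMod.val_injective ℓ <| by
    have := congrFun h i.succ
    simpa only [familyPoint, Fin.cons_succ, add_right_inj, mul_right_inj' hL, Nat.cast_inj]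
      using this

lemma abs_familyPoint_le {ℓ : ℕ} [NeZero ℓ] (t : Fin s → ZMod ℓ) (i : Fin (s + 1)) :
    |familyPoint a L w t i| ≤ (|a| + ∑ i, |w i| + |L|) * ℓ := by
  have hsum : 0 ≤ ∑ i, |w i| := Finset.sum_nonneg fun i _ => abs_nonneg _
  cases i using Fin.cases with
  | zero =>
    rw [familyPoint, Fin.cons_zero, abs_mul, Nat.abs_cast]
    gcongr
    linarith [abs_nonneg L]
  | succ i =>
    have hw : |w i| ≤ ∑ i, |w i| :=
      Finset.single_le_sum (fun i _ => abs_nonneg (w i)) (Finset.mem_univ i)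
    have ht : (((t i).val : ℕ) : ℤ) ≤ ℓ := by exact_mod_cast (ZMod.val_lt (t i)).le
    calc |ℓ * w i + L * (t i).val| ≤ ℓ * |w i| + |L| * (t i).val := by
          refine (abs_add_le _ _).trans_eq ?_
          rw [abs_mul, abs_mul, Nat.abs_cast, Nat.abs_cast]
      _ ≤ ℓ * ∑ i, |w i| + |L| * ℓ := by gcongr
      _ ≤ (|a| + ∑ i, |w i| + |L|) * ℓ := by nlinarith [abs_nonneg a]

lemma dvd_familyPoint_sub_mul_cons_val {ℓ : ℕ} (t : Fin s → ZMod ℓ) (i : Fin (s + 1)) :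
    (ℓ : ℤ) ∣ familyPoint a L w t i -
      L * (Fin.cons 0 fun i => ((t i).val : ℤ) : Fin (s + 1) → ℤ) i := by
  cases i using Fin.cases <;> simp [familyPoint]

lemma dvd_familyPoint_sub_mul_cons {n : ℤ} (ha : n ∣ a) (hL : n ∣ L) {ℓ : ℕ} (t : Fin s → ZMod ℓ)
    (i : Fin (s + 1)) : n ∣ familyPoint a L w t i - ℓ * (Fin.cons 0 w : Fin (s + 1) → ℤ) i := by
  cases i using Fin.cases <;> simp [familyPoint, ha, hL, Dvd.dvd.mul_right]

lemma natCast_dvd_eval_familyPoint_iff {P : MvPolynomial (Fin (s + 1)) ℤ} {d : ℕ}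
    (hP : P.IsHomogeneous d) {ℓ : ℕ} [Fact ℓ.Prime] (hL : ¬ (ℓ : ℤ) ∣ L) (t : Fin s → ZMod ℓ) :
    (ℓ : ℤ) ∣ eval (familyPoint a L w t) P ↔ aeval t (restrictZero P) = 0 := by
  have hℓ := Nat.prime_iff_prime_int.1 (Fact.out : ℓ.Prime)
  rw [dvd_eval_iff_of_dvd_sub P (dvd_familyPoint_sub_mul_cons_val t),
    eval_const_mul_of_isHomogeneous hP, hℓ.dvd_mul,
    or_iff_right fun h => hL (hℓ.dvd_of_dvd_pow h), ← eval_restrictZero, natCast_dvd_eval_iff]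
  simp

variable {A q R}

lemma hasLargePrimeSections_fibreSingSeries (hm : 0 < m) {D : ℤ}
    (hA : RankCertificate (A + Aᵀ) 5 D) {P₀ : ℕ}
    (hP₀ : ∀ t : Finset ℕ, (∀ p ∈ t, P₀ < p) → ∑ p ∈ t, 2 * (p : ℝ) ^ (-(3 / 2) : ℝ) ≤ 1 / 2)
    (haD : a * D ≠ 0) (hprimes : ∀ p : ℕ, p.Prime → (p : ℤ) ∣ a * D → p ≤ P₀) (hL : L ≠ 0)
    {J : ℕ} {c : ℝ} (hc : 0 < c)
    (H : ∀ᶠ ℓ : ℕ in Filter.atTop, ∀ _ : Fact ℓ.Prime, ∃ (T : Finset (Fin s → ZMod ℓ)) (ω : ℝ),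
      0 ≤ ω ∧ c * (ℓ : ℝ) ^ s ≤ T.card * ω ∧ ∀ t ∈ T,
        (∀ p : ℕ, p.Prime → p ≤ P₀ → ∀ k ≥ J, p ^ ((k - J) * (m - 1)) ≤
          zeroCount (fibre A q R (familyPoint a L w t)) (p ^ k)) ∧
        ∀ k ≥ 1, ω * (ℓ : ℝ) ^ (k * (m - 1)) ≤
          zeroCount (fibre A q R (familyPoint a L w t)) (ℓ ^ k)) :
    HasLargePrimeSections (fibreSingSeries A q R) := by
  classical
  let κ : ℝ := ((P₀.factorial : ℝ) ^ (J * (m - 1)))⁻¹ / 2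
  have : 0 < κ := by have := P₀.factorial_pos; positivity
  refine ⟨a, left_ne_zero_of_mul haD, c * κ, by positivity,
    ((|a| + ∑ i, |w i| + |L| : ℤ) : ℝ), ?_, ?_⟩
  · have : 0 ≤ ∑ i, |w i| := Finset.sum_nonneg fun i _ => abs_nonneg _
    exact_mod_cast show 0 < |a| + ∑ i, |w i| + |L| by positivity
  filter_upwards [H, Filter.eventually_gt_atTop P₀] with ℓ hℓT hℓP hℓ
  have : Fact ℓ.Prime := ⟨hℓ⟩
  obtain ⟨T, ω, hω, hT, hcount⟩ := hℓT this
  have hlower (t) (ht : t ∈ T) : ω * κ ≤ fibreSingSeries A q R (familyPoint a L w t) := by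
    obtain ⟨hsmall, hlarge⟩ := hcount t ht
    have hy0 : familyPoint a L w t 0 * D = ℓ * (a * D) := by
      rw [familyPoint, Fin.cons_zero]
      ring
    refine le_trans (mul_div_assoc _ _ _).ge (le_re_singSeries_quadPoly _ _ hm
      (D := familyPoint a L w t 0 * D) ?_ ?_ hP₀ hℓ hℓP (fun p hp hpd => ?_) hsmall hω hlarge)
    · rw [transpose_smul, ← smul_add]
      exact hA.smul _
    · rw [hy0]
      exact mul_ne_zero (by exact_mod_cast hℓ.ne_zero) haD
    · rw [hy0] at hpd
      refine ((Nat.prime_iff_prime_int.1 hp).dvd_or_dvd hpd).symm.imp (hprimes p hp) fun h => ?_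
      exact (Nat.prime_dvd_prime_iff_eq hp hℓ).1 (Int.natCast_dvd_natCast.1 h)
  refine ⟨T.image (familyPoint a L w), fun y hy => ?_, ?_⟩
  · obtain ⟨t, -, rfl⟩ := Finset.mem_image.1 hy
    exact ⟨rfl, fun i => by exact_mod_cast abs_familyPoint_le t i⟩
  · rw [Finset.sum_image fun x _ y _ h => familyPoint_injective hL ℓ h]
    calc c * κ * (ℓ : ℝ) ^ s = c * (ℓ : ℝ) ^ s * κ := by ring
      _ ≤ T.card * ω * κ := by gcongr
      _ = T.card • (ω * κ) := by rw [nsmul_eq_mul, mul_assoc]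
      _ ≤ ∑ t ∈ T, fibreSingSeries A q R (familyPoint a L w t) :=
        Finset.card_nsmul_le_sum _ _ _ hlower

end Fibre

/-! ### Fibres whose linear part does not vanish on the hyperplane -/

section LinearPart

variable {m s : ℕ} {A : Matrix (Fin m) (Fin m) ℤ} {q : Fin m → MvPolynomial (Fin (s + 1)) ℤ}
  {R : MvPolynomial (Fin (s + 1)) ℤ}

/- If `y ≡ e D z` with `z₁ = 0`, `D = q_j(z)`, then the fibre over `y` is congruent to
`e² D² (∑ x_i q_i(z) + e D R(z))`, which has the zero `x_j = -e R(z)`. -/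
lemma pow_le_zeroCount_fibre (hq : ∀ j, (q j).IsHomogeneous 2) (hR : R.IsHomogeneous 3)
    {z : Fin (s + 1) → ℤ} (hz : z 0 = 0) {j : Fin m} (hj : eval z (q j) ≠ 0) {v : ℕ}
    (hv : (eval z (q j) ^ 3).natAbs < 2 ^ v) {p : ℕ} (hp : p.Prime) {e : ℤ} (he : ¬ (p : ℤ) ∣ e)
    {y : Fin (s + 1) → ℤ} (hy : ∀ i, (p : ℤ) ^ (2 * v) ∣ y i - e * eval z (q j) * z i) {k : ℕ}
    (hk : 2 * v ≤ k) :
    p ^ ((k - 2 * v) * (m - 1)) ≤ zeroCount (fibre A q R y) (p ^ k) := by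
  set D := eval z (q j) with hD
  have hy0 : (p : ℤ) ^ (2 * v) ∣ y 0 := by simpa [hz] using hy 0
  have hqy := dvd_eval_sub_eval (q j) hy
  have hRy := dvd_eval_sub_eval R hy
  rw [eval_const_mul_of_isHomogeneous (hq j), ← hD] at hqy
  rw [eval_const_mul_of_isHomogeneous hR] at hRy
  refine pow_le_zeroCount_of_dvd_sub_mul (x := Pi.single j (-e * eval z R)) (i := j) (e := e ^ 2)
    hp ?_ ?_ (fun h => he ((Nat.prime_iff_prime_int.1 hp).dvd_of_dvd_pow h)) (pow_ne_zero 3 hj) hv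
    hk
  · rw [fibre, eval_quadPoly, smul_mulVec, dotProduct_smul, dotProduct_single, smul_eq_mul,
      add_assoc]
    refine dvd_add (hy0.mul_right _) ?_
    rw [show eval y (q j) * (-e * eval z R) + eval y R =
      (eval y (q j) - (e * D) ^ 2 * D) * (-e * eval z R) + (eval y R - (e * D) ^ 3 * eval z R)
      by ring]
    exact dvd_add (hqy.mul_right _) hRy
  · rw [fibre, eval_pderiv_quadPoly, transpose_smul, ← smul_add, smul_mulVec, Pi.smul_apply,
      smul_eq_mul, add_sub_assoc]
    refine dvd_add (((pow_dvd_pow _ (by lia)).trans hy0).mul_right _) ?_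
    rw [show e ^ 2 * D ^ 3 = (e * D) ^ 2 * D by ring]
    exact (pow_dvd_pow _ (by lia)).trans hqy

theorem hasLargePrimeSections_of_restrictZero_linear_ne_zero {D : ℤ} (hD : D ≠ 0)
    (hA : RankCertificate (A + Aᵀ) 5 D) (hq : ∀ j, (q j).IsHomogeneous 2)
    (hR : R.IsHomogeneous 3) {j : Fin m} (hj : restrictZero (q j) ≠ 0) :
    HasLargePrimeSections (fibreSingSeries A q R) := by
  obtain ⟨v, hv⟩ : ∃ v, eval v (restrictZero (q j)) ≠ 0 := by
    by_contra! h
    exact hj (MvPolynomial.funext fun x => by rw [h x, map_zero])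
  rw [eval_restrictZero] at hv
  let z : Fin (s + 1) → ℤ := Fin.cons 0 v
  set δ := eval z (q j) with hδ
  let J := (δ ^ 3).natAbs
  obtain ⟨P₀, hDP, hP₀⟩ := exists_sum_two_mul_rpow_le D.natAbs
  set N : ℤ := (P₀.factorial : ℤ) ^ (2 * J)
  have hN : N ≠ 0 := pow_ne_zero _ (by exact_mod_cast P₀.factorial_ne_zero)
  refine hasLargePrimeSections_fibreSingSeries (a := N) (L := N) (w := fun i => δ * v i)
    (Fin.pos j) hA hP₀ (mul_ne_zero hN hD) (fun p hp h => ?_) hN (J := 2 * J) (c := 1 / 2)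
    (by norm_num) ?_
  · obtain h | h := (Nat.prime_iff_prime_int.1 hp).dvd_or_dvd h
    · exact le_of_natCast_dvd_factorial_pow hp h
    · exact (le_natAbs_of_natCast_dvd hD h).trans hDP
  filter_upwards [Filter.eventually_gt_atTop P₀, Filter.eventually_gt_atTop δ.natAbs,
    Filter.eventually_ge_atTop (2 * (restrictZero (q j)).totalDegree)] with ℓ hℓP hℓδ hdeg hF
  have hℓ : ℓ.Prime := hF.out
  have hℓN : ¬ (ℓ : ℤ) ∣ N := fun h => hℓP.not_ge (le_of_natCast_dvd_factorial_pow hℓ h)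
  have hcard := pow_le_two_mul_card_aeval_ne_zero (P := restrictZero (q j)) (v := v)
    (by rw [eval_restrictZero]; exact fun h => hℓδ.not_ge (le_natAbs_of_natCast_dvd hv h)) hdeg
  refine ⟨Finset.univ.filter fun t => aeval t (restrictZero (q j)) ≠ 0, 1, zero_le_one, ?_,
    fun t ht => ⟨fun p hp hpP k hk => ?_, fun k _ => ?_⟩⟩
  · rw [mul_one, div_mul_eq_mul_div, one_mul, div_le_iff₀' two_pos]
    exact_mod_cast hcard
  · have hpN := natCast_dvd_factorial_pow hp hpP (2 * J)
    refine pow_le_zeroCount_fibre (e := ℓ) hq hR rfl hv Nat.lt_two_pow_self hp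
      (not_natCast_dvd_natCast_of_lt hp hℓ (hpP.trans_lt hℓP)) (fun i => ?_) hk
    have hzw : (Fin.cons 0 fun i => δ * v i : Fin (s + 1) → ℤ) i = δ * z i := by
      cases i using Fin.cases <;> simp [z]
    rw [mul_assoc, ← hδ, ← hzw]
    exact hpN.trans (dvd_familyPoint_sub_mul_cons dvd_rfl dvd_rfl t i)
  · rw [one_mul]
    refine mod_cast pow_le_zeroCount_quadPoly hℓ (fun a b => ?_) (fun h => ?_) k (i := j)
    · exact Dvd.intro_left (N * A a b) (by simp [familyPoint]; ring)
    · exact (Finset.mem_filter.1 ht).2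
        ((natCast_dvd_eval_familyPoint_iff (hq j) hℓN t).1 h)

end LinearPart

/-! ### Fibres whose linear part vanishes on the hyperplane -/

section ConstantPart

variable {m s : ℕ} {A : Matrix (Fin m) (Fin m) ℤ}

/- The quadratic polynomial is congruent to `e xᵀ A x - e³ x₀ᵀ A x₀`, with the zero `e x₀`. -/
lemma pow_le_zeroCount_quadPoly_smul {x₀ : Fin m → ℤ} {i : Fin m}
    (hi : ((A + Aᵀ) *ᵥ x₀) i ≠ 0) {v : ℕ} (hv : (((A + Aᵀ) *ᵥ x₀) i).natAbs < 2 ^ v) {p : ℕ}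
    (hp : p.Prime) {e : ℤ} (he : ¬ (p : ℤ) ∣ e) {l : Fin m → ℤ}
    (hl : ∀ j, (p : ℤ) ^ (2 * v) ∣ l j) {c : ℤ}
    (hc : (p : ℤ) ^ (2 * v) ∣ c + e ^ 3 * (x₀ ⬝ᵥ A *ᵥ x₀)) {k : ℕ} (hk : 2 * v ≤ k) :
    p ^ ((k - 2 * v) * (m - 1)) ≤ zeroCount (quadPoly (e • A) l c) (p ^ k) := by
  have hlx : (p : ℤ) ^ (2 * v) ∣ l ⬝ᵥ x₀ := Finset.dvd_sum fun j _ => (hl j).mul_right _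
  refine pow_le_zeroCount_of_dvd_sub_mul (x := e • x₀) (i := i) (e := e ^ 2) hp ?_ ?_
    (fun h => he ((Nat.prime_iff_prime_int.1 hp).dvd_of_dvd_pow h)) hi hv hk
  · have hval : eval (e • x₀) (quadPoly (e • A) l c) =
        c + e ^ 3 * (x₀ ⬝ᵥ A *ᵥ x₀) + e * (l ⬝ᵥ x₀) := by
      simp only [eval_quadPoly, smul_mulVec, mulVec_smul, dotProduct_smul, smul_dotProduct,
        smul_eq_mul]
      ring
    exact hval ▸ dvd_add hc (hlx.mul_left e)
  · have hval : eval (e • x₀) (pderiv i (quadPoly (e • A) l c)) - e ^ 2 * ((A + Aᵀ) *ᵥ x₀) i =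
        l i := by
      simp only [eval_pderiv_quadPoly, transpose_smul, ← smul_add, smul_mulVec, mulVec_smul,
        Pi.smul_apply, smul_eq_mul]
      ring
    exact hval ▸ (pow_dvd_pow _ (by lia)).trans (hl i)

lemma le_zeroCount_C_natCast_mul_quadPoly (hm : 0 < m) {D : ℤ}
    (hA : RankCertificate (A + Aᵀ) 5 D) {ℓ : ℕ} (hℓ : ℓ.Prime) (h4 : 4 ≤ ℓ)
    (hℓD : ¬ (ℓ : ℤ) ∣ D) (l : Fin m → ℤ) (c : ℤ) {k : ℕ} (hk : 1 ≤ k) :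
    (ℓ / 2 : ℝ) * (ℓ : ℝ) ^ (k * (m - 1)) ≤
      zeroCount (C (ℓ : ℤ) * quadPoly A l c) (ℓ ^ k) := by
  obtain ⟨k, rfl⟩ := Nat.exists_eq_add_of_le' hk
  obtain ⟨m, rfl⟩ := Nat.exists_eq_add_of_le' hm
  have : NeZero ℓ := ⟨hℓ.ne_zero⟩
  have hcount := le_zeroCount_quadPoly l c hm hA hℓ hℓD k
  have hrpow : (ℓ : ℝ) ^ (-(3 / 2) : ℝ) ≤ 1 / 4 := by
    exact_mod_cast rpow_neg_three_halves_le four_pos h4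
  rw [pow_succ' ℓ k, zeroCount_C_natCast_mul, Fintype.card_fin, Nat.cast_mul, Nat.cast_pow]
  calc (ℓ / 2 : ℝ) * (ℓ : ℝ) ^ ((k + 1) * m)
      = (ℓ : ℝ) ^ (m + 1) * ((1 - 2 * (1 / 4)) * (ℓ : ℝ) ^ (k * m)) := by ring
    _ ≤ (ℓ : ℝ) ^ (m + 1) * ((1 - 2 * (ℓ : ℝ) ^ (-(3 / 2) : ℝ)) * (ℓ : ℝ) ^ (k * m)) := by gcongr
    _ ≤ _ := by gcongr; exact hcount

variable {q : Fin m → MvPolynomial (Fin (s + 1)) ℤ} {R : MvPolynomial (Fin (s + 1)) ℤ}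

lemma exists_fibre_eq_C_mul (hq : ∀ j, (q j).IsHomogeneous 2) (hR : R.IsHomogeneous 3)
    (hq0 : ∀ j, restrictZero (q j) = 0) {y : Fin (s + 1) → ℤ} {a b c n : ℤ} (hy : y 0 = a * b)
    (hc : eval (Fin.tail y) (restrictZero R) = a * c) (hn : ∀ i, n ∣ y i) :
    ∃ (l : Fin m → ℤ) (c' : ℤ), (∀ j, n ∣ l j) ∧ n ∣ c' ∧
      fibre A q R y = C a * quadPoly (b • A) l (c' + c) := by
  choose q' hq' hqq' using fun j => exists_eq_X_zero_mul_add_rename (hq j)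
  obtain ⟨R', hR', hRR'⟩ := exists_eq_X_zero_mul_add_rename hR
  have hqy (j) : eval y (q j) = a * (b * eval y (q' j)) := by
    rw [eval_eq_mul_add_eval_restrictZero (hqq' j), hq0, map_zero, hy]
    ring
  have hRy : eval y R = a * (b * eval y R' + c) := by
    rw [eval_eq_mul_add_eval_restrictZero hRR', hc, hy]
    ring
  refine ⟨fun j => b * eval y (q' j), b * eval y R', fun j => ?_, ?_, ?_⟩
  · exact ((dvd_pow_self n one_ne_zero).trans (pow_dvd_eval_of_isHomogeneous (hq' j) hn)).mul_left b
  · exact ((dvd_pow_self n two_ne_zero).trans (pow_dvd_eval_of_isHomogeneous hR' hn)).mul_left b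
  · rw [C_mul_quadPoly, fibre, hRy, hy, smul_smul]
    exact congrArg₂ (quadPoly _) (funext hqy) rfl

lemma pow_le_zeroCount_fibre_familyPoint (hq : ∀ j, (q j).IsHomogeneous 2)
    (hR : R.IsHomogeneous 3) (hq0 : ∀ j, restrictZero (q j) = 0) {x₀ : Fin m → ℤ} {i : Fin m}
    (hi : ((A + Aᵀ) *ᵥ x₀) i ≠ 0) {v : ℕ} (hv : (((A + Aᵀ) *ᵥ x₀) i).natAbs < 2 ^ v)
    {u : Fin s → ℤ} {a N φ : ℤ} (hφ : x₀ ⬝ᵥ A *ᵥ x₀ = φ)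
    (ha : a = -(φ ^ 2 * N ^ 3 * eval u (restrictZero R))) {p ℓ : ℕ} (hp : p.Prime)
    (hpℓ : ¬ (p : ℤ) ∣ ℓ) (hpN : (p : ℤ) ^ (2 * v) ∣ N) (t : Fin s → ZMod ℓ) {k : ℕ}
    (hk : 2 * v ≤ k) : p ^ ((k - 2 * v) * (m - 1)) ≤
      zeroCount (fibre A q R (familyPoint a (a * N) (fun i => φ * N * u i) t)) (p ^ k) := by
  have : NeZero (p ^ k) := ⟨pow_ne_zero _ hp.ne_zero⟩
  set y := familyPoint a (a * N) (fun i => φ * N * u i) t with hy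
  obtain ⟨b, hb⟩ : ∃ b, eval (Fin.tail y) (restrictZero R) = a * (N * b - ℓ ^ 3 * φ) := by
    obtain ⟨b, hb⟩ := dvd_eval_sub_eval (restrictZero R) (n := a * N) (x := Fin.tail y)
      (y := fun i => (ℓ * φ * N) * u i)
      fun i => ⟨(t i).val, by simp only [hy, Fin.tail, familyPoint, Fin.cons_succ]; ring⟩
    rw [eval_const_mul_of_isHomogeneous (restrictZero_isHomogeneous hR)] at hb
    exact ⟨b, by linear_combination hb + ℓ ^ 3 * φ * ha⟩
  have hNy (i) : N ∣ y i := by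
    have hNa : N ∣ a := ha ▸ ((dvd_pow_self N three_ne_zero).mul_left _ |>.mul_right _).neg_right
    cases i using Fin.cases with
    | zero => exact hNa.mul_right _
    | succ i =>
      exact dvd_add ((dvd_mul_left N φ).mul_right _ |>.mul_left _) ((dvd_mul_left N a).mul_right _)
  obtain ⟨l, c', hl, hc', hfib⟩ := exists_fibre_eq_C_mul (A := A) hq hR hq0 (y := y) rfl hb hNy
  rw [hfib]
  refine (pow_le_zeroCount_quadPoly_smul hi hv hp hpℓ (fun j => hpN.trans (hl j)) ?_ hk).trans
    (zeroCount_le_zeroCount_C_mul _ a _)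
  rw [hφ, show c' + (N * b - ℓ ^ 3 * φ) + ℓ ^ 3 * φ = c' + N * b by ring]
  exact hpN.trans (dvd_add hc' (dvd_mul_right N b))

lemma le_zeroCount_fibre_familyPoint (hm : 0 < m) {D : ℤ} (hA : RankCertificate (A + Aᵀ) 5 D)
    (hq : ∀ j, (q j).IsHomogeneous 2) (hR : R.IsHomogeneous 3)
    (hq0 : ∀ j, restrictZero (q j) = 0) {ℓ : ℕ} (hℓ : ℓ.Prime) (h4 : 4 ≤ ℓ) {a L : ℤ}
    (haD : ¬ (ℓ : ℤ) ∣ a * D) (hL : ¬ (ℓ : ℤ) ∣ L) (w : Fin s → ℤ) {t : Fin s → ZMod ℓ}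
    (ht : aeval t (restrictZero R) = 0) {k : ℕ} (hk : 1 ≤ k) :
    (ℓ / 2 : ℝ) * (ℓ : ℝ) ^ (k * (m - 1)) ≤
      zeroCount (fibre A q R (familyPoint a L w t)) (ℓ ^ k) := by
  have : Fact ℓ.Prime := ⟨hℓ⟩
  set y := familyPoint a L w t
  have hy0 : y 0 = ℓ * a := mul_comm _ _
  obtain ⟨b, hb⟩ : (ℓ : ℤ) ∣ eval (Fin.tail y) (restrictZero R) := by
    rw [eval_restrictZero, dvd_eval_iff_of_dvd_sub R (y := y) fun i => ?_,
      natCast_dvd_eval_familyPoint_iff hR hL]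
    · exact ht
    · cases i using Fin.cases <;> simp [hy0, Fin.tail]
  obtain ⟨l, c', -, -, hfib⟩ :=
    exists_fibre_eq_C_mul (A := A) hq hR hq0 hy0 hb fun _ => one_dvd _
  rw [hfib]
  refine le_zeroCount_C_natCast_mul_quadPoly hm ?_ hℓ h4 haD l _ hk
  rw [transpose_smul, ← smul_add]
  exact hA.smul a

lemma RankCertificate.ne_zero {ι ι' k : Type*} [Fintype ι] [Fintype ι'] [CommRing k]
    {A : Matrix ι ι' k} {r : ℕ} {d : k} (h : RankCertificate A (r + 1) d) (hd : d ≠ 0) :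
    A ≠ 0 := by
  rintro rfl
  obtain ⟨W, V, hWV⟩ := h
  have : (0 : k) = d := by simpa using congrFun (congrFun hWV 0) 0
  exact hd this.symm

lemma exists_eval_ne_zero {σ k : Type*} [CommRing k] [IsDomain k] [Infinite k]
    {P : MvPolynomial σ k} (hP : P ≠ 0) : ∃ x, eval x P ≠ 0 := by
  by_contra! h
  exact hP (MvPolynomial.funext fun x => by rw [h x, map_zero])

theorem hasLargePrimeSections_of_card_zeros (hm : 0 < m) {D : ℤ} (hD : D ≠ 0)
    (hA : RankCertificate (A + Aᵀ) 5 D) (hq : ∀ j, (q j).IsHomogeneous 2)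
    (hR : R.IsHomogeneous 3) (hq0 : ∀ j, restrictZero (q j) = 0) (hR0 : restrictZero R ≠ 0)
    (hcard : ∀ᶠ ℓ : ℕ in Filter.atTop, ∀ _ : Fact ℓ.Prime, ℓ ^ s ≤
      2 * ℓ * (Finset.univ.filter fun t : Fin s → ZMod ℓ => aeval t (restrictZero R) = 0).card) :
    HasLargePrimeSections (fibreSingSeries A q R) := by
  obtain ⟨x₀, hφ, hx₀⟩ := exists_dotProduct_mulVec_ne_zero (hA.ne_zero hD)
  obtain ⟨i, hi⟩ := Function.ne_iff.1 hx₀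
  obtain ⟨u, hρ⟩ := exists_eval_ne_zero hR0
  set φ := x₀ ⬝ᵥ A *ᵥ x₀ with hφ'
  set ρ := eval u (restrictZero R)
  let v := (((A + Aᵀ) *ᵥ x₀) i).natAbs
  have hDφρ : D * φ * ρ ≠ 0 := mul_ne_zero (mul_ne_zero hD hφ) hρ
  obtain ⟨P₀, hP₀', hP₀⟩ := exists_sum_two_mul_rpow_le (D * φ * ρ).natAbs
  set N : ℤ := (P₀.factorial : ℤ) ^ (2 * v)
  have hN : N ≠ 0 := pow_ne_zero _ (by exact_mod_cast P₀.factorial_ne_zero)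
  set a := -(φ ^ 2 * N ^ 3 * ρ) with ha
  have ha0 : a ≠ 0 := neg_ne_zero.2 (mul_ne_zero (mul_ne_zero (by simpa) (by simpa)) hρ)
  have hprimes (p : ℕ) (hp : p.Prime) (h : (p : ℤ) ∣ a * D * N) : p ≤ P₀ := by
    have hpZ := Nat.prime_iff_prime_int.1 hp
    rw [show a * D * N = -(D * φ * ρ * (φ * N ^ 4)) by rw [ha]; ring, dvd_neg] at h
    obtain h | h := hpZ.dvd_or_dvd h
    · exact (le_natAbs_of_natCast_dvd hDφρ h).trans hP₀'
    obtain h | h := hpZ.dvd_or_dvd h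
    · exact (le_natAbs_of_natCast_dvd hDφρ ((h.mul_left D).mul_right ρ)).trans hP₀'
    · exact le_of_natCast_dvd_factorial_pow hp (hpZ.dvd_of_dvd_pow h)
  refine hasLargePrimeSections_fibreSingSeries (a := a) (L := a * N) (w := fun i => φ * N * u i)
    hm hA hP₀ (mul_ne_zero ha0 hD) (fun p hp h => hprimes p hp (h.mul_right N))
    (mul_ne_zero ha0 hN) (J := 2 * v) (c := 1 / 4) (by norm_num) ?_
  filter_upwards [hcard, Filter.eventually_gt_atTop P₀, Filter.eventually_ge_atTop 4]
    with ℓ hcard hℓP h4 hF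
  have hℓ := hF.out
  have hℓa : ¬ (ℓ : ℤ) ∣ a * D * N := fun h => hℓP.not_ge (hprimes ℓ hℓ h)
  refine ⟨Finset.univ.filter fun t => aeval t (restrictZero R) = 0, ℓ / 2, by positivity, ?_,
    fun t ht => ⟨fun p hp hpP k hk => ?_, fun k hk => ?_⟩⟩
  · have : ((ℓ ^ s : ℕ) : ℝ) ≤ _ := Nat.cast_le.2 (hcard hF)
    push_cast at this
    linarith
  · exact pow_le_zeroCount_fibre_familyPoint hq hR hq0 hi Nat.lt_two_pow_self hφ'.symm ha hp
      (not_natCast_dvd_natCast_of_lt hp hℓ (hpP.trans_lt hℓP))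
      (natCast_dvd_factorial_pow hp hpP _) t hk
  · exact le_zeroCount_fibre_familyPoint hm hA hq hR hq0 hℓ h4 (fun h => hℓa (h.mul_right N))
      (fun h => hℓa ((mul_right_comm a D N) ▸ h.mul_right D)) _ (Finset.mem_filter.1 ht).2 hk

end ConstantPart

/-! ### Ranks in pencils of matrices -/

section Pencil

variable {K ι ι' : Type*} [Field K] [Fintype ι'] {r : ℕ}

lemma rank_add_le (M N : Matrix ι ι' K) : (M + N).rank ≤ M.rank + N.rank := by
  unfold Matrix.rank
  rw [mulVecLin_add]
  exact (Submodule.finrank_mono (LinearMap.range_add_le _ _)).trans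
    (Submodule.finrank_add_le_finrank_add_finrank _ _)

lemma rank_smul_of_ne_zero {c : K} (hc : c ≠ 0) (M : Matrix ι ι' K) : (c • M).rank = M.rank :=
  rank_smul_of_mem_nonZeroDivisors M (mem_nonZeroDivisors_of_ne_zero hc)

lemma rank_sub_le (M N : Matrix ι ι' K) : (M - N).rank ≤ M.rank + N.rank := by
  rw [sub_eq_add_neg, ← neg_one_smul K N,
    ← rank_smul_of_ne_zero (neg_ne_zero.2 (one_ne_zero' K)) N]
  exact rank_add_le _ _

lemma eq_of_rank_add_smul_le {M N : Matrix ι ι' K} (hN : 2 * r < N.rank) {x y : K}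
    (hx : (M + x • N).rank ≤ r) (hy : (M + y • N).rank ≤ r) : x = y := by
  by_contra hne
  have hsub : (M + x • N) - (M + y • N) = (x - y) • N := by rw [sub_smul]; abel
  have := rank_sub_le (M + x • N) (M + y • N)
  rw [hsub, rank_smul_of_ne_zero (sub_ne_zero.2 hne)] at this
  omega

lemma rank_fromCols_replicateCol_of_notMem_range {r : ℕ} {B : Matrix ι (Fin r) K}
    (hB : r ≤ B.rank) {v : ι → K} (hv : v ∉ LinearMap.range B.mulVecLin) :
    r + 1 ≤ (fromCols B (replicateCol Unit v)).rank := by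
  have hrange : LinearMap.range (fromCols B (replicateCol Unit v)).mulVecLin =
      LinearMap.range B.mulVecLin ⊔ Submodule.span K {v} := by
    rw [range_mulVecLin, range_mulVecLin, ← Submodule.span_union]
    congr 1
    ext w
    simp [Matrix.col_def, funext_iff, eq_comm, or_comm]
  unfold Matrix.rank at hB ⊢
  rw [hrange]
  refine (Nat.succ_le_succ hB).trans (Submodule.finrank_lt_finrank_of_lt
    (lt_of_le_of_ne le_sup_left fun heq => hv ?_))
  rw [heq]
  exact Submodule.mem_sup_right (Submodule.mem_span_singleton_self v)

variable [Finite ι]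

lemma card_le_of_rank_add_smul_lt {M N : Matrix ι ι' K} (hr : r ≤ N.rank) {S : Finset K}
    (hS : ∀ x ∈ S, (M + x • N).rank < r) : S.card ≤ r := by
  classical
  cases nonempty_fintype ι
  obtain ⟨W, V, hWV⟩ := RankCertificate.of_le_rank hr
  have hpencil (x : K) : W * (M + x • N) * V = scalar _ x - -(W * M * V) := by
    rw [Matrix.mul_add, Matrix.add_mul, Matrix.mul_smul, Matrix.smul_mul, hWV, one_smul,
      smul_one_eq_diagonal, scalar_apply, sub_neg_eq_add, add_comm]
  calc S.card ≤ (-(W * M * V)).charpoly.natDegree := by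
        refine Polynomial.card_le_degree_of_subset_roots fun x hx => ?_
        rw [Polynomial.mem_roots (charpoly_monic _).ne_zero, Polynomial.IsRoot.def, eval_charpoly,
          ← hpencil]
        by_contra hdet
        refine (hS x hx).not_ge ?_
        calc r = (W * (M + x • N) * V).rank := by rw [rank_of_det_ne_zero hdet, Fintype.card_fin]
          _ ≤ _ := (rank_mul_le_left _ _).trans (rank_mul_le_right _ _)
    _ = r := by rw [charpoly_natDegree_eq_dim, Fintype.card_fin]

lemma exists_le_rank_add_smul [Infinite K] {N : Matrix ι ι' K} (hr : r ≤ N.rank)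
    (M : Matrix ι ι' K) : ∃ x : K, r ≤ (M + x • N).rank := by
  by_contra! hlt
  obtain ⟨S, hS⟩ := Infinite.exists_subset_card_eq K (r + 1)
  have := card_le_of_rank_add_smul_lt hr (S := S) fun x _ => hlt x
  omega

/-- The first-order condition for `A` to have maximal rank in the pencil spanned by `A` and `M`:
`M` maps the kernel of `A` into its image. -/
lemma mulVec_mem_range_of_rank_add_smul_le [Infinite K] {A M : Matrix ι ι' K} {v : ι' → K}
    (hv : A *ᵥ v = 0) (hmax : ∀ x : K, (M + x • A).rank ≤ A.rank) :
    M *ᵥ v ∈ LinearMap.range A.mulVecLin := by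
  classical
  cases nonempty_fintype ι
  by_contra hM
  obtain ⟨W, V, hWV⟩ := RankCertificate.of_le_rank (le_refl A.rank)
  have hAV : A.rank ≤ (A * V).rank :=
    RankCertificate.le_rank ⟨W, 1, by rw [Matrix.mul_one, ← Matrix.mul_assoc, hWV]⟩ one_ne_zero
  have hMAV : M *ᵥ v ∉ LinearMap.range (A * V).mulVecLin := by
    rw [mulVecLin_mul]
    exact fun h => hM (LinearMap.range_comp_le_range _ _ h)
  obtain ⟨x, hx⟩ := exists_le_rank_add_smul
    (rank_fromCols_replicateCol_of_notMem_range hAV hMAV) (fromCols (M * V) 0)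
  -- As `A v = 0`, the matrix `M + x A` maps `x v` to `x M v`.
  have hfactor : (M + x • A) * fromCols V (replicateCol Unit (x • v)) =
      fromCols (M * V) 0 + x • fromCols (A * V) (replicateCol Unit (M *ᵥ v)) := by
    have hcol : (M + x • A) *ᵥ (x • v) = x • M *ᵥ v := by
      rw [mulVec_smul, add_mulVec, smul_mulVec, hv, smul_zero, add_zero]
    rw [mul_fromCols, ← replicateCol_mulVec, hcol, Matrix.add_mul, Matrix.smul_mul]
    ext i (j | j) <;> simp
  rw [← hfactor] at hx
  exact absurd (hx.trans (rank_mul_le_left _ _)) (by simpa using hmax x)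

end Pencil

lemma exists_eq_add_mul_of_finite_slopes {K : Type*} [Field K] [Infinite K] {φ : K → K} {F : Set K}
    (hF : F.Finite) (h : ∀ x y, x ≠ y → slope φ x y ∈ F) : ∃ σ, ∀ y, φ y = φ 0 + σ * y := by
  have hline {x σ : K} (hx : x ≠ 0) : slope φ 0 x = σ ↔ φ x = φ 0 + σ * x := by
    rw [slope_def_field, sub_zero, div_eq_iff hx, sub_eq_iff_eq_add']
  obtain ⟨σ, hσ⟩ : ∃ σ, {x : K | x ≠ 0 ∧ φ x = φ 0 + σ * x}.Infinite := by
    by_contra! hfin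
    refine (Set.finite_singleton (0 : K)).infinite_compl ((hF.biUnion fun σ _ => hfin σ).subset ?_)
    exact fun x hx => Set.mem_biUnion (h 0 x (Ne.symm hx)) ⟨hx, (hline hx).1 rfl⟩
  refine ⟨σ, fun y => ?_⟩
  by_contra hy
  -- The slopes from `y` to infinitely many points on a line missing `(y, φ y)` are distinct.
  refine Set.infinite_of_injOn_mapsTo (f := slope φ y) (fun x hx x' hx' heq => ?_)
    (fun x hx => h y x ?_) hσ hF
  · have hne {x : K} (hx : φ x = φ 0 + σ * x) : x - y ≠ 0 :=
      sub_ne_zero.2 fun hxy => hy (hxy ▸ hx)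
    rw [slope_def_field, slope_def_field, div_eq_div_iff (hne hx.2) (hne hx'.2), hx.2, hx'.2] at heq
    have hprod : (φ y - (φ 0 + σ * y)) * (x - x') = 0 := by linear_combination heq
    exact sub_eq_zero.1 ((mul_eq_zero.1 hprod).resolve_left (sub_ne_zero.2 hy))
  · exact fun hxy => hy (hxy ▸ hx.2)

section LinearPencil

variable {K V ι ι' : Type*} [Field K] [AddCommGroup V] [Module K V] [Fintype ι']
  {r : ℕ} {H : V →ₗ[K] Matrix ι ι' K} {e : V} {θ : V → K}

lemma map_smul_of_forall_rank_add_smul_le (he : 2 * r < (H e).rank)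
    (hθ : ∀ f, (H (f + θ f • e)).rank ≤ r) (c : K) (f : V) : θ (c • f) = c * θ f := by
  refine eq_of_rank_add_smul_le he (M := H (c • f)) (by simpa using hθ (c • f)) ?_
  rcases eq_or_ne c 0 with rfl | hc
  · simp
  · rw [← map_smul, ← map_add, mul_smul, ← smul_add, map_smul, rank_smul_of_ne_zero hc]
    exact hθ f

variable [Finite ι]

lemma exists_affine_of_forall_rank_add_smul_le [Infinite K] (he : 2 * r < (H e).rank)
    (hθ : ∀ f, (H (f + θ f • e)).rank ≤ r) (f g : V) :
    ∃ σ, ∀ x : K, θ (f + x • g) = θ f + σ * x := by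
  have hfin : {τ : K | (H g + τ • H e).rank < 2 * r + 1}.Finite := by
    by_contra hinf
    obtain ⟨S, hS, hcard⟩ := Set.Infinite.exists_subset_card_eq hinf (2 * r + 2)
    have := card_le_of_rank_add_smul_lt he fun x hx => hS hx
    omega
  let φ (x : K) : K := θ (f + x • g)
  suffices hslope : ∀ x y, x ≠ y → slope φ x y ∈ {τ : K | (H g + τ • H e).rank < 2 * r + 1} by
    obtain ⟨σ, hσ⟩ := exists_eq_add_mul_of_finite_slopes hfin hslope
    exact ⟨σ, by simpa [φ] using hσ⟩
  intro x y hxy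
  have hyx : y - x ≠ 0 := sub_ne_zero.2 hxy.symm
  have hslope : (y - x) * slope φ x y = φ y - φ x := by
    rw [slope_def_field, mul_div_cancel₀ _ hyx]
  have hsub : H (f + y • g + φ y • e) - H (f + x • g + φ x • e) =
      (y - x) • (H g + slope φ x y • H e) := by
    rw [smul_add, smul_smul, hslope]
    simp only [map_add, map_smul, sub_smul]
    abel
  have hrank := rank_sub_le (H (f + y • g + φ y • e)) (H (f + x • g + φ x • e))
  rw [hsub, rank_smul_of_ne_zero hyx] at hrank
  have hx : (H (f + x • g + φ x • e)).rank ≤ r := hθ (f + x • g)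
  have hy : (H (f + y • g + φ y • e)).rank ≤ r := hθ (f + y • g)
  exact Nat.lt_succ_of_le (by omega)

lemma exists_dual_forall_rank_le [CharZero K] (he : 2 * r < (H e).rank)
    (hH : ∀ f, ∃ x : K, (H (f + x • e)).rank ≤ r) :
    ∃ Θ : V →ₗ[K] K, ∀ f, (H (f + Θ f • e)).rank ≤ r := by
  choose θ hθ using hH
  have hsmul := map_smul_of_forall_rank_add_smul_le he hθ
  -- Evaluate an affine function at the two ends of a segment and at its midpoint.
  have hadd (f g : V) : θ (f + g) = θ f + θ g := by
    obtain ⟨σ, hσ⟩ := exists_affine_of_forall_rank_add_smul_le he hθ f (g - f)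
    have hend := hσ 1
    have hmid := hσ 2⁻¹
    rw [show f + (2 : K)⁻¹ • (g - f) = (2 : K)⁻¹ • (f + g) by module, hsmul] at hmid
    rw [one_smul, add_sub_cancel] at hend
    linear_combination 2 * hmid - hend
  exact ⟨⟨⟨θ, hadd⟩, hsmul⟩, hθ⟩

end LinearPencil

/-! ### The Hessian of a cubic form -/

section Hessian

variable {σ k : Type*} [CommRing k]

lemma pderiv_pderiv_comm (i j : σ) (P : MvPolynomial σ k) :
    pderiv i (pderiv j P) = pderiv j (pderiv i P) := by
  classical
  have hcomm : ⁅pderiv (R := k) i, pderiv (R := k) j⁆ = 0 := derivation_ext fun l => by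
    simp [Derivation.commutator_apply, pderiv_X, Pi.single_apply, apply_ite]
  rw [← sub_eq_zero, ← Derivation.commutator_apply, hcomm, Derivation.zero_apply]

variable [Fintype σ]

/-- The Hessian matrix of a cubic form `P`, as a linear function of the point at which it is
evaluated. Its entries are read off from the third derivatives of `P` at the origin, so that it is
linear by construction. -/
noncomputable def hessian (P : MvPolynomial σ k) : (σ → k) →ₗ[k] Matrix σ σ k where
  toFun u := Matrix.of fun j l => ∑ i, constantCoeff (pderiv i (pderiv j (pderiv l P))) * u i
  map_add' u v := by ext; simp [mul_add, Finset.sum_add_distrib]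
  map_smul' c u := by ext; simp [Finset.mul_sum, mul_left_comm]

variable {P : MvPolynomial σ k}

lemma hessian_map {k' : Type*} [CommRing k'] (φ : k →+* k') (u : σ → k) :
    (hessian P u).map φ = hessian (MvPolynomial.map φ P) (φ ∘ u) := by
  ext j l
  simp [hessian, pderiv_map, constantCoeff_map]

lemma hessian_isSymm (u : σ → k) : (hessian P u).IsSymm := by
  ext j l
  simp [hessian, pderiv_pderiv_comm j l]

lemma hessian_mulVec_comm (u v : σ → k) : hessian P u *ᵥ v = hessian P v *ᵥ u := by
  ext j
  simp only [hessian, LinearMap.coe_mk, AddHom.coe_mk, mulVec, dotProduct, of_apply,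
    Finset.sum_mul]
  rw [Finset.sum_comm]
  refine Finset.sum_congr rfl fun i _ => Finset.sum_congr rfl fun l _ => ?_
  rw [pderiv_pderiv_comm j l, pderiv_pderiv_comm i l, pderiv_pderiv_comm j i, mul_right_comm]

lemma dotProduct_eval_pderiv {n : ℕ} (hP : P.IsHomogeneous n) (u : σ → k) :
    (u ⬝ᵥ fun i => eval u (pderiv i P)) = n * eval u P := by
  simpa [dotProduct] using congrArg (eval u) hP.sum_X_mul_pderiv

lemma hessian_apply (hP : P.IsHomogeneous 3) (u : σ → k) (j l : σ) :
    hessian P u j l = eval u (pderiv j (pderiv l P)) := by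
  have hlin : (pderiv j (pderiv l P)).IsHomogeneous 1 := hP.pderiv.pderiv
  have hconst (i : σ) : eval u (pderiv i (pderiv j (pderiv l P))) =
      constantCoeff (pderiv i (pderiv j (pderiv l P))) := by
    obtain ⟨c, hc⟩ : ∃ c, C c = pderiv i (pderiv j (pderiv l P)) :=
      ⟨_, (totalDegree_eq_zero_iff_eq_C.1
        ((totalDegree_zero_iff_isHomogeneous σ).2 hlin.pderiv)).symm⟩
    simp [← hc]
  have heuler := dotProduct_eval_pderiv hlin u
  simp only [hconst, Nat.cast_one, one_mul] at heuler
  rw [← heuler, dotProduct_comm]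
  rfl

lemma dotProduct_hessian_mulVec_self (hP : P.IsHomogeneous 3) (u : σ → k) :
    u ⬝ᵥ hessian P u *ᵥ u = 6 * eval u P := by
  have hmulVec : hessian P u *ᵥ u = fun j => 2 * eval u (pderiv j P) := by
    ext j
    have hquad : (pderiv j P).IsHomogeneous 2 := hP.pderiv
    rw [mulVec, dotProduct_comm]
    simp only [hessian_apply hP, pderiv_pderiv_comm j]
    exact_mod_cast dotProduct_eval_pderiv hquad u
  calc u ⬝ᵥ hessian P u *ᵥ u = 2 * (u ⬝ᵥ fun j => eval u (pderiv j P)) := by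
        rw [hmulVec]
        exact dotProduct_smul (2 : k) u _
    _ = _ := by
        rw [dotProduct_eval_pderiv hP]
        push_cast
        ring

lemma dotProduct_hessian_mulVec_comm (u v w : σ → k) :
    u ⬝ᵥ hessian P v *ᵥ w = w ⬝ᵥ hessian P v *ᵥ u := by
  rw [dotProduct_mulVec, ← mulVec_transpose, (hessian_isSymm v).eq, dotProduct_comm]

lemma six_mul_eval_add (hP : P.IsHomogeneous 3) (x u : σ → k) :
    6 * eval (x + u) P =
      6 * (eval x P + eval u P) + 3 * (x ⬝ᵥ hessian P u *ᵥ x + x ⬝ᵥ hessian P u *ᵥ u) := by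
  have hxxu : u ⬝ᵥ hessian P x *ᵥ x = x ⬝ᵥ hessian P u *ᵥ x := by
    rw [dotProduct_hessian_mulVec_comm, hessian_mulVec_comm]
  rw [mul_add, ← dotProduct_hessian_mulVec_self hP, ← dotProduct_hessian_mulVec_self hP,
    ← dotProduct_hessian_mulVec_self hP]
  simp only [map_add, add_mulVec, mulVec_add, add_dotProduct, dotProduct_add,
    hessian_mulVec_comm x u, hxxu, dotProduct_hessian_mulVec_comm u u x]
  ring

lemma eval_add_add_sub [IsDomain k] (h6 : (6 : k) ≠ 0) (hP : P.IsHomogeneous 3) (b u v : σ → k) :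
    eval (b + v + u) P - eval (b + v) P - (eval (b + u) P - eval b P) =
      b ⬝ᵥ hessian P u *ᵥ v + (eval (v + u) P - eval v P - eval u P) := by
  refine mul_left_cancel₀ h6 ?_
  have hcross : (b + v) ⬝ᵥ hessian P u *ᵥ (b + v) =
      b ⬝ᵥ hessian P u *ᵥ b + 2 * (b ⬝ᵥ hessian P u *ᵥ v) + v ⬝ᵥ hessian P u *ᵥ v := by
    simp only [mulVec_add, add_dotProduct, dotProduct_add, dotProduct_hessian_mulVec_comm v u b]
    ring
  linear_combination six_mul_eval_add hP (b + v) u - six_mul_eval_add hP b u -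
    six_mul_eval_add hP v u + 3 * hcross + 3 * add_dotProduct b v (hessian P u *ᵥ u)

end Hessian

section Davenport

variable {K ι : Type*} [Field K] [Fintype ι] {H : (ι → K) →ₗ[K] Matrix ι ι K} {d : ℕ}

/-- Davenport's lemma; `L` is the kernel of `H z` in `T`, where `z ∈ T` has maximal rank. -/
lemma exists_finrank_le_add_of_rank_le [Infinite K] (hsymm : ∀ u, (H u).IsSymm)
    {T : Submodule K (ι → K)} (hT : ∀ u ∈ T, (H u).rank ≤ d) :
    ∃ L : Submodule K (ι → K), Module.finrank K T ≤ Module.finrank K L + d ∧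
      ∀ v ∈ L, v ⬝ᵥ H v *ᵥ v = 0 := by
  obtain ⟨z, hz⟩ : ∃ z : T, ∀ w : T, (H w).rank ≤ (H z).rank := by
    obtain ⟨_, ⟨z, rfl⟩, hz⟩ := Set.Finite.exists_maximal (s := Set.range fun w : T => (H w).rank)
      ((Set.finite_Iic d).subset (Set.range_subset_iff.2 fun w => hT w w.2)) ⟨_, 0, rfl⟩
    exact ⟨z, fun w => le_of_not_gt fun h => h.not_ge (hz ⟨w, rfl⟩ h.le)⟩
  refine ⟨T ⊓ LinearMap.ker (H z).mulVecLin, ?_, fun v ⟨hvT, hvz⟩ => ?_⟩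
  · have := Submodule.finrank_sup_add_finrank_inf_eq T (LinearMap.ker (H z).mulVecLin)
    have := LinearMap.finrank_range_add_finrank_ker (H z).mulVecLin
    have : Module.finrank K (LinearMap.range (H z).mulVecLin) ≤ d := hT z z.2
    have := Submodule.finrank_le (T ⊔ LinearMap.ker (H z).mulVecLin)
    omega
  · have hzv : H z *ᵥ v = 0 := hvz
    obtain ⟨x, hx⟩ := mulVec_mem_range_of_rank_add_smul_le (M := H v) hzv fun c => by
      simpa using hz ⟨v + c • z, T.add_mem hvT (T.smul_mem c z.2)⟩
    rw [← hx, mulVecLin_apply, dotProduct_mulVec, ← mulVec_transpose, (hsymm z).eq, hzv,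
      zero_dotProduct]

end Davenport

/-! ### The `h`-invariant -/

section HInvariant

variable {K σ : Type*} [Field K]

/-- The `h`-invariant of the cubic form `P` is at most `k`: there is a decomposition
`P = ∑ i, L i * Q i` into `k` products of a linear and a quadratic form. -/
def HInvariantLE (P : MvPolynomial σ K) (k : ℕ) : Prop :=
  ∃ L Q : Fin k → MvPolynomial σ K, (∀ i, (L i).IsHomogeneous 1) ∧
    (∀ i, (Q i).IsHomogeneous 2) ∧ P = ∑ i, L i * Q i

lemma homogeneousComponent_add_mul (m : ℕ) (P : MvPolynomial σ K) {n : ℕ} {Q : MvPolynomial σ K}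
    (hQ : Q.IsHomogeneous n) :
    homogeneousComponent (m + n) (P * Q) = homogeneousComponent m P * Q := by
  let := gradedAlgebra (σ := σ) (R := K)
  simpa only [DirectSum.decompose, Equiv.coe_fn_mk, decomposition.decompose'_apply] using
    DirectSum.coe_decompose_mul_add_of_right_mem (homogeneousSubmodule σ K) (a := P) (i := m) hQ

lemma hInvariantLE_of_mem_span {P : MvPolynomial σ K} (hP : P.IsHomogeneous 3) {k : ℕ}
    {L : Fin k → MvPolynomial σ K} (hL : ∀ i, (L i).IsHomogeneous 1)
    (hPL : P ∈ Ideal.span (Set.range L)) : HInvariantLE P k := by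
  obtain ⟨c, rfl⟩ := Ideal.mem_span_range_iff_exists_fun.1 hPL
  refine ⟨L, fun i => homogeneousComponent 2 (c i), hL,
    fun i => homogeneousComponent_isHomogeneous 2 (c i), ?_⟩
  have hself := homogeneousComponent_of_mem (m := 3) hP
  rw [if_pos rfl, map_sum] at hself
  rw [← hself]
  exact Finset.sum_congr rfl fun i _ => by
    rw [homogeneousComponent_add_mul 2 (c i) (hL i), mul_comm]

variable [Fintype σ]

lemma exists_sub_mulVec_mem_of_le_finrank_add [DecidableEq σ] {L : Submodule K (σ → K)} {k : ℕ}
    (hL : Fintype.card σ ≤ Module.finrank K L + k) :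
    ∃ (W : Matrix σ (Fin k) K) (Λ : Matrix (Fin k) σ K), ∀ x, (1 - W * Λ) *ᵥ x ∈ L := by
  have hquot : Module.finrank K ((σ → K) ⧸ L) ≤ Module.finrank K (Fin k → K) := by
    have := Submodule.finrank_quotient_add_finrank L
    simp only [Module.finrank_fintype_fun_eq_card, Fintype.card_fin] at this ⊢
    omega
  obtain ⟨i, hi⟩ := finrank_le_iff_exists_linearMap.1 hquot
  obtain ⟨ρ, hρ⟩ := LinearMap.exists_leftInverse_of_injective i (LinearMap.ker_eq_bot.2 hi)
  obtain ⟨s, hs⟩ := LinearMap.exists_rightInverse_of_surjective L.mkQ (Submodule.range_mkQ L)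
  refine ⟨LinearMap.toMatrix' (s ∘ₗ ρ), LinearMap.toMatrix' (i ∘ₗ L.mkQ), fun x => ?_⟩
  rw [← Submodule.Quotient.mk_eq_zero L, ← Submodule.mkQ_apply, sub_mulVec, one_mulVec,
    ← mulVec_mulVec, LinearMap.toMatrix'_mulVec, LinearMap.toMatrix'_mulVec, map_sub, sub_eq_zero]
  have hρi := LinearMap.congr_fun hρ (L.mkQ x)
  have hsx := LinearMap.congr_fun hs (L.mkQ x)
  simp only [LinearMap.comp_apply, LinearMap.id_apply] at hρi hsx ⊢
  rw [hρi, hsx]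

lemma hInvariantLE_of_eval_eq_zero [Infinite K] {P : MvPolynomial σ K} (hP : P.IsHomogeneous 3)
    {k : ℕ} {L : Submodule K (σ → K)} (hL : Fintype.card σ ≤ Module.finrank K L + k)
    (hPL : ∀ v ∈ L, eval v P = 0) : HInvariantLE P k := by
  classical
  obtain ⟨W, Λ, hWΛ⟩ := exists_sub_mulVec_mem_of_le_finrank_add hL
  have hzero : bind₁ (1 - W * Λ).toMvPolynomial P = 0 := MvPolynomial.funext fun x => by
    rw [← aeval_eq_eval, aeval_bind₁]
    simp only [aeval_eq_eval, toMvPolynomial_eval_eq_apply]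
    simpa using hPL _ (hWΛ x)
  refine hInvariantLE_of_mem_span hP Λ.toMvPolynomial_isHomogeneous ?_
  set I := Ideal.span (Set.range Λ.toMvPolynomial)
  have hmem (j : σ) : (W * Λ).toMvPolynomial j ∈ I := by
    rw [toMvPolynomial_mul, Matrix.toMvPolynomial, map_sum]
    refine I.sum_mem fun i _ => ?_
    rw [← C_mul_X_eq_monomial, map_mul, bind₁_X_right]
    exact I.mul_mem_left _ (Ideal.subset_span ⟨i, rfl⟩)
  have hX (j : σ) : (1 - W * Λ).toMvPolynomial j + (W * Λ).toMvPolynomial j = X j := by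
    rw [← Pi.add_apply, ← toMvPolynomial_add, sub_add_cancel, toMvPolynomial_one]
  have hmk : (Ideal.Quotient.mkₐ K I).comp (bind₁ (1 - W * Λ).toMvPolynomial) =
      Ideal.Quotient.mkₐ K I := algHom_ext fun j => by
    rw [AlgHom.comp_apply, bind₁_X_right, ← hX j, map_add, Ideal.Quotient.mkₐ_eq_mk,
      Ideal.Quotient.eq_zero_iff_mem.2 (hmem j), add_zero]
  rw [← Ideal.Quotient.eq_zero_iff_mem, ← Ideal.Quotient.mkₐ_eq_mk K, ← hmk, AlgHom.comp_apply,
    hzero, map_zero]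

end HInvariant

section HessianRank

variable {K σ : Type*} [Field K] [CharZero K] [Fintype σ] {P : MvPolynomial σ K} {r d : ℕ}

lemma hInvariantLE_of_forall_rank_hessian_le (hP : P.IsHomogeneous 3)
    {T : Submodule K (σ → K)} (hT : ∀ u ∈ T, (hessian P u).rank ≤ r)
    (hd : Fintype.card σ + r ≤ Module.finrank K T + d) : HInvariantLE P d := by
  obtain ⟨L, hTL, hL⟩ := exists_finrank_le_add_of_rank_le hessian_isSymm hT
  refine hInvariantLE_of_eval_eq_zero hP (L := L) (by lia) fun v hv => ?_
  simpa [dotProduct_hessian_mulVec_self hP] using hL v hv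

lemma exists_lt_rank_hessian (hP : P.IsHomogeneous 3) (h : ¬HInvariantLE P r) :
    ∃ e, r < (hessian P e).rank := by
  by_contra! hr
  exact h (hInvariantLE_of_forall_rank_hessian_le hP (T := ⊤) (fun u _ => hr u) (by simp))

lemma exists_forall_lt_rank_hessian_add_smul (hP : P.IsHomogeneous 3) (h : ¬HInvariantLE P d)
    (hrd : r < d) {e : σ → K} (he : 2 * r < (hessian P e).rank) :
    ∃ f, ∀ θ : K, r < (hessian P (f + θ • e)).rank := by
  by_contra! hr
  obtain ⟨Θ, hΘ⟩ := exists_dual_forall_rank_le he hr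
  refine h (hInvariantLE_of_forall_rank_hessian_le (r := r) hP (T := LinearMap.ker Θ)
    (fun u hu => ?_) ?_)
  · simpa [LinearMap.mem_ker.1 hu] using hΘ u
  · have := LinearMap.finrank_range_add_finrank_ker Θ
    have := Submodule.finrank_le (LinearMap.range Θ)
    simp only [Module.finrank_fintype_fun_eq_card, Module.finrank_self] at *
    lia

end HessianRank

/-! ### Rationality of eigenvalues of large multiplicity -/

section Eigenvalue

variable {F K ι : Type*} [Field F] [Field K] [Algebra F K] [Fintype ι]

lemma card_le_rank_sub_smul_add_rootMultiplicity [DecidableEq ι] (N : Matrix ι ι K) (β : K) :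
    Fintype.card ι ≤ (N - β • (1 : Matrix ι ι K)).rank + N.charpoly.rootMultiplicity β := by
  have hker : LinearMap.ker (N - β • (1 : Matrix ι ι K)).mulVecLin =
      Module.End.eigenspace (toLin' N) β := by
    ext v
    rw [Module.End.mem_eigenspace_iff, LinearMap.mem_ker, mulVecLin_apply, sub_mulVec,
      smul_mulVec, one_mulVec, sub_eq_zero, toLin'_apply]
  have hmult := LinearMap.finrank_eigenspace_le (toLin' N) β
  have hdim := LinearMap.finrank_range_add_finrank_ker (N - β • (1 : Matrix ι ι K)).mulVecLin
  rw [charpoly_toLin', ← hker] at hmult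
  rw [Module.finrank_fintype_fun_eq_card] at hdim
  exact hdim.symm.trans_le (Nat.add_le_add_left hmult _)

lemma rootMultiplicity_mul_natDegree_minpoly_le [PerfectField F] {P : Polynomial F} (hP : P ≠ 0)
    {β : K} (hβ : IsIntegral F β) :
    (P.map (algebraMap F K)).rootMultiplicity β * (minpoly F β).natDegree ≤ P.natDegree := by
  classical
  have hirr := minpoly.irreducible hβ
  obtain ⟨c, hc, hndvd⟩ :=
    (FiniteMultiplicity.of_not_isUnit hirr.not_isUnit hP).exists_eq_pow_mul_and_not_dvd
  generalize multiplicity (minpoly F β) P = k at hc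
  have hc0 : c ≠ 0 := by
    rintro rfl
    simp at hndvd
  have hpow : minpoly F β ^ k ≠ 0 := pow_ne_zero _ hirr.ne_zero
  have hcβ : (c.map (algebraMap F K)).rootMultiplicity β = 0 := by
    refine Polynomial.rootMultiplicity_eq_zero fun h => hndvd (minpoly.dvd F β ?_)
    rwa [Polynomial.aeval_def, ← Polynomial.eval_map]
  have hroot : ((minpoly F β).map (algebraMap F K)).rootMultiplicity β ≤ 1 :=
    Polynomial.rootMultiplicity_le_one_of_separable
      (Polynomial.Separable.map (PerfectField.separable_of_irreducible hirr)) β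
  have hmult : (P.map (algebraMap F K)).rootMultiplicity β ≤ k := by
    rw [hc, Polynomial.map_mul, Polynomial.rootMultiplicity_mul (mul_ne_zero
      (Polynomial.map_ne_zero hpow) (Polynomial.map_ne_zero hc0)), hcβ, add_zero,
      Polynomial.map_pow, ← Polynomial.count_roots, Polynomial.roots_pow, Multiset.count_nsmul,
      Polynomial.count_roots]
    exact (Nat.mul_le_mul_left k hroot).trans_eq (mul_one k)
  calc _ ≤ k * (minpoly F β).natDegree := Nat.mul_le_mul_right _ hmult
    _ ≤ (minpoly F β ^ k * c).natDegree := by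
        rw [Polynomial.natDegree_mul hpow hc0, Polynomial.natDegree_pow]
        exact Nat.le_add_right _ _
    _ = P.natDegree := by rw [← hc]

/-- The multiplicity of `β` exceeds half the degree of the characteristic polynomial, so it has no
room for a second conjugate of `β`. -/
lemma mem_range_algebraMap_of_rank_sub_smul_lt [PerfectField F] [DecidableEq ι]
    (N : Matrix ι ι F) {β : K}
    (h : 2 * (N.map (algebraMap F K) - β • (1 : Matrix ι ι K)).rank < Fintype.card ι) :
    β ∈ (algebraMap F K).range := by
  have hmult := card_le_rank_sub_smul_add_rootMultiplicity (N.map (algebraMap F K)) β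
  rw [charpoly_map] at hmult
  have hβ : IsIntegral F β := by
    refine ⟨N.charpoly, charpoly_monic N, ?_⟩
    rw [← Polynomial.eval_map]
    exact (Polynomial.rootMultiplicity_pos'.1 (by lia)).2
  have hdeg := rootMultiplicity_mul_natDegree_minpoly_le (charpoly_monic N).ne_zero hβ
  rw [charpoly_natDegree_eq_dim] at hdeg
  have := minpoly.natDegree_pos hβ
  refine minpoly.mem_range_of_degree_eq_one F β ?_
  rw [Polynomial.degree_eq_natDegree (minpoly.ne_zero hβ)]
  exact_mod_cast (by nlinarith : (minpoly F β).natDegree = 1)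

end Eigenvalue

lemma lt_rank_map_add_smul_map {F K ι ι' : Type*} [Field F] [PerfectField F] [Field K]
    [Algebra F K] [Finite ι] [Fintype ι'] {r : ℕ} {M N : Matrix ι ι' F}
    (hN : 2 * r < N.rank) (hMN : ∀ θ : F, r < (M + θ • N).rank) (α : K) :
    r < (M.map (algebraMap F K) + α • N.map (algebraMap F K)).rank := by
  cases nonempty_fintype ι
  by_contra! hα
  obtain ⟨W, V, hWV⟩ := RankCertificate.of_le_rank hN.nat_succ_le
  rw [one_smul] at hWV
  set φ := algebraMap F K
  have hpencil : (-(W * M * V)).map φ - α • (1 : Matrix _ _ K) =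
      W.map φ * -(M.map φ + α • N.map φ) * V.map φ := by
    rw [← Matrix.map_one φ (map_zero φ) (map_one φ), ← hWV]
    simp only [Matrix.map_mul, Matrix.mul_neg, Matrix.neg_mul, Matrix.mul_add, Matrix.add_mul,
      Matrix.mul_smul, Matrix.smul_mul, neg_add, sub_eq_add_neg]
    rw [Matrix.map_neg _ (map_neg φ), Matrix.map_mul, Matrix.map_mul]
  obtain ⟨b, rfl⟩ := mem_range_algebraMap_of_rank_sub_smul_lt (-(W * M * V)) (β := α) <| by
    have hrank : (W.map φ * -(M.map φ + α • N.map φ) * V.map φ).rank ≤ r := by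
      refine ((rank_mul_le_left _ _).trans (rank_mul_le_right _ _)).trans ?_
      rwa [← neg_one_smul K, rank_smul_of_ne_zero (neg_ne_zero.2 one_ne_zero)]
    rw [hpencil, Fintype.card_fin]
    lia
  have hb := ((RankCertificate.of_le_rank (hMN b).nat_succ_le).map φ).le_rank (by simp)
  rw [Matrix.map_add _ (map_add φ), Matrix.map_smulₛₗ _ φ _ fun _ => map_mul φ _ _] at hb
  exact hα.not_gt hb

/-! ### Reducing lower bounds for ranks modulo primes -/

section MinorIdeal

variable {A ι ι' : Type*} [CommRing A] [Fintype ι] [Fintype ι'] {M : Matrix ι ι' A} {r : ℕ}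

/-- The ideal generated by the determinants `det (W * M * V)` of the `r × r` matrices factoring
through `M`; by the Cauchy–Binet formula this is the ideal of the `r × r` minors of `M`. -/
def minorIdeal (M : Matrix ι ι' A) (r : ℕ) : Ideal A :=
  Ideal.span (Set.range fun WV : Matrix (Fin r) ι A × Matrix ι' (Fin r) A =>
    (WV.1 * M * WV.2).det)

lemma minorIdeal_le_ker_of_rank_map_lt {K : Type*} [Field K] {φ : A →+* K}
    (h : (M.map φ).rank < r) : minorIdeal M r ≤ RingHom.ker φ := by
  rw [minorIdeal, Ideal.span_le]
  rintro _ ⟨⟨W, V⟩, rfl⟩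
  rw [SetLike.mem_coe, RingHom.mem_ker, RingHom.map_det, RingHom.mapMatrix_apply, Matrix.map_mul,
    Matrix.map_mul]
  by_contra hdet
  have hrank := rank_of_isUnit _ ((isUnit_iff_isUnit_det _).2 (isUnit_iff_ne_zero.2 hdet))
  rw [Fintype.card_fin] at hrank
  exact h.not_ge (hrank.symm.le.trans ((rank_mul_le_left _ _).trans (rank_mul_le_right _ _)))

lemma not_minorIdeal_le_of_le_rank {P : Ideal A} [P.IsPrime]
    (h : r ≤ (M.map (algebraMap A P.ResidueField)).rank) : ¬minorIdeal M r ≤ P := by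
  intro hP
  have hcomp : M.map (algebraMap A P.ResidueField) =
      (M.map (Ideal.Quotient.mk P)).map (algebraMap (A ⧸ P) P.ResidueField) := by
    rw [Matrix.map_map]
    exact congrArg M.map (funext fun a => IsScalarTower.algebraMap_apply A (A ⧸ P) _ a)
  rw [hcomp] at h
  obtain ⟨D, hD, W, V, hWV⟩ := exists_rankCertificate_of_le_rank_map h
  obtain ⟨W, rfl⟩ : ∃ W' : Matrix _ _ A, W'.map (Ideal.Quotient.mk P) = W :=
    Ideal.Quotient.mk_surjective.comp_left.comp_left W
  obtain ⟨V, rfl⟩ : ∃ V' : Matrix _ _ A, V'.map (Ideal.Quotient.mk P) = V :=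
    Ideal.Quotient.mk_surjective.comp_left.comp_left V
  have hdet : (W * M * V).det ∈ P := hP (Ideal.subset_span ⟨(W, V), rfl⟩)
  rw [← Ideal.Quotient.eq_zero_iff_mem, RingHom.map_det, RingHom.mapMatrix_apply, Matrix.map_mul,
    Matrix.map_mul, hWV, det_smul, det_one, mul_one] at hdet
  exact pow_ne_zero _ hD hdet

lemma exists_mem_minorIdeal_of_forall_le_rank (S : Submonoid A)
    (h : ∀ P : Ideal A, ∀ _ : P.IsPrime, Disjoint (P : Set A) S →
      r ≤ (M.map (algebraMap A P.ResidueField)).rank) : ∃ x ∈ S, x ∈ minorIdeal M r := by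
  by_contra! hS
  obtain ⟨P, hP, hle, hPS⟩ := Ideal.exists_le_prime_disjoint (minorIdeal M r) S
    (Set.disjoint_right.2 hS)
  exact not_minorIdeal_le_of_le_rank (h P hP hPS) hle

end MinorIdeal

lemma exists_forall_lt_rank_map_add_smul_map {ι ι' : Type*} [Finite ι] [Fintype ι']
    {M N : Matrix ι ι' ℤ} {r : ℕ} (hN : 2 * r < (N.map (Int.castRingHom ℚ)).rank)
    (hMN : ∀ θ : ℚ, r < (M.map (Int.castRingHom ℚ) + θ • N.map (Int.castRingHom ℚ)).rank) :
    ∃ E : ℤ, E ≠ 0 ∧ ∀ {k : Type} [Field k], (E : k) ≠ 0 → ∀ t : k,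
      r < (M.map (Int.castRingHom k) + t • N.map (Int.castRingHom k)).rank := by
  cases nonempty_fintype ι
  let pencil : Matrix ι ι' (Polynomial ℤ) :=
    M.map Polynomial.C + (Polynomial.X : Polynomial ℤ) • N.map Polynomial.C
  have hmap {k : Type} [Field k] (φ : Polynomial ℤ →+* k) : pencil.map φ =
      M.map (Int.castRingHom k) + φ Polynomial.X • N.map (Int.castRingHom k) := by
    ext i j
    simp [pencil]
  have hprime (P : Ideal (Polynomial ℤ)) (_ : P.IsPrime)
      (hP : Disjoint (P : Set (Polynomial ℤ)) ((nonZeroDivisors ℤ).map Polynomial.C)) :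
      r + 1 ≤ (pencil.map (algebraMap _ P.ResidueField)).rank := by
    set φ := algebraMap (Polynomial ℤ) P.ResidueField
    have : CharZero P.ResidueField := by
      refine charZero_of_injective_ringHom (f := φ.comp Polynomial.C)
        ((injective_iff_map_eq_zero _).2 fun n hn => ?_)
      by_contra hne
      exact Set.disjoint_left.1 hP (P.algebraMap_residueField_eq_zero.1 hn)
        ⟨n, mem_nonZeroDivisors_of_ne_zero hne, rfl⟩
    have hrank := lt_rank_map_add_smul_map hN hMN (φ Polynomial.X)
    rw [hmap]
    simpa [Matrix.map_map] using hrank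
  obtain ⟨_, ⟨E, hE, rfl⟩, hmem⟩ := exists_mem_minorIdeal_of_forall_le_rank _ hprime
  refine ⟨E, nonZeroDivisors.ne_zero hE, fun {k} _ hk t => ?_⟩
  by_contra! hrank
  have hker := minorIdeal_le_ker_of_rank_map_lt (M := pencil) (r := r + 1)
    (φ := Polynomial.eval₂RingHom (Int.castRingHom k) t)
    (by rw [hmap]; simpa using Nat.lt_succ_of_le hrank) hmem
  exact hk (by simpa using hker)

/-! ### Points of small rank in a pencil over a finite field -/

section RankCount

lemma card_mul_card_filter_le {J V : Type*} [AddGroup J] [Fintype J] [AddCommGroup V] [Fintype V]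
    (g : J →+ V) {T : V → Prop} [DecidablePred T] {c : ℕ}
    (hc : ∀ u, T u → (Finset.univ.filter fun x => T (u + g x)).card ≤ c) :
    Fintype.card J * (Finset.univ.filter T).card ≤ c * Fintype.card V := by
  have hle (u : V) : (Finset.univ.filter fun x => T (u + g x)).card ≤ c := by
    rcases (Finset.univ.filter fun x => T (u + g x)).eq_empty_or_nonempty with h | ⟨z, hz⟩
    · simp [h]
    · refine le_of_eq_of_le (Finset.card_equiv (Equiv.addLeft (-z)) fun x => ?_)
        (hc _ (Finset.mem_filter.1 hz).2)
      simp [add_assoc]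
  calc Fintype.card J * (Finset.univ.filter T).card
      = ∑ x : J, (Finset.univ.filter fun u => T (u + g x)).card := by
        refine (Finset.sum_eq_card_nsmul fun x _ => ?_).symm
        exact Finset.card_equiv (Equiv.addRight (g x)) (by simp)
    _ = ∑ u : V, (Finset.univ.filter fun x => T (u + g x)).card := by
        simp only [Finset.card_filter]
        exact Finset.sum_comm
    _ ≤ c * Fintype.card V := by
        rw [mul_comm]
        exact Finset.sum_le_card_nsmul _ _ _ fun u _ => hle u

variable {k V ι ι' : Type*} [Field k] [Fintype ι'] {r : ℕ}

lemma eq_zero_of_rank_eq_zero {M : Matrix ι ι' k} (h : M.rank = 0) : M = 0 := by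
  classical
  have hrange : LinearMap.range M.mulVecLin = ⊥ := Submodule.finrank_eq_zero.1 h
  rw [LinearMap.range_eq_bot, ← toLin'_apply'] at hrange
  exact toLin'.map_eq_zero_iff.1 hrange

lemma pow_rank_le (M : Matrix ι ι' k) [Decidable (M = 0)] {t : ℝ} (h0 : 0 ≤ t) (h1 : t ≤ 1) :
    t ^ M.rank ≤ t ^ 5 + (if M.rank < 5 then t ^ 3 else 0) + (if M.rank ≤ 2 then t else 0) +
      if M = 0 then 1 else 0 := by
  have hpow {i j : ℕ} (h : i ≤ j) : t ^ j ≤ t ^ i := pow_le_pow_of_le_one h0 h1 h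
  have h3 : 0 ≤ if M.rank < 5 then t ^ 3 else 0 := by positivity
  have h2 : 0 ≤ if M.rank ≤ 2 then t else 0 := by positivity
  have hM : 0 ≤ if M = 0 then (1 : ℝ) else 0 := by positivity
  have h5 : 0 ≤ t ^ 5 := by positivity
  rcases Nat.lt_or_ge M.rank 5 with hr5 | hr5
  · rcases Nat.lt_or_ge 2 M.rank with hr2 | hr2
    · rw [if_pos hr5]
      linarith [hpow hr2]
    · rcases Nat.eq_zero_or_pos M.rank with hr0 | hr0
      · have hone : t ^ M.rank = 1 := by rw [hr0, pow_zero]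
        rw [if_pos (eq_zero_of_rank_eq_zero hr0)]
        linarith
      · rw [if_pos hr2]
        linarith [hpow hr0]
  · linarith [hpow hr5]

variable [Finite ι]

lemma card_le_of_rank_add_smul_add_smul_le {A M N : Matrix ι ι' k} (hA : A.rank ≤ r)
    (hN : 2 * r < N.rank) (hM : ∀ θ : k, r < (M + θ • N).rank) {Z : Finset (k × k)}
    (hZ : ∀ x ∈ Z, (A + (x.1 • N + x.2 • M)).rank ≤ r) :
    Z.card ≤ (r + 1) * (2 * r + 1) + 1 := by
  classical
  have hne {x : k × k} (hx : x ∈ Z.erase 0) : x.2 ≠ 0 := by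
    intro h2
    have hrank := hZ x (Finset.mem_of_mem_erase hx)
    rw [h2, zero_smul, add_zero] at hrank
    have h1 := eq_of_rank_add_smul_le hN hrank (y := 0) (by rwa [zero_smul, add_zero])
    exact Finset.ne_of_mem_erase hx (Prod.ext h1 h2)
  have hline {x : k × k} (hx : x ∈ Z.erase 0) :
      (A + x.2 • (M + (x.1 / x.2) • N)).rank ≤ r := by
    rw [smul_add, smul_smul, mul_div_cancel₀ _ (hne hx), add_comm (x.2 • M)]
    exact hZ x (Finset.mem_of_mem_erase hx)
  have hslopes : ((Z.erase 0).image fun x => x.1 / x.2).card ≤ 2 * r + 1 := by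
    refine card_le_of_rank_add_smul_lt (M := M) hN fun τ hτ => ?_
    obtain ⟨x, hx, rfl⟩ := Finset.mem_image.1 hτ
    have hrank := rank_sub_le (A + x.2 • (M + (x.1 / x.2) • N)) A
    rw [add_sub_cancel_left, rank_smul_of_ne_zero (hne hx)] at hrank
    have := hline hx
    lia
  have hfibre (τ : k) : ((Z.erase 0).filter fun x => x.1 / x.2 = τ).card ≤ r + 1 := by
    rw [← Finset.card_image_of_injOn (f := Prod.snd)]
    · refine card_le_of_rank_add_smul_lt (M := A) (hM τ) fun b hb => ?_
      obtain ⟨x, hx, rfl⟩ := Finset.mem_image.1 hb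
      obtain ⟨hx, hτ⟩ := Finset.mem_filter.1 hx
      rw [← hτ]
      exact Nat.lt_succ_of_le (hline hx)
    · intro x hx y hy hxy
      simp only [Finset.coe_filter, Set.mem_ofPred_eq] at hx hy
      refine Prod.ext ?_ hxy
      rw [← div_mul_cancel₀ x.1 (hne hx.1), hx.2, ← hy.2, hxy, div_mul_cancel₀ _ (hne hy.1)]
  have := Finset.card_le_mul_card_image (Z.erase 0) (r + 1) fun τ _ => hfibre τ
  have := Nat.mul_le_mul_left (r + 1) hslopes
  have := Z.pred_card_le_card_erase (a := 0)
  lia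

variable [Fintype k] [AddCommGroup V] [Module k V] [Fintype V] (H : V →ₗ[k] Matrix ι ι' k) {e : V}

lemma card_mul_card_rank_lt_le (he : r ≤ (H e).rank) :
    Fintype.card k * (Finset.univ.filter fun u => (H u).rank < r).card ≤ r * Fintype.card V := by
  classical
  refine card_mul_card_filter_le (LinearMap.toSpanSingleton k V e).toAddMonoidHom fun u _ =>
    card_le_of_rank_add_smul_lt (M := H u) he fun x hx => ?_
  simpa using hx

lemma card_sq_mul_card_rank_le_le {f : V} (he : 2 * r < (H e).rank)
    (hf : ∀ θ : k, r < (H (f + θ • e)).rank) :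
    Fintype.card k ^ 2 * (Finset.univ.filter fun u => (H u).rank ≤ r).card ≤
      ((r + 1) * (2 * r + 1) + 1) * Fintype.card V := by
  classical
  let plane := (LinearMap.toSpanSingleton k V e).coprod (LinearMap.toSpanSingleton k V f)
  rw [sq, ← Fintype.card_prod]
  refine card_mul_card_filter_le plane.toAddMonoidHom fun u hu =>
    card_le_of_rank_add_smul_add_smul_le hu he (M := H f) (fun θ => by simpa using hf θ)
      fun x hx => ?_
  simpa [plane] using hx

end RankCount

/-! ### Weyl's inequality for a cubic form over a finite field -/

section Weyl

variable {k σ : Type*} [Field k] [Fintype k] [Fintype σ] [DecidableEq σ] {P : MvPolynomial σ k}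

lemma card_pow_mul_card_mulVec_eq_zero_le [DecidableEq k] {r : ℕ} {M : Matrix σ σ k}
    (hr : r ≤ M.rank) :
    Fintype.card k ^ r * (Finset.univ.filter fun u => M *ᵥ u = 0).card ≤
      Fintype.card k ^ Fintype.card σ := by
  simpa [Finset.filter_eq'] using (RankCertificate.of_le_rank hr).card_ker_le

lemma card_pow_mul_card_hessian_eq_zero_le [DecidableEq k] {r : ℕ} {e : σ → k}
    (he : r ≤ (hessian P e).rank) :
    Fintype.card k ^ r * (Finset.univ.filter fun u => hessian P u = 0).card ≤
      Fintype.card k ^ Fintype.card σ := by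
  refine (Nat.mul_le_mul_left _ (Finset.card_le_card fun u hu => ?_)).trans
    (card_pow_mul_card_mulVec_eq_zero_le he)
  simp only [Finset.mem_filter, Finset.mem_univ, true_and] at hu ⊢
  rw [hessian_mulVec_comm, hu, zero_mulVec]

lemma norm_sum_addChar_sub_le (h6 : (6 : k) ≠ 0) (hP : P.IsHomogeneous 3) {ψ : AddChar k ℂ}
    (hψ : ψ.IsPrimitive) {a : k} (ha : a ≠ 0) (u : σ → k) :
    ‖∑ b, ψ (a * eval (b + u) P - a * eval b P)‖ ≤
      (Fintype.card k : ℝ) ^ Fintype.card σ / √(Fintype.card k) ^ (hessian P u).rank := by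
  classical
  have hweyl := norm_sum_addChar_sq_le_card_ker hψ
    (F := fun b => a * eval (b + u) P - a * eval b P) (H := fun v => a • hessian P u *ᵥ v)
    (c := fun v => a * (eval (v + u) P - eval v P - eval u P)) fun b v => by
      rw [dotProduct_smul, smul_eq_mul]
      linear_combination a * eval_add_add_sub h6 hP b u v
  simp only [smul_eq_zero_iff_right ha] at hweyl
  have hker : (Fintype.card k : ℝ) ^ (hessian P u).rank *
      (Finset.univ.filter fun v => hessian P u *ᵥ v = 0).card ≤
      (Fintype.card k : ℝ) ^ Fintype.card σ :=
    mod_cast card_pow_mul_card_mulVec_eq_zero_le le_rfl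
  rw [le_div_iff₀ (by positivity)]
  refine le_of_sq_le_sq ?_ (by positivity)
  rw [mul_pow, pow_right_comm, Real.sq_sqrt (by positivity)]
  calc _ ≤ _ := mul_le_mul_of_nonneg_right hweyl (by positivity)
    _ = (Fintype.card k : ℝ) ^ Fintype.card σ * ((Fintype.card k : ℝ) ^ (hessian P u).rank *
          (Finset.univ.filter fun v => hessian P u *ᵥ v = 0).card) := by ring
    _ ≤ _ := by rw [sq]; exact mul_le_mul_of_nonneg_left hker (by positivity)

lemma sum_pow_rank_hessian_le {e f : σ → k} (he : 4 < (hessian P e).rank)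
    (hf : ∀ θ : k, 2 < (hessian P (f + θ • e)).rank) {t : ℝ} (h0 : 0 ≤ t) (h1 : t ≤ 1)
    (ht : Fintype.card k * t ^ 2 = 1) :
    ∑ u, t ^ (hessian P u).rank ≤ 23 * (Fintype.card k : ℝ) ^ Fintype.card σ * t ^ 5 := by
  classical
  have h5 : Fintype.card k * ((Finset.univ.filter fun u => (hessian P u).rank < 5).card : ℝ) ≤
      5 * (Fintype.card k : ℝ) ^ Fintype.card σ := by
    have := card_mul_card_rank_lt_le (hessian P) (r := 5) he
    rw [Fintype.card_fun] at this
    exact mod_cast this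
  have h3 : Fintype.card k ^ 2 *
      ((Finset.univ.filter fun u => (hessian P u).rank ≤ 2).card : ℝ) ≤
      16 * (Fintype.card k : ℝ) ^ Fintype.card σ := by
    have := card_sq_mul_card_rank_le_le (hessian P) he hf
    rw [Fintype.card_fun] at this
    exact mod_cast this
  have hzero : Fintype.card k ^ 5 *
      ((Finset.univ.filter fun u => hessian P u = 0).card : ℝ) ≤
      (Fintype.card k : ℝ) ^ Fintype.card σ :=
    mod_cast card_pow_mul_card_hessian_eq_zero_le he
  set N : ℝ := (Fintype.card k : ℝ) ^ Fintype.card σ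
  set q : ℝ := (Fintype.card k : ℝ)
  set n₅ : ℝ := ((Finset.univ.filter fun u => (hessian P u).rank < 5).card : ℝ)
  set n₃ : ℝ := ((Finset.univ.filter fun u => (hessian P u).rank ≤ 2).card : ℝ)
  set n₀ : ℝ := ((Finset.univ.filter fun u => hessian P u = 0).card : ℝ)
  have hN : (Fintype.card (σ → k) : ℝ) = N := by simp [N]
  calc ∑ u, t ^ (hessian P u).rank
      ≤ N * t ^ 5 + n₅ * t ^ 3 + n₃ * t + n₀ := by
        refine (Finset.sum_le_sum fun u _ => pow_rank_le (hessian P u) h0 h1).trans_eq ?_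
        simp only [Finset.sum_add_distrib, ← Finset.sum_filter, Finset.sum_const, nsmul_eq_mul,
          Finset.card_univ, hN, mul_one, n₅, n₃, n₀]
    _ = N * t ^ 5 + q * n₅ * t ^ 5 + q ^ 2 * n₃ * t ^ 5 + q ^ 5 * n₀ * t ^ 10 := by
        linear_combination (-n₅ * t ^ 3 - n₃ * t * (q * t ^ 2 + 1) - n₀ * (q ^ 4 * t ^ 8 +
          q ^ 3 * t ^ 6 + q ^ 2 * t ^ 4 + q * t ^ 2 + 1)) * ht
    _ ≤ N * t ^ 5 + 5 * N * t ^ 5 + 16 * N * t ^ 5 + N * t ^ 5 := by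
        gcongr N * _ + ?_ * _ + ?_ * _ + ?_
        exact mul_le_mul hzero (pow_le_pow_of_le_one h0 h1 (by norm_num)) (by positivity)
          (by positivity)
    _ = 23 * N * t ^ 5 := by ring

lemma norm_sum_addChar_mul_eval_le (h6 : (6 : k) ≠ 0) (hP : P.IsHomogeneous 3) {e f : σ → k}
    (he : 4 < (hessian P e).rank) (hf : ∀ θ : k, 2 < (hessian P (f + θ • e)).rank)
    (hk : 92 ^ 2 ≤ Fintype.card k) {ψ : AddChar k ℂ} (hψ : ψ.IsPrimitive) {a : k} (ha : a ≠ 0) :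
    ‖∑ b, ψ (a * eval b P)‖ ≤ (Fintype.card k : ℝ) ^ Fintype.card σ / (2 * Fintype.card k) := by
  have hq : (92 : ℝ) ^ 2 ≤ Fintype.card k := mod_cast hk
  set N : ℝ := (Fintype.card k : ℝ) ^ Fintype.card σ
  set q : ℝ := (Fintype.card k : ℝ)
  set t : ℝ := (√q)⁻¹
  have ht : q * t ^ 2 = 1 := by
    rw [inv_pow, Real.sq_sqrt (by positivity), mul_inv_cancel₀ (by positivity)]
  have ht92 : 92 * t ≤ 1 := by
    rw [mul_inv_le_iff₀ (by positivity), one_mul]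
    exact Real.le_sqrt_of_sq_le hq
  have ht0 : 0 ≤ t := by positivity
  refine le_of_sq_le_sq ?_ (by positivity)
  calc ‖∑ b, ψ (a * eval b P)‖ ^ 2
      ≤ ∑ u, N * t ^ (hessian P u).rank := by
        refine (norm_sum_addChar_sq_le ψ _).trans (Finset.sum_le_sum fun u _ => ?_)
        rw [inv_pow, ← div_eq_mul_inv]
        exact norm_sum_addChar_sub_le h6 hP hψ ha u
    _ ≤ N * (23 * N * t ^ 5) := by
        rw [← Finset.mul_sum]
        gcongr
        exact sum_pow_rank_hessian_le he hf ht0 (by linarith) ht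
    _ = N ^ 2 * t ^ 4 / 4 * (92 * t) := by ring
    _ ≤ N ^ 2 * t ^ 4 / 4 * 1 := by gcongr
    _ = (N / (2 * q)) ^ 2 := by
        rw [eq_comm, div_pow, div_eq_iff (by positivity)]
        linear_combination (-N ^ 2 * (q * t ^ 2 + 1)) * ht

end Weyl

lemma card_le_two_mul_card_mul_card_zeros {k α : Type*} [Field k] [Fintype k] [DecidableEq k]
    [Fintype α] (F : α → k) {ψ : AddChar k ℂ} (hψ : ψ.IsPrimitive)
    (hF : ∀ a ≠ 0, ‖∑ b, ψ (a * F b)‖ ≤ (Fintype.card α : ℝ) / (2 * Fintype.card k)) :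
    Fintype.card α ≤ 2 * Fintype.card k * (Finset.univ.filter fun b => F b = 0).card := by
  have hsum : ∑ a, ∑ b, ψ (a * F b) =
      (Fintype.card k : ℂ) * (Finset.univ.filter fun b => F b = 0).card := by
    rw [Finset.sum_comm]
    simp_rw [AddChar.sum_mulShift _ hψ]
    simp [← Finset.sum_filter, mul_comm]
  rw [← Finset.add_sum_erase _ _ (Finset.mem_univ (0 : k))] at hsum
  simp only [zero_mul, AddChar.map_zero_eq_one, Finset.sum_const, Finset.card_univ, nsmul_eq_mul,
    mul_one] at hsum
  have herror : ‖∑ a ∈ Finset.univ.erase (0 : k), ∑ b, ψ (a * F b)‖ ≤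
      (Fintype.card α : ℝ) / 2 := by
    calc _ ≤ ∑ a ∈ Finset.univ.erase (0 : k), (Fintype.card α : ℝ) / (2 * Fintype.card k) :=
          norm_sum_le_of_le _ fun a ha => hF a (Finset.ne_of_mem_erase ha)
      _ ≤ Fintype.card k * ((Fintype.card α : ℝ) / (2 * Fintype.card k)) := by
          rw [Finset.sum_const, nsmul_eq_mul]
          gcongr
          exact Finset.card_le_univ _
      _ = _ := by field_simp
  have hnorm : (Fintype.card α : ℝ) ≤
      Fintype.card k * (Finset.univ.filter fun b => F b = 0).card + Fintype.card α / 2 := by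
    calc (Fintype.card α : ℝ) = ‖(Fintype.card α : ℂ)‖ := (Complex.norm_natCast _).symm
      _ ≤ _ := by
        rw [eq_sub_of_add_eq hsum]
        refine (norm_sub_le _ _).trans ?_
        rw [norm_mul, Complex.norm_natCast, Complex.norm_natCast]
        gcongr
  exact mod_cast (by linarith : (Fintype.card α : ℝ) ≤
    2 * Fintype.card k * (Finset.univ.filter fun b => F b = 0).card)

/-! ### Zeros of cubic forms modulo large primes -/

section LargePrimes

variable {σ : Type*} [Fintype σ] {P : MvPolynomial σ ℤ}

lemma exists_int_lt_rank_hessian (hP : P.IsHomogeneous 3)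
    (h : ¬HInvariantLE (map (Int.castRingHom ℚ) P) 4) :
    ∃ e f : σ → ℤ, 4 < ((hessian P e).map (Int.castRingHom ℚ)).rank ∧ ∀ θ : ℚ,
      2 < ((hessian P f).map (Int.castRingHom ℚ) +
        θ • (hessian P e).map (Int.castRingHom ℚ)).rank := by
  obtain ⟨e, he⟩ := exists_lt_rank_hessian (hP.map _) h
  obtain ⟨f, hf⟩ := exists_forall_lt_rank_hessian_add_smul (r := 2) (hP.map _) h (by norm_num) he
  obtain ⟨d, hd, z, hz⟩ := exists_smul_eq_algebraMap_comp (R := ℤ) (Sum.elim e f)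
  rw [algebraMap_int_eq] at hz
  have hd' : (d : ℚ) ≠ 0 := Int.cast_ne_zero.2 hd
  have hze : Int.castRingHom ℚ ∘ z ∘ Sum.inl = (d : ℚ) • e :=
    funext fun i => congrFun hz (Sum.inl i)
  have hzf : Int.castRingHom ℚ ∘ z ∘ Sum.inr = (d : ℚ) • f :=
    funext fun i => congrFun hz (Sum.inr i)
  refine ⟨z ∘ Sum.inl, z ∘ Sum.inr, ?_, fun θ => ?_⟩
  · rwa [hessian_map, hze, map_smul, rank_smul_of_ne_zero hd']
  · rw [hessian_map, hessian_map, hze, hzf, ← map_smul, ← map_add, smul_comm, ← smul_add, map_smul,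
      rank_smul_of_ne_zero hd']
    exact hf θ

lemma eventually_card_pow_le_card_zeros [DecidableEq σ] (hP : P.IsHomogeneous 3)
    (h : ¬HInvariantLE (map (Int.castRingHom ℚ) P) 4) :
    ∀ᶠ ℓ : ℕ in Filter.atTop, ∀ _ : Fact ℓ.Prime, ℓ ^ Fintype.card σ ≤
      2 * ℓ * (Finset.univ.filter fun t : σ → ZMod ℓ => aeval t P = 0).card := by
  obtain ⟨e, f, he, hf⟩ := exists_int_lt_rank_hessian hP h
  obtain ⟨D, hD, hDe⟩ := exists_rankCertificate_of_le_rank_map (R := ℤ) (K := ℚ) (r := 5) he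
  obtain ⟨E, hE, hEf⟩ := exists_forall_lt_rank_map_add_smul_map he hf
  filter_upwards [Filter.eventually_ge_atTop (92 ^ 2 + D.natAbs + E.natAbs)] with ℓ hℓ hprime
  have hcast {n : ℤ} (hn : n ≠ 0) (hnℓ : n.natAbs < ℓ) : (n : ZMod ℓ) ≠ 0 := fun h0 =>
    hnℓ.not_ge (le_natAbs_of_natCast_dvd hn ((ZMod.intCast_zmod_eq_zero_iff_dvd n ℓ).1 h0))
  set φ := Int.castRingHom (ZMod ℓ)
  have he' : 4 < (hessian (map φ P) (φ ∘ e)).rank := by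
    rw [← hessian_map]
    exact (hDe.map φ).le_rank (hcast hD (by lia))
  have hf' (θ : ZMod ℓ) : 2 < (hessian (map φ P) (φ ∘ f + θ • φ ∘ e)).rank := by
    rw [map_add, map_smul, ← hessian_map, ← hessian_map]
    exact hEf (hcast hE (by lia)) θ
  have h6 : (6 : ZMod ℓ) ≠ 0 := mod_cast hcast (n := 6) (by norm_num) (by lia)
  have hψ := ZMod.isPrimitive_stdAddChar ℓ
  have hzeros := card_le_two_mul_card_mul_card_zeros (fun t : σ → ZMod ℓ => eval t (map φ P)) hψ
    fun a ha => by
      rw [Fintype.card_fun, Nat.cast_pow]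
      exact norm_sum_addChar_mul_eval_le h6 (hP.map φ) he' hf' (by rw [ZMod.card]; lia) hψ ha
  rw [Fintype.card_fun, ZMod.card] at hzeros
  convert hzeros using 5 with t
  rw [eval_map, aeval_def, algebraMap_int_eq]

end LargePrimes

/-! ### The singular series of the fibres of the cubic form -/

lemma HInvariantLE.X_mul_add_rename {K σ τ : Type*} [Field K] {P : MvPolynomial σ K} {k : ℕ}
    (h : HInvariantLE P k) (f : σ → τ) (i : τ) {G : MvPolynomial τ K} (hG : G.IsHomogeneous 2) :
    HInvariantLE (X i * G + rename f P) (k + 1) := by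
  obtain ⟨L, Q, hL, hQ, rfl⟩ := h
  refine ⟨Fin.cons (X i) fun j => rename f (L j), Fin.cons G fun j => rename f (Q j),
    Fin.cases (isHomogeneous_X _ _) fun j => (hL j).rename_isHomogeneous,
    Fin.cases hG fun j => (hQ j).rename_isHomogeneous, ?_⟩
  simp [Fin.sum_univ_succ]

section CubicForm

variable {m s : ℕ} {A : Matrix (Fin m) (Fin m) ℤ} {q : Fin m → MvPolynomial (Fin (s + 1)) ℤ}
  {R : MvPolynomial (Fin (s + 1)) ℤ}

variable (A q R) in
/-- The cubic form `C(x, y) = y₁ F(x) + ∑ x_j q_j(y) + R(y)`, where `F(x) = x ⬝ᵥ A *ᵥ x`. -/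
noncomputable def cubicForm : MvPolynomial (Fin m ⊕ Fin (s + 1)) ℤ :=
  X (Sum.inr 0) * rename Sum.inl (∑ a, ∑ b, C (A a b) * X a * X b) +
    ∑ j, X (Sum.inl j) * rename Sum.inr (q j) + rename Sum.inr R

lemma eval_cubicForm (x : Fin m → ℤ) (y : Fin (s + 1) → ℤ) :
    eval (Sum.elim x y) (cubicForm A q R) = eval x (fibre A q R y) := by
  simp only [cubicForm, fibre, eval_quadPoly, map_add, map_mul, map_sum, eval_X, eval_rename,
    eval_C, Sum.elim_inr, Sum.elim_inl, Sum.elim_comp_inl, Sum.elim_comp_inr, dotProduct,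
    mulVec, Matrix.smul_apply, smul_eq_mul, Finset.mul_sum]
  congr 2
  · exact Finset.sum_congr rfl fun a _ => Finset.sum_congr rfl fun b _ => by ring
  · exact Finset.sum_congr rfl fun j _ => mul_comm _ _

lemma exists_cubicForm_eq_X_mul_add_rename (hq : ∀ j, (q j).IsHomogeneous 2)
    (hR : R.IsHomogeneous 3) (hq0 : ∀ j, restrictZero (q j) = 0) :
    ∃ G, G.IsHomogeneous 2 ∧ cubicForm A q R =
      X (Sum.inr 0) * G + rename (Sum.inr ∘ Fin.succ) (restrictZero R) := by
  choose q' hq' hqq' using fun j => exists_eq_X_zero_mul_add_rename (hq j)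
  obtain ⟨R', hR', hRR'⟩ := exists_eq_X_zero_mul_add_rename hR
  refine ⟨rename Sum.inl (∑ a, ∑ b, C (A a b) * X a * X b) +
    ∑ j, X (Sum.inl j) * rename Sum.inr (q' j) + rename Sum.inr R', ?_, ?_⟩
  · refine ((IsHomogeneous.rename_isHomogeneous ?_).add ?_).add hR'.rename_isHomogeneous
    · exact IsHomogeneous.sum _ _ _ fun a _ => IsHomogeneous.sum _ _ _ fun b _ =>
        ((isHomogeneous_C _ _).mul (isHomogeneous_X _ _)).mul (isHomogeneous_X _ _)
    · exact IsHomogeneous.sum _ _ _ fun j _ =>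
        (isHomogeneous_X ℤ _).mul (hq' j).rename_isHomogeneous
  · have hlin (j) : X (Sum.inl j) * rename Sum.inr (q j) =
        X (Sum.inr 0) * (X (Sum.inl j) * rename (Sum.inr : _ → Fin m ⊕ _) (q' j)) := by
      rw [hqq' j, hq0, map_zero, add_zero, map_mul, rename_X]
      ring
    have hcubic : rename Sum.inr R = X (Sum.inr 0) * rename (Sum.inr : _ → Fin m ⊕ _) R' +
        rename (Sum.inr ∘ Fin.succ) (restrictZero R) := by
      conv_lhs => rw [hRR', map_add, map_mul, rename_X, rename_rename]
    rw [cubicForm, hcubic]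
    simp_rw [hlin]
    rw [← Finset.mul_sum]
    ring

lemma not_hInvariantLE_restrictZero {k : ℕ} (hq : ∀ j, (q j).IsHomogeneous 2)
    (hR : R.IsHomogeneous 3) (hq0 : ∀ j, restrictZero (q j) = 0)
    (h : ¬HInvariantLE (map (Int.castRingHom ℚ) (cubicForm A q R)) (k + 1)) :
    ¬HInvariantLE (map (Int.castRingHom ℚ) (restrictZero R)) k := by
  obtain ⟨G, hG, hC⟩ := exists_cubicForm_eq_X_mul_add_rename (A := A) hq hR hq0
  rw [hC, map_add, map_mul, map_X, map_rename] at h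
  exact fun hk => h (hk.X_mul_add_rename _ _ (hG.map _))

theorem hasLargePrimeSections_of_not_hInvariantLE
    (hA : 5 ≤ ((A + Aᵀ).map (Int.castRingHom ℚ)).rank) (hq : ∀ j, (q j).IsHomogeneous 2)
    (hR : R.IsHomogeneous 3)
    (h : ¬HInvariantLE (map (Int.castRingHom ℚ) (cubicForm A q R)) 5) :
    HasLargePrimeSections (fibreSingSeries A q R) := by
  obtain ⟨D, hD, hDA⟩ := exists_rankCertificate_of_le_rank_map (R := ℤ) (K := ℚ) hA
  by_cases hq0 : ∀ j, restrictZero (q j) = 0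
  · have hm : 0 < m := by
      have := hA.trans (rank_le_width _)
      lia
    have hR4 := not_hInvariantLE_restrictZero hq hR hq0 h
    have hR0 : restrictZero R ≠ 0 := fun h0 =>
      hR4 ⟨0, 0, fun _ => isHomogeneous_zero _ _ _, fun _ => isHomogeneous_zero _ _ _, by simp [h0]⟩
    refine hasLargePrimeSections_of_card_zeros hm hD hDA hq hR hq0 hR0 ?_
    simpa only [Fintype.card_fin] using
      eventually_card_pow_le_card_zeros (restrictZero_isHomogeneous hR) hR4
  · obtain ⟨j, hj⟩ := not_forall.1 hq0
    exact hasLargePrimeSections_of_restrictZero_linear_ne_zero hD hDA hq hR hj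

end CubicForm

end CubicFibre

theorem stmt10_general (h m : ℕ) (hh : 0 < h) (A₁ : Matrix (Fin m) (Fin m) ℤ)
    (hrank : 5 ≤ Matrix.rank ((A₁ + A₁ᵀ).map ((↑) : ℤ → ℚ)))
    (q : Fin m → MvPolynomial (Fin h) ℤ) (hq : ∀ j, (q j).IsHomogeneous 2)
    (R : MvPolynomial (Fin h) ℤ) (hR : R.IsHomogeneous 3)
    (Cpoly : MvPolynomial (Fin m ⊕ Fin h) ℤ)
    (hC : Cpoly = X (Sum.inr ⟨0, hh⟩) *
        rename Sum.inl (∑ a, ∑ b, C (A₁ a b) * X a * X b)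
      + ∑ j, X (Sum.inl j) * rename Sum.inr (q j) + rename Sum.inr R)
    (hhinv : ¬ CubicFibre.HInvariantLE (MvPolynomial.map (Int.castRingHom ℚ) Cpoly) 5) :
    ∃ c > (0 : ℝ), ∃ K > (0 : ℝ), ∃ Y₀ : ℝ, ∀ Y : ℝ, Y₀ ≤ Y →
      ∃ 𝒞 : Finset (Fin h → ℤ),
        (∀ y ∈ 𝒞, ∀ i, (|y i| : ℝ) ≤ K * Y) ∧
        c * Y ^ h / Real.log Y ≤
          ∑ y ∈ 𝒞, (singSeries m fun x => eval (Sum.elim x y) Cpoly).re := by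
  obtain ⟨s, rfl⟩ := Nat.exists_eq_add_one_of_ne_zero hh.ne'
  obtain rfl : Cpoly = CubicFibre.cubicForm A₁ q R := hC
  simp only [CubicFibre.eval_cubicForm]
  exact (CubicFibre.hasLargePrimeSections_of_not_hInvariantLE hrank hq hR hhinv).exists_le_sum

/-- For `C(x,y) = y₁F₁(x) + Σ x_j q_j(y) + R(y)` with `F₁` nonsingular
indefinite of rank `r ≥ 5`, `h(C) ≥ 6`, `C` irreducible with nonsingular `p`-adic zeros for
all `p`, the singular series of the fibres satisfy `Σ_{y ∈ 𝒞_h(Y)} 𝔖(F_y) ≫ Y^h / log Y`. -/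
theorem stmt10 (n h m : ℕ) (hh : 0 < h) (hhn : h < n) (hm : m = n - h)
    (A₁ : Matrix (Fin m) (Fin m) ℤ) (r : ℕ) (hr5 : 5 ≤ r)
    (hrank : Matrix.rank ((A₁ + A₁ᵀ).map ((↑) : ℤ → ℚ)) = r)
    (hindef : (∃ u : Fin m → ℝ, 0 < u ⬝ᵥ (A₁.map ((↑) : ℤ → ℝ)).mulVec u) ∧
      (∃ u : Fin m → ℝ, u ⬝ᵥ (A₁.map ((↑) : ℤ → ℝ)).mulVec u < 0))
    (q : Fin m → MvPolynomial (Fin h) ℤ) (hq : ∀ j, (q j).IsHomogeneous 2)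
    (R : MvPolynomial (Fin h) ℤ) (hR : R.IsHomogeneous 3)
    (Cpoly : MvPolynomial (Fin m ⊕ Fin h) ℤ)
    (hC : Cpoly = X (Sum.inr ⟨0, hh⟩) *
        rename Sum.inl (∑ a, ∑ b, C (A₁ a b) * X a * X b)
      + ∑ j, X (Sum.inl j) * rename Sum.inr (q j) + rename Sum.inr R)
    (hhinv : ¬ ∃ L Q : Fin 5 → MvPolynomial (Fin m ⊕ Fin h) ℚ,
      (∀ i, (L i).IsHomogeneous 1) ∧ (∀ i, (Q i).IsHomogeneous 2) ∧
        MvPolynomial.map (Int.castRingHom ℚ) Cpoly = ∑ i, L i * Q i)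
    (hirr : Irreducible (MvPolynomial.map (Int.castRingHom ℚ) Cpoly))
    (hpadic : ∀ (p : ℕ) [Fact p.Prime], ∃ z : (Fin m ⊕ Fin h) → ℚ_[p],
      eval z (MvPolynomial.map (Int.castRingHom ℚ_[p]) Cpoly) = 0 ∧
      ∃ u, eval z (pderiv u (MvPolynomial.map (Int.castRingHom ℚ_[p]) Cpoly)) ≠ 0) :
    ∃ c > (0 : ℝ), ∃ K > (0 : ℝ), ∃ Y₀ : ℝ, ∀ Y : ℝ, Y₀ ≤ Y →
      ∃ 𝒞 : Finset (Fin h → ℤ),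
        (∀ y ∈ 𝒞, ∀ i, (|y i| : ℝ) ≤ K * Y) ∧
        c * Y ^ h / Real.log Y ≤
          ∑ y ∈ 𝒞, (singSeries m fun x => eval (Sum.elim x y) Cpoly).re :=
  stmt10_general h m hh A₁ (hr5.trans_eq hrank.symm) q hq R hR Cpoly hC hhinv
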